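/- Let $1<\alpha,\beta<\infty$ and $0<p\leqslant q<\infty$ with $q\geqslant 2$ and $\beta p\leqslant\alpha q$. Then for all positive integers $m,n$ and every complex polynomial $P\in\mathbb{C}[z_1,\dots,z_n]$ of degree $m$, $\|P\|_{A_\beta^q(\mathbb{D}^n)}\leqslant\left(\sqrt{\tfrac{\alpha q}{\beta p}}\right)^m\|P\|_{A_\alpha^p(\mathbb{D}^n)}$. -/

import Mathlib

/-!
For entire `f` and `κ = p / α`, the hyperbolic area `μ t` of `{z | t < ‖f z‖ ^ κ * (1 - ‖z‖ ^ 2)}`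
makes `t * (1 + μ t)` nonincreasing: the logarithm of this weighted modulus has constant invariant
Laplacian away from the zeros of `f`, so the hyperbolic isoperimetric inequality controls the decay
of `μ`. Comparing `μ` with its extremal profile `l / t - 1` shows that the inclusion of
`A_α^p` in `A_{α q / p}^q` is a contraction.

The dilation `f (r z)` with `r ^ 2 = β p / (α q)` then reaches the weight `β`: in the variable
`t = ‖z‖ ^ 2` the measure `dA_β` dilated by `r` has the same mean as `dA_{α q / p}`, and their
quantile functions cross exactly once, so `dA_β` dilated is dominated in the convex order. For
`2 ≤ q` the circle means of `‖f‖ ^ q` are convex functions of `t`. Minkowski's inequality for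
integrals passes the resulting one-variable contraction to the polydisc.

For a polynomial `P` of degree `m`, dilation by `r ≤ 1` costs at most a factor `r ^ m`: along each
complex line through the origin, `w ^ m * P (z / w)` is a polynomial in `w`, whose circle means
increase with the radius.
-/

open MeasureTheory Metric

/-- The weighted Bergman measure `dA_α(z) = (α-1)(1-|z|²)^(α-2) dA(z)` on the unit disk,
where `dA = dx dy / π` is the normalized area measure. -/
noncomputable def bergmanMeasure (α : ℝ) : Measure ℂ :=
  ((volume : Measure ℂ).restrict (ball (0 : ℂ) 1)).withDensity
    fun z => ENNReal.ofReal ((α - 1) * (1 - ‖z‖ ^ 2) ^ (α - 2) / Real.pi)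

/-- The product Bergman measure `dA_α(z₁) ⋯ dA_α(zₙ)` on the polydisc. -/
noncomputable def bergmanMeasurePi (n : ℕ) (α : ℝ) : Measure (Fin n → ℂ) :=
  Measure.pi fun _ => bergmanMeasure α

section

open Set Filter Topology
open Complex (I)
open scoped ENNReal Real ComplexConjugate

/-! ### The hyperbolic isoperimetric inequality -/

lemma integral_Ioi_fderiv_ray {E F : Type*} [NormedAddCommGroup E] [NormedSpace ℝ E]
    [NormedAddCommGroup F] [NormedSpace ℝ F] [CompleteSpace F] {φ : E → F} (hφ : ContDiff ℝ 1 φ)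
    (hc : HasCompactSupport φ) {v : E} (hv : v ≠ 0) :
    ∫ r in Ioi (0 : ℝ), fderiv ℝ φ (r • v) v = -φ 0 := by
  have hderiv (r : ℝ) : deriv (fun r : ℝ => φ (r • v)) r = fderiv ℝ φ (r • v) v := by
    have hray : HasDerivAt (fun r : ℝ => r • v) v r := by
      simpa using (hasDerivAt_id r).smul_const v
    exact ((hφ.differentiable one_ne_zero _).hasFDerivAt.comp_hasDerivAt r hray).deriv
  have h := (hc.comp_isClosedEmbedding (isClosedEmbedding_smul_left hv)).integral_Ioi_deriv_eq
    (hφ.comp (by fun_prop : ContDiff ℝ 1 fun r : ℝ => r • v)) 0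
  simpa only [Function.comp_def, hderiv, zero_smul] using h

lemma integrableOn_fderiv_ray {φ : ℂ → ℝ} (hφ : ContDiff ℝ 1 φ) (hc : HasCompactSupport φ) :
    IntegrableOn (fun p : ℝ × ℝ => fderiv ℝ φ (p.1 • Complex.exp (p.2 * I)) (Complex.exp (p.2 * I)))
      (Ioi 0 ×ˢ Ioo (-π) π) := by
  obtain ⟨R, hR⟩ := hc.isCompact.isBounded.subset_closedBall 0
  have hcont : Continuous fun p : ℝ × ℝ =>
      fderiv ℝ φ (p.1 • Complex.exp (p.2 * I)) (Complex.exp (p.2 * I)) :=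
    ((hφ.continuous_fderiv one_ne_zero).comp (by fun_prop)).clm_apply (by fun_prop)
  have hcompact := hcont.continuousOn.integrableOn_compact (μ := volume)
    ((isCompact_Icc (a := (0 : ℝ)) (b := R)).prod (isCompact_Icc (a := -π) (b := π)))
  refine IntegrableOn.of_forall_sdiff_eq_zero
    (hcompact.mono_set (prod_mono Ioc_subset_Icc_self Ioo_subset_Icc_self))
    (measurableSet_Ioi.prod measurableSet_Ioo) ?_
  rintro ⟨r, θ⟩ ⟨⟨hr, hθ⟩, hn⟩
  have hRr : R < r := lt_of_not_ge fun h => hn ⟨⟨hr, h⟩, hθ⟩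
  rw [fderiv_of_notMem_tsupport ℝ fun h => (mem_closedBall_zero_iff.1 (hR h)).not_gt ?_]
  · rfl
  · simpa [Complex.norm_exp_ofReal_mul_I] using hRr.trans_le (le_abs_self r)

lemma integral_fderiv_self_div_normSq {φ : ℂ → ℝ} (hφ : ContDiff ℝ 1 φ)
    (hc : HasCompactSupport φ) : ∫ w, fderiv ℝ φ w w / ‖w‖ ^ 2 = -(2 * π) * φ 0 := by
  have hpolar : ∀ p ∈ Ioi (0 : ℝ) ×ˢ Ioo (-π) π,
      p.1 • (fderiv ℝ φ (Complex.polarCoord.symm p) (Complex.polarCoord.symm p) /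
        ‖Complex.polarCoord.symm p‖ ^ 2) =
      fderiv ℝ φ (p.1 • Complex.exp (p.2 * I)) (Complex.exp (p.2 * I)) := by
    rintro ⟨r, θ⟩ ⟨hr : 0 < r, -⟩
    have hsymm : Complex.polarCoord.symm (r, θ) = r • Complex.exp (θ * I) := by
      rw [Complex.polarCoord_symm_apply, Complex.exp_mul_I, Complex.real_smul,
        Complex.ofReal_cos, Complex.ofReal_sin]
    simp only [hsymm, map_smul, norm_smul, Complex.norm_exp_ofReal_mul_I, smul_eq_mul, mul_one,
      Real.norm_eq_abs, sq_abs]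
    field_simp
  rw [← Complex.integral_comp_polarCoord_symm, polarCoord_target,
    setIntegral_congr_fun (measurableSet_Ioi.prod measurableSet_Ioo) hpolar,
    Measure.volume_eq_prod, ← Measure.prod_restrict, integral_prod_symm]
  · simp only [integral_Ioi_fderiv_ray hφ hc (Complex.exp_ne_zero _)]
    rw [setIntegral_const, Real.volume_real_Ioo_of_le (by linarith [Real.pi_pos]), smul_eq_mul]
    ring
  · rw [Measure.prod_restrict]
    exact integrableOn_fderiv_ray hφ hc

theorem integral_fderiv_sub_div_normSq {φ : ℂ → ℝ} (hφ : ContDiff ℝ 1 φ)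
    (hc : HasCompactSupport φ) (z : ℂ) :
    ∫ w, fderiv ℝ φ w (w - z) / ‖w - z‖ ^ 2 = -(2 * π) * φ z := by
  have h := integral_fderiv_self_div_normSq (hφ.comp (contDiff_id.add contDiff_const))
    (hc.comp_homeomorph (Homeomorph.addRight z))
  rw [← integral_add_right_eq_self _ z]
  simpa [Function.comp_def, fderiv_comp_add_right] using h

/-- The Möbius involution of the unit disc that exchanges `0` and `w`. -/
noncomputable def discInvolution (w z : ℂ) : ℂ := (w - z) / (1 - conj w * z)

lemma one_sub_normSq_pos {z : ℂ} (hz : z ∈ ball (0 : ℂ) 1) : 0 < 1 - ‖z‖ ^ 2 := by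
  have := mem_ball_zero_iff.1 hz
  nlinarith [norm_nonneg z]

lemma one_sub_conj_mul_ne_zero {w z : ℂ} (hw : w ∈ ball (0 : ℂ) 1) (hz : z ∈ ball (0 : ℂ) 1) :
    1 - conj w * z ≠ 0 := by
  intro h
  have h1 : ‖w‖ * ‖z‖ = 1 := by simpa using congrArg norm (sub_eq_zero.1 h).symm
  nlinarith [norm_nonneg w, norm_nonneg z, mem_ball_zero_iff.1 hw, mem_ball_zero_iff.1 hz]

lemma one_sub_normSq_discInvolution {w z : ℂ} (hw : w ∈ ball (0 : ℂ) 1)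
    (hz : z ∈ ball (0 : ℂ) 1) :
    1 - ‖discInvolution w z‖ ^ 2 = (1 - ‖w‖ ^ 2) * (1 - ‖z‖ ^ 2) / ‖1 - conj w * z‖ ^ 2 := by
  have h : ‖1 - conj w * z‖ ^ 2 ≠ 0 := by simpa using one_sub_conj_mul_ne_zero hw hz
  rw [discInvolution, norm_div, div_pow, eq_div_iff h, sub_mul, div_mul_cancel₀ _ h]
  simp only [← Complex.normSq_eq_norm_sq, Complex.normSq_apply, Complex.sub_re, Complex.sub_im,
    Complex.mul_re, Complex.mul_im, Complex.conj_re, Complex.conj_im, Complex.one_re,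
    Complex.one_im]
  ring

lemma discInvolution_mem_ball {w z : ℂ} (hw : w ∈ ball (0 : ℂ) 1) (hz : z ∈ ball (0 : ℂ) 1) :
    discInvolution w z ∈ ball (0 : ℂ) 1 := by
  have h : 0 < 1 - ‖discInvolution w z‖ ^ 2 := by
    have := norm_pos_iff.2 (one_sub_conj_mul_ne_zero hw hz)
    have := one_sub_normSq_pos hw
    have := one_sub_normSq_pos hz
    rw [one_sub_normSq_discInvolution hw hz]
    positivity
  rw [mem_ball_zero_iff]
  nlinarith [norm_nonneg (discInvolution w z)]

lemma discInvolution_discInvolution {w z : ℂ} (hw : w ∈ ball (0 : ℂ) 1)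
    (hz : z ∈ ball (0 : ℂ) 1) : discInvolution w (discInvolution w z) = z := by
  have hmul : discInvolution w z * (1 - conj w * z) = w - z :=
    div_mul_cancel₀ _ (one_sub_conj_mul_ne_zero hw hz)
  rw [discInvolution, div_eq_iff (one_sub_conj_mul_ne_zero hw (discInvolution_mem_ball hw hz))]
  linear_combination -hmul

lemma injOn_discInvolution {w : ℂ} (hw : w ∈ ball (0 : ℂ) 1) :
    InjOn (discInvolution w) (ball 0 1) :=
  LeftInvOn.injOn fun _ hz => discInvolution_discInvolution hw hz

lemma image_discInvolution_ball {w : ℂ} (hw : w ∈ ball (0 : ℂ) 1) :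
    discInvolution w '' ball 0 1 = ball 0 1 :=
  Subset.antisymm (image_subset_iff.2 fun _ hz => discInvolution_mem_ball hw hz) fun z hz =>
    ⟨discInvolution w z, discInvolution_mem_ball hw hz, discInvolution_discInvolution hw hz⟩

lemma hasDerivAt_discInvolution {w z : ℂ} (hw : w ∈ ball (0 : ℂ) 1) (hz : z ∈ ball (0 : ℂ) 1) :
    HasDerivAt (discInvolution w) (((‖w‖ ^ 2 - 1 : ℝ) : ℂ) / (1 - conj w * z) ^ 2) z := by
  have hnum : HasDerivAt (fun z => w - z) (-1) z := by simpa using (hasDerivAt_id z).const_sub w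
  have hden : HasDerivAt (fun z => 1 - conj w * z) (-conj w) z := by
    simpa using ((hasDerivAt_id z).const_mul (conj w)).const_sub 1
  refine (hnum.div hden (one_sub_conj_mul_ne_zero hw hz)).congr_deriv ?_
  have : ((‖w‖ ^ 2 - 1 : ℝ) : ℂ) = conj w * w - 1 := by
    rw [Complex.conj_mul']
    push_cast
    ring
  rw [this]
  ring

lemma det_smul_one_complex (a : ℂ) : (a • (1 : ℂ →L[ℝ] ℂ)).det = ‖a‖ ^ 2 := by
  rw [← Complex.normSq_eq_norm_sq, ← Algebra.norm_complex_apply, Algebra.norm_apply]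
  rfl

/-- The Möbius-invariant area `dx dy / (π (1 - |z|²)²)` of the unit disc. -/
noncomputable def hyperbolicMeasure : Measure ℂ :=
  ((volume : Measure ℂ).restrict (ball (0 : ℂ) 1)).withDensity
    fun z => ENNReal.ofReal (((1 - ‖z‖ ^ 2) ^ 2)⁻¹ / π)

lemma lintegral_hyperbolicMeasure (g : ℂ → ℝ≥0∞) :
    ∫⁻ z, g z ∂hyperbolicMeasure =
      ∫⁻ z in ball (0 : ℂ) 1, ENNReal.ofReal (((1 - ‖z‖ ^ 2) ^ 2)⁻¹ / π) * g z := by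
  rw [hyperbolicMeasure, lintegral_withDensity_eq_lintegral_mul_non_measurable₀ _ (by fun_prop)
    (by simp)]
  rfl

lemma ae_hyperbolicMeasure_mem_ball : ∀ᵐ z ∂hyperbolicMeasure, z ∈ ball (0 : ℂ) 1 :=
  (withDensity_absolutelyContinuous _ _).ae_le (ae_restrict_mem measurableSet_ball)

theorem lintegral_hyperbolicMeasure_comp_discInvolution {w : ℂ} (hw : w ∈ ball (0 : ℂ) 1)
    (g : ℂ → ℝ≥0∞) :
    ∫⁻ z, g (discInvolution w z) ∂hyperbolicMeasure = ∫⁻ z, g z ∂hyperbolicMeasure := by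
  rw [lintegral_hyperbolicMeasure, lintegral_hyperbolicMeasure]
  conv_rhs =>
    rw [← image_discInvolution_ball hw, lintegral_image_eq_lintegral_abs_det_fderiv_mul volume
      measurableSet_ball (fun z hz => (hasDerivAt_discInvolution hw hz).complexToReal_fderiv
        |>.hasFDerivWithinAt) (injOn_discInvolution hw)]
  refine setLIntegral_congr_fun measurableSet_ball fun z hz => ?_
  have hw' := one_sub_normSq_pos hw
  have hz' := one_sub_normSq_pos hz
  have hden := norm_pos_iff.2 (one_sub_conj_mul_ne_zero hw hz)
  simp only [det_smul_one_complex]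
  rw [← mul_assoc, ← ENNReal.ofReal_mul (abs_nonneg _), abs_of_nonneg (by positivity),
    one_sub_normSq_discInvolution hw hz, norm_div, norm_pow, Complex.norm_real, Real.norm_eq_abs,
    abs_sub_comm, abs_of_pos hw']
  congr 2
  field_simp

lemma hyperbolicMeasure_preimage_discInvolution {w : ℂ} (hw : w ∈ ball (0 : ℂ) 1) {E : Set ℂ}
    (hE : MeasurableSet E) :
    hyperbolicMeasure (discInvolution w ⁻¹' E) = hyperbolicMeasure E := by
  have hmeas : Measurable (discInvolution w) := by unfold discInvolution; fun_prop
  simpa [← indicator_comp_right, Function.comp_def, lintegral_indicator_one, hE, hmeas hE]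
    using lintegral_hyperbolicMeasure_comp_discInvolution hw (E.indicator 1)

lemma integral_mul_inv_one_sub_sq_sq {ρ : ℝ} (hρ : 0 ≤ ρ) (hρ1 : ρ < 1) :
    ∫ r in (0 : ℝ)..ρ, r * ((1 - r ^ 2) ^ 2)⁻¹ = ρ ^ 2 / (1 - ρ ^ 2) / 2 := by
  have hne : ∀ r ∈ uIcc 0 ρ, 1 - r ^ 2 ≠ 0 := fun r hr => by
    rw [uIcc_of_le hρ] at hr
    nlinarith [hr.1, hr.2]
  rw [intervalIntegral.integral_eq_sub_of_hasDerivAt (f := fun r => (1 - r ^ 2)⁻¹ / 2)]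
  · have := hne ρ right_mem_uIcc
    field_simp
    ring
  · intro r hr
    have hd : HasDerivAt (fun r : ℝ => 1 - r ^ 2) (-(2 * r)) r := by
      simpa using (hasDerivAt_pow 2 r).const_sub 1
    refine ((hd.inv (hne r hr)).div_const 2).congr_deriv ?_
    ring
  · exact (continuousOn_id.mul (ContinuousOn.inv₀ (by fun_prop) fun r hr =>
      pow_ne_zero 2 (hne r hr))).intervalIntegrable

lemma hyperbolicMeasure_ball {ρ : ℝ} (hρ : 0 ≤ ρ) (hρ1 : ρ < 1) :
    hyperbolicMeasure (ball 0 ρ) = ENNReal.ofReal (ρ ^ 2 / (1 - ρ ^ 2)) := by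
  have hint : IntegrableOn (fun z : ℂ => ((1 - ‖z‖ ^ 2) ^ 2)⁻¹ / π) (ball 0 ρ) := by
    refine (ContinuousOn.integrableOn_compact (isCompact_closedBall (0 : ℂ) ρ) ?_).mono_set
      ball_subset_closedBall
    refine (ContinuousOn.inv₀ (by fun_prop) fun z hz => ?_).div_const _
    exact pow_ne_zero 2 (one_sub_normSq_pos (closedBall_subset_ball hρ1 hz)).ne'
  rw [hyperbolicMeasure, withDensity_apply _ measurableSet_ball,
    Measure.restrict_restrict measurableSet_ball, inter_eq_left.2 (ball_subset_ball hρ1.le),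
    ← ofReal_integral_eq_lintegral_ofReal hint (ae_of_all _ fun z => by positivity)]
  congr 1
  have hradial : ∫ z in ball (0 : ℂ) ρ, ((1 - ‖z‖ ^ 2) ^ 2)⁻¹ / π =
      ∫ z : ℂ, (Iio ρ).indicator (fun r => ((1 - r ^ 2) ^ 2)⁻¹ / π) ‖z‖ := by
    rw [← integral_indicator measurableSet_ball]
    simp [indicator]
  rw [hradial, integral_fun_norm_addHaar volume, Complex.finrank_real_complex]
  have hmul : ∀ r : ℝ, r ^ (2 - 1) • (Iio ρ).indicator (fun r => ((1 - r ^ 2) ^ 2)⁻¹ / π) r =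
      (Iio ρ).indicator (fun r => r * ((1 - r ^ 2) ^ 2)⁻¹ / π) r := fun r => by
    simp [indicator, mul_div_assoc]
  simp only [hmul]
  rw [setIntegral_indicator measurableSet_Iio, Ioi_inter_Iio, ← integral_Ioc_eq_integral_Ioo,
    ← intervalIntegral.integral_of_le hρ]
  rw [intervalIntegral.integral_div, integral_mul_inv_one_sub_sq_sq hρ hρ1]
  simp only [Measure.real, Complex.volume_ball, ENNReal.ofReal_one, one_pow, one_mul,
    ENNReal.coe_toReal, NNReal.coe_real_pi, smul_eq_mul, nsmul_eq_mul, Nat.cast_ofNat]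
  field_simp

lemma discInvolution_mem_ball_of_lt_re {u ζ : ℂ} {ρ s : ℝ} (hu : ‖u‖ = 1) (hρ : 0 < ρ)
    (hρ1 : ρ < 1) (hs : 2 * ρ * s = 1 + ρ ^ 2) (hζ : ζ ∈ ball (0 : ℂ) 1)
    (hre : s < (u * ζ⁻¹).re) : discInvolution (ρ * u) ζ ∈ ball 0 ρ := by
  have hw : (ρ * u : ℂ) ∈ ball (0 : ℂ) 1 := by simpa [hu, abs_of_pos hρ] using hρ1
  have hs0 : 0 < s := by nlinarith
  have hζ0 : 0 < Complex.normSq ζ := Complex.normSq_pos.2 <| by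
    rintro rfl
    exact hs0.not_gt (by simpa using hre)
  have hre' : s * Complex.normSq ζ < u.re * ζ.re + u.im * ζ.im := by
    rw [← lt_div_iff₀ hζ0]
    refine hre.trans_eq ?_
    rw [Complex.mul_re, Complex.inv_re, Complex.inv_im]
    ring
  have hu2 : u.re ^ 2 + u.im ^ 2 = 1 := by
    rw [← Complex.sq_norm_sub_sq_re, hu]
    ring
  rw [mem_ball_zero_iff, discInvolution, norm_div,
    div_lt_iff₀ (norm_pos_iff.2 (one_sub_conj_mul_ne_zero hw hζ))]
  refine lt_of_pow_lt_pow_left₀ 2 (by positivity) ?_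
  have hdiff : (ρ * ‖1 - conj (ρ * u) * ζ‖) ^ 2 - ‖ρ * u - ζ‖ ^ 2 =
      (1 - ρ ^ 2) * (2 * ρ) * (u.re * ζ.re + u.im * ζ.im - s * Complex.normSq ζ) := by
    rw [mul_pow]
    simp only [← Complex.normSq_eq_norm_sq, Complex.normSq_apply, Complex.sub_re, Complex.sub_im,
      Complex.mul_re, Complex.mul_im, Complex.conj_re, Complex.conj_im, Complex.one_re,
      Complex.one_im, Complex.ofReal_re, Complex.ofReal_im]
    linear_combination (ρ ^ 4 * (ζ.re ^ 2 + ζ.im ^ 2) - ρ ^ 2) * hu2 +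
      (1 - ρ ^ 2) * (ζ.re ^ 2 + ζ.im ^ 2) * hs
  have : 0 < 1 - ρ ^ 2 := by nlinarith
  have : 0 < (1 - ρ ^ 2) * (2 * ρ) * (u.re * ζ.re + u.im * ζ.im - s * Complex.normSq ζ) :=
    mul_pos (by positivity) (by linarith)
  linarith

-- The set is a hyperbolic disc, hence the Möbius image of a disc centred at the origin.
lemma hyperbolicMeasure_lt_re_mul_inv_le {u : ℂ} {s : ℝ} (hu : ‖u‖ = 1) (hs : 1 < s) :
    hyperbolicMeasure {ζ | s < (u * ζ⁻¹).re} ≤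
      ENNReal.ofReal ((s / √(s ^ 2 - 1) - 1) / 2) := by
  have hr : 0 < √(s ^ 2 - 1) := Real.sqrt_pos.2 (by nlinarith)
  have hr2 : √(s ^ 2 - 1) ^ 2 = s ^ 2 - 1 := Real.sq_sqrt (by nlinarith)
  set r := √(s ^ 2 - 1)
  set ρ := s - r with hρdef
  have hρ : 0 < ρ := by nlinarith
  have hρ1 : ρ < 1 := by nlinarith
  have hsub : {ζ : ℂ | s < (u * ζ⁻¹).re} ≤ᵐ[hyperbolicMeasure]
      discInvolution (ρ * u) ⁻¹' ball 0 ρ :=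
    ae_hyperbolicMeasure_mem_ball.mono fun ζ hζ hre =>
      discInvolution_mem_ball_of_lt_re hu hρ hρ1 (by nlinarith) hζ hre
  refine (measure_mono_ae hsub).trans_eq ?_
  rw [hyperbolicMeasure_preimage_discInvolution (by simpa [hu, abs_of_pos hρ] using hρ1)
    measurableSet_ball, hyperbolicMeasure_ball hρ.le hρ1]
  congr 1
  have hden : 1 - ρ ^ 2 = 2 * ρ * r := by rw [hρdef]; linear_combination hr2
  rw [hden]
  field_simp
  ring

lemma sqrt_sq_sub_one_le {s : ℝ} (hs : 0 ≤ s) : √(s ^ 2 - 1) ≤ s :=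
  Real.sqrt_le_iff.2 ⟨hs, by linarith⟩

lemma hasDerivAt_sqrt_sq_sub_one_sub {s : ℝ} (hs : 1 < s) :
    HasDerivAt (fun s => (√(s ^ 2 - 1) - s) / 2) ((s / √(s ^ 2 - 1) - 1) / 2) s := by
  have hpos : 0 < s ^ 2 - 1 := by nlinarith
  refine (((((hasDerivAt_pow 2 s).sub_const 1).sqrt hpos.ne').sub (hasDerivAt_id s)).div_const
    2).congr_deriv ?_
  have := Real.sqrt_pos.2 hpos
  norm_num
  field_simp

lemma tendsto_sqrt_sq_sub_one_sub_atTop :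
    Tendsto (fun s : ℝ => (√(s ^ 2 - 1) - s) / 2) atTop (𝓝 0) := by
  have hlow : Tendsto (fun s : ℝ => -s⁻¹) atTop (𝓝 0) := by
    simpa using (tendsto_inv_atTop_zero (𝕜 := ℝ)).neg
  refine tendsto_of_tendsto_of_tendsto_of_le_of_le' hlow tendsto_const_nhds ?_ ?_
  · filter_upwards [eventually_gt_atTop 1] with s hs
    have hinv : s * s⁻¹ = 1 := mul_inv_cancel₀ (by positivity)
    have h0 : 0 < s⁻¹ := by positivity
    have h1 : s⁻¹ < 1 := inv_lt_one_of_one_lt₀ hs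
    have : s - s⁻¹ ≤ √(s ^ 2 - 1) := Real.le_sqrt_of_sq_le (by nlinarith)
    linarith
  · filter_upwards [eventually_ge_atTop 0] with s hs
    linarith [sqrt_sq_sub_one_le hs]

lemma lintegral_Ioi_div_sqrt_sq_sub_one_sub_one {c : ℝ} (hc : 1 < c) :
    ∫⁻ s in Ioi c, ENNReal.ofReal ((s / √(s ^ 2 - 1) - 1) / 2) =
      ENNReal.ofReal ((c - √(c ^ 2 - 1)) / 2) := by
  have hderiv : ∀ s ∈ Ici c, HasDerivAt (fun s => (√(s ^ 2 - 1) - s) / 2)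
      ((s / √(s ^ 2 - 1) - 1) / 2) s := fun s hs =>
    hasDerivAt_sqrt_sq_sub_one_sub (hc.trans_le hs)
  have hnonneg : ∀ s ∈ Ioi c, 0 ≤ (s / √(s ^ 2 - 1) - 1) / 2 := fun s hs => by
    have hs1 : 1 < s := hc.trans hs
    have := (one_le_div (Real.sqrt_pos.2 (by nlinarith : 0 < s ^ 2 - 1))).2
      (sqrt_sq_sub_one_le (by linarith))
    linarith
  rw [← ofReal_integral_eq_lintegral_ofReal
      (integrableOn_Ioi_deriv_of_nonneg' hderiv hnonneg tendsto_sqrt_sq_sub_one_sub_atTop)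
      ((ae_restrict_iff' measurableSet_Ioi).2 (ae_of_all _ hnonneg)),
    integral_Ioi_of_hasDerivAt_of_nonneg' hderiv hnonneg tendsto_sqrt_sq_sub_one_sub_atTop]
  congr 1
  ring

lemma lintegral_ofReal_sub_eq {X : Type*} [MeasurableSpace X] {μ : Measure X} {f : X → ℝ}
    (hf : AEMeasurable f μ) (c : ℝ) :
    ∫⁻ x, ENNReal.ofReal (f x - c) ∂μ = ∫⁻ s in Ioi c, μ {x | s < f x} := by
  have hmax : ∀ x, ENNReal.ofReal (f x - c) = ENNReal.ofReal (max (f x - c) 0) := fun x => by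
    simp [ENNReal.ofReal_max]
  simp only [hmax]
  rw [lintegral_eq_lintegral_meas_lt μ (f := fun x => max (f x - c) 0)
    (ae_of_all _ fun x => le_max_right _ _)
    ((hf.sub_const c).max aemeasurable_const),
    ← (measurePreserving_add_right volume c).setLIntegral_comp_preimage_emb
      (measurableEmbedding_addRight c) (fun s => μ {x | s < f x}) (Ioi c),
    preimage_add_const_Ioi, sub_self]
  refine setLIntegral_congr_fun measurableSet_Ioi fun t (ht : 0 < t) => ?_
  congr 1
  ext x
  simp [ht.not_gt, lt_sub_iff_add_lt]

lemma lintegral_ofReal_re_mul_inv_discInvolution_sub_le {u w : ℂ} {c : ℝ} (hu : ‖u‖ = 1)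
    (hw : w ∈ ball (0 : ℂ) 1) (hc : 1 < c) :
    ∫⁻ z, ENNReal.ofReal ((u * (discInvolution w z)⁻¹).re - c) ∂hyperbolicMeasure ≤
      ENNReal.ofReal ((c - √(c ^ 2 - 1)) / 2) := by
  rw [lintegral_hyperbolicMeasure_comp_discInvolution hw
    (fun ζ => ENNReal.ofReal ((u * ζ⁻¹).re - c)), lintegral_ofReal_sub_eq (by fun_prop),
    ← lintegral_Ioi_div_sqrt_sq_sub_one_sub_one hc]
  exact setLIntegral_mono' measurableSet_Ioi fun s hs =>
    hyperbolicMeasure_lt_re_mul_inv_le hu (hc.trans hs)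

lemma measurable_discInvolution (w : ℂ) : Measurable (discInvolution w) := by
  unfold discInvolution
  fun_prop

lemma setLIntegral_ofReal_re_mul_inv_discInvolution_le {u w : ℂ} (hu : ‖u‖ = 1)
    (hw : w ∈ ball (0 : ℂ) 1) (E : Set ℂ) :
    ∫⁻ z in E, ENNReal.ofReal (u * (discInvolution w z)⁻¹).re ∂hyperbolicMeasure ≤
      2 * hyperbolicMeasure E + 1 := by
  calc ∫⁻ z in E, ENNReal.ofReal (u * (discInvolution w z)⁻¹).re ∂hyperbolicMeasure
    _ ≤ ∫⁻ z in E, (2 + ENNReal.ofReal ((u * (discInvolution w z)⁻¹).re - 2))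
        ∂hyperbolicMeasure := lintegral_mono fun z => by
      simpa using ENNReal.ofReal_add_le (p := 2) (q := (u * (discInvolution w z)⁻¹).re - 2)
    _ = 2 * hyperbolicMeasure E + ∫⁻ z in E, ENNReal.ofReal
        ((u * (discInvolution w z)⁻¹).re - 2) ∂hyperbolicMeasure := by
      rw [lintegral_add_left measurable_const, setLIntegral_const]
    _ ≤ 2 * hyperbolicMeasure E + 1 := by
      gcongr
      refine (setLIntegral_le_lintegral _ _).trans
        ((lintegral_ofReal_re_mul_inv_discInvolution_sub_le hu hw one_lt_two).trans ?_)
      exact ENNReal.ofReal_le_one.2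
        (div_le_one_of_le₀ (sub_le_self _ (Real.sqrt_nonneg _)) zero_le_two)

lemma enorm_le_sum_ofReal_re (z : ℂ) :
    ‖z‖ₑ ≤ ∑ k ∈ Finset.range 4, ENNReal.ofReal (I ^ k * z).re := by
  have habs : ∀ x : ℝ, ENNReal.ofReal |x| ≤ ENNReal.ofReal x + ENNReal.ofReal (-x) := fun x => by
    rcases abs_choice x with h | h <;> simp [h]
  calc ‖z‖ₑ ≤ ENNReal.ofReal (|z.re| + |z.im|) := by
        rw [← ofReal_norm]
        exact ENNReal.ofReal_le_ofReal (Complex.norm_le_abs_re_add_abs_im z)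
    _ ≤ ENNReal.ofReal z.re + ENNReal.ofReal (-z.re) +
          (ENNReal.ofReal z.im + ENNReal.ofReal (-z.im)) :=
        ENNReal.ofReal_add_le.trans (add_le_add (habs _) (habs _))
    _ = ∑ k ∈ Finset.range 4, ENNReal.ofReal (I ^ k * z).re := by
        simp only [Finset.sum_range_succ, Finset.sum_range_zero, pow_zero, pow_one, Complex.I_sq,
          Complex.I_pow_three, one_mul, neg_mul, Complex.neg_re, Complex.I_mul_re, neg_neg,
          zero_add]
        ring

lemma setLIntegral_enorm_inv_discInvolution_le {w : ℂ} (hw : w ∈ ball (0 : ℂ) 1) (E : Set ℂ) :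
    ∫⁻ z in E, ‖(discInvolution w z)⁻¹‖ₑ ∂hyperbolicMeasure ≤
      4 * (2 * hyperbolicMeasure E + 1) := by
  have hmeas := measurable_discInvolution w
  calc ∫⁻ z in E, ‖(discInvolution w z)⁻¹‖ₑ ∂hyperbolicMeasure
    _ ≤ ∑ k ∈ Finset.range 4, ∫⁻ z in E, ENNReal.ofReal (I ^ k * (discInvolution w z)⁻¹).re
        ∂hyperbolicMeasure := by
      rw [← lintegral_finsetSum _ fun k _ => by fun_prop]
      exact lintegral_mono fun z => enorm_le_sum_ofReal_re _
    _ ≤ ∑ _k ∈ Finset.range 4, (2 * hyperbolicMeasure E + 1) := Finset.sum_le_sum fun k _ =>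
      setLIntegral_ofReal_re_mul_inv_discInvolution_le (by simp) hw E
    _ = 4 * (2 * hyperbolicMeasure E + 1) := by
      rw [Finset.sum_const, Finset.card_range, nsmul_eq_mul, Nat.cast_ofNat]

lemma integrableOn_inv_discInvolution {w : ℂ} (hw : w ∈ ball (0 : ℂ) 1) {E : Set ℂ}
    (hE : hyperbolicMeasure E ≠ ∞) :
    IntegrableOn (fun z => (discInvolution w z)⁻¹) E hyperbolicMeasure := by
  refine ⟨(measurable_discInvolution w).inv.aestronglyMeasurable, ?_⟩
  refine (setLIntegral_enorm_inv_discInvolution_le hw E).trans_lt ?_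
  simp [ENNReal.mul_lt_top, hE.lt_top]

lemma integral_le_of_lintegral_ofReal_le {X : Type*} [MeasurableSpace X] {μ : Measure X} {f : X → ℝ}
    (hf : Integrable f μ) {C : ℝ} (hC : 0 ≤ C)
    (hle : ∫⁻ x, ENNReal.ofReal (f x) ∂μ ≤ ENNReal.ofReal C) : ∫ x, f x ∂μ ≤ C := by
  rw [integral_eq_lintegral_pos_part_sub_lintegral_neg_part hf]
  exact (sub_le_self _ ENNReal.toReal_nonneg).trans (ENNReal.toReal_le_of_le_ofReal hC hle)

lemma norm_setIntegral_inv_discInvolution_le_of_one_lt {w : ℂ} (hw : w ∈ ball (0 : ℂ) 1)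
    {E : Set ℂ} (hE : hyperbolicMeasure E ≠ ∞) {c : ℝ} (hc : 1 < c) :
    ‖∫ z in E, (discInvolution w z)⁻¹ ∂hyperbolicMeasure‖ ≤
      c * hyperbolicMeasure.real E + (c - √(c ^ 2 - 1)) / 2 := by
  have : IsFiniteMeasure (hyperbolicMeasure.restrict E) := ⟨by simpa using hE.lt_top⟩
  obtain ⟨u, hu, hnorm⟩ := RCLike.exists_norm_eq_mul_self
    (∫ z in E, (discInvolution w z)⁻¹ ∂hyperbolicMeasure)
  have hint := (integrableOn_inv_discInvolution hw hE).const_mul u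
  have hsub := hint.re.sub (integrable_const c)
  have hle := integral_le_of_lintegral_ofReal_le hsub
    (by linarith [sqrt_sq_sub_one_le (by linarith : 0 ≤ c)] : 0 ≤ (c - √(c ^ 2 - 1)) / 2)
    ((setLIntegral_le_lintegral _ _).trans
      (lintegral_ofReal_re_mul_inv_discInvolution_sub_le hu hw hc))
  have hre : ∫ z in E, (u * (discInvolution w z)⁻¹).re ∂hyperbolicMeasure =
      ‖∫ z in E, (discInvolution w z)⁻¹ ∂hyperbolicMeasure‖ := by
    refine (integral_re hint).trans ?_
    rw [integral_const_mul, ← hnorm, RCLike.ofReal_re]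
  have hsplit := integral_sub hint.re (integrable_const c)
  simp only [RCLike.re_to_complex, Pi.sub_apply] at hle hsplit
  rw [hsplit, hre, integral_const, measureReal_restrict_apply_univ, smul_eq_mul] at hle
  linarith

theorem norm_setIntegral_inv_discInvolution_le {w : ℂ} (hw : w ∈ ball (0 : ℂ) 1) {E : Set ℂ}
    (hE : hyperbolicMeasure E ≠ ∞) :
    ‖∫ z in E, (discInvolution w z)⁻¹ ∂hyperbolicMeasure‖ ≤
      √(hyperbolicMeasure.real E * (1 + hyperbolicMeasure.real E)) := by
  rcases (measureReal_nonneg : 0 ≤ hyperbolicMeasure.real E).eq_or_lt with h0 | hpos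
  · have : hyperbolicMeasure E = 0 := (measureReal_eq_zero_iff hE).1 h0.symm
    rw [Measure.restrict_eq_zero.2 this, integral_zero_measure, norm_zero]
    exact Real.sqrt_nonneg _
  set A := hyperbolicMeasure.real E
  set s := √(A * (1 + A))
  have hs2 : s ^ 2 = A * (1 + A) := Real.sq_sqrt (by positivity)
  have hs0 : 0 < s := Real.sqrt_pos.2 (by positivity)
  have hc : 1 < (2 * A + 1) / (2 * s) := by
    rw [lt_div_iff₀ (by positivity)]
    nlinarith
  have hsqrt : √(((2 * A + 1) / (2 * s)) ^ 2 - 1) = 1 / (2 * s) := by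
    rw [Real.sqrt_eq_iff_mul_self_eq_of_pos (by positivity)]
    field_simp
    linear_combination 4 * hs2
  refine (norm_setIntegral_inv_discInvolution_le_of_one_lt hw hE hc).trans_eq ?_
  rw [hsqrt]
  field_simp
  linear_combination -4 * hs2

/-- The divergence `∂ₓ Re V + ∂ᵧ Im V` of a plane vector field written as a complex function. -/
noncomputable def planeDivergence (V : ℂ → ℂ) (z : ℂ) : ℝ :=
  (fderiv ℝ V z 1).re + (fderiv ℝ V z I).im

lemma apply_eq_re_mul_add_im_mul (L : ℂ →L[ℝ] ℝ) (v : ℂ) : L v = v.re * L 1 + v.im * L I := by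
  conv_lhs => rw [show v = v.re • (1 : ℂ) + v.im • I by simp, map_add, map_smul, map_smul]
  rfl

lemma planeDivergence_smul {g : ℂ → ℝ} {g' : ℂ →L[ℝ] ℝ} {V : ℂ → ℂ} {z : ℂ}
    (hg : HasFDerivAt g g' z) (hV : DifferentiableAt ℝ V z) :
    planeDivergence (fun z => g z • V z) z = g z * planeDivergence V z + g' (V z) := by
  rw [apply_eq_re_mul_add_im_mul g', planeDivergence, (hg.fun_smul hV.hasFDerivAt).fderiv]
  simp only [planeDivergence, add_apply, smul_apply,
    ContinuousLinearMap.smulRight_apply, Complex.add_re, Complex.add_im, Complex.smul_re,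
    Complex.smul_im, smul_eq_mul]
  ring

lemma planeDivergence_sub {V W : ℂ → ℂ} {z : ℂ} (hV : DifferentiableAt ℝ V z)
    (hW : DifferentiableAt ℝ W z) :
    planeDivergence (fun z => V z - W z) z = planeDivergence V z - planeDivergence W z := by
  simp only [planeDivergence, fderiv_fun_sub hV hW, sub_apply, Complex.sub_re,
    Complex.sub_im]
  ring

lemma planeDivergence_const_smul {V : ℂ → ℂ} {z : ℂ} (c : ℝ) (hV : DifferentiableAt ℝ V z) :
    planeDivergence (fun z => c • V z) z = c * planeDivergence V z := by
  rw [planeDivergence_smul (hasFDerivAt_const c z) hV, zero_apply, add_zero]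

lemma planeDivergence_conj_eq_zero {h : ℂ → ℂ} {z : ℂ} (hh : DifferentiableAt ℂ h z) :
    planeDivergence (fun z => conj (h z)) z = 0 := by
  have hd : fderiv ℝ (fun z => conj (h z)) z = _ := (Complex.conjCLE.hasFDerivAt.comp z
    (hh.hasDerivAt.hasFDerivAt.restrictScalars ℝ)).fderiv
  simp [planeDivergence, hd]

theorem integral_planeDivergence_eq_zero {V : ℂ → ℂ} (hV : ContDiff ℝ 1 V)
    (hc : HasCompactSupport V) : ∫ z, planeDivergence V z = 0 := by
  have hint (v : ℂ) : Integrable fun z => fderiv ℝ V z v :=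
    ((hV.continuous_fderiv one_ne_zero).clm_apply continuous_const).integrable_of_hasCompactSupport
      (hc.fderiv_apply (𝕜 := ℝ) v)
  have hzero (v : ℂ) : ∫ z, fderiv ℝ V z v = 0 := by
    simpa using integral_mul_fderiv_eq_neg_fderiv_mul_of_integrable (μ := (volume : Measure ℂ))
      (f := fun _ => (1 : ℂ)) (g := V) (v := v) (by simp) (by simpa using hint v)
      (by simpa using hV.continuous.integrable_of_hasCompactSupport hc)
      (fun x _ => differentiableAt_const _) (fun x _ => hV.differentiable one_ne_zero x)
  have hre : ∫ z, (fderiv ℝ V z 1).re = 0 := (integral_re (hint 1)).trans (by simp [hzero])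
  have him : ∫ z, (fderiv ℝ V z I).im = 0 := (integral_im (hint I)).trans (by simp [hzero])
  calc ∫ z, planeDivergence V z
    _ = (∫ z, (fderiv ℝ V z 1).re) + ∫ z, (fderiv ℝ V z I).im :=
      integral_add (hint 1).re (hint I).im
    _ = 0 := by rw [hre, him, add_zero]

lemma contDiff_of_isCompact_of_contDiffAt {E F : Type*} [NormedAddCommGroup E] [NormedSpace ℝ E]
    [NormedAddCommGroup F] [NormedSpace ℝ F] {n : WithTop ℕ∞} {g : E → F} {K : Set E}
    (hK : IsCompact K) (h0 : ∀ w ∉ K, g w = 0) (hg : ∀ w ∈ K, ContDiffAt ℝ n g w) :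
    ContDiff ℝ n g := by
  refine contDiff_iff_contDiffAt.2 fun w => ?_
  by_cases hw : w ∈ K
  · exact hg w hw
  · exact contDiffAt_const.congr_of_eventuallyEq
      (mem_of_superset (hK.isClosed.isOpen_compl.mem_nhds hw) h0)

lemma integrable_of_isCompact_of_continuousAt {X E : Type*} [TopologicalSpace X] [T2Space X]
    [MeasurableSpace X] [OpensMeasurableSpace X] {μ : Measure X} [IsFiniteMeasureOnCompacts μ]
    [NormedAddCommGroup E] {g : X → E} {K : Set X} (hK : IsCompact K) (h0 : ∀ w ∉ K, g w = 0)
    (hg : ∀ w ∈ K, ContinuousAt g w) : Integrable g μ := by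
  have hsupp : tsupport g ⊆ K :=
    closure_minimal (fun w hw => by_contra fun h => hw (h0 w h)) hK.isClosed
  exact (continuous_of_tsupport fun w hw => hg w (hsupp hw)).integrable_of_hasCompactSupport
    (HasCompactSupport.intro hK h0)

section

variable {φ : ℂ → ℝ} {V : ℂ → ℂ}

lemma integrable_fderiv_apply (hφ : ContDiff ℝ 1 φ) (hc : HasCompactSupport φ)
    (hV : ∀ z ∈ tsupport φ, ContinuousAt V z) : Integrable fun z => fderiv ℝ φ z (V z) :=
  integrable_of_isCompact_of_continuousAt hc
    (fun z hz => by simp [fderiv_of_notMem_tsupport ℝ hz]) fun z hz =>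
      (hφ.continuous_fderiv one_ne_zero).continuousAt.clm_apply (hV z hz)

lemma integrable_mul_planeDivergence (hφ : Continuous φ) (hc : HasCompactSupport φ)
    (hV : ∀ z ∈ tsupport φ, ContDiffAt ℝ 1 V z) :
    Integrable fun z => φ z * planeDivergence V z := by
  refine integrable_of_isCompact_of_continuousAt hc
    (fun z hz => by simp [image_eq_zero_of_notMem_tsupport hz]) fun z hz => ?_
  have hdV : ContinuousAt (fderiv ℝ V) z :=
    ((hV z hz).fderiv_right (m := 0) (by norm_num)).continuousAt
  exact hφ.continuousAt.mul
    ((Complex.continuous_re.continuousAt.comp (hdV.clm_apply continuousAt_const)).add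
      (Complex.continuous_im.continuousAt.comp (hdV.clm_apply continuousAt_const)))

theorem integral_fderiv_apply_eq_neg_integral_mul_planeDivergence (hφ : ContDiff ℝ 1 φ)
    (hc : HasCompactSupport φ) (hV : ∀ z ∈ tsupport φ, ContDiffAt ℝ 1 V z) :
    ∫ z, fderiv ℝ φ z (V z) = -∫ z, φ z * planeDivergence V z := by
  have hsmooth : ContDiff ℝ 1 fun z => φ z • V z := contDiff_of_isCompact_of_contDiffAt hc
    (fun z hz => by simp [image_eq_zero_of_notMem_tsupport hz])
    fun z hz => hφ.contDiffAt.smul (hV z hz)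
  have hprod : ∀ z, planeDivergence (fun z => φ z • V z) z =
      φ z * planeDivergence V z + fderiv ℝ φ z (V z) := fun z => by
    by_cases hz : z ∈ tsupport φ
    · exact planeDivergence_smul (hφ.differentiable one_ne_zero z).hasFDerivAt
        ((hV z hz).differentiableAt one_ne_zero)
    · have hz' : z ∉ tsupport fun z => φ z • V z := fun h => hz (tsupport_smul_subset_left φ V h)
      simp only [planeDivergence, image_eq_zero_of_notMem_tsupport hz,
        fderiv_of_notMem_tsupport ℝ hz, fderiv_of_notMem_tsupport ℝ hz', zero_apply,
        Complex.zero_re, Complex.zero_im, zero_mul, add_zero]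
  have h := integral_planeDivergence_eq_zero hsmooth hc.smul_right
  simp only [hprod] at h
  rw [integral_add (integrable_mul_planeDivergence hφ.continuous hc hV)
    (integrable_fderiv_apply hφ hc fun z hz => (hV z hz).continuousAt)] at h
  linarith

end

lemma hasFDerivAt_inv_one_sub_normSq {z : ℂ} (hz : z ∈ ball (0 : ℂ) 1) :
    HasFDerivAt (fun z : ℂ => (1 - ‖z‖ ^ 2)⁻¹) ((2 * ((1 - ‖z‖ ^ 2) ^ 2)⁻¹) • innerSL ℝ z) z := by
  refine ((hasDerivAt_inv (one_sub_normSq_pos hz).ne').comp_hasFDerivAt z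
    ((hasStrictFDerivAt_norm_sq z).hasFDerivAt.const_sub 1)).congr_fderiv ?_
  ext v
  simp only [smul_apply, neg_apply, smul_eq_mul,
    nsmul_eq_mul, Nat.cast_ofNat]
  ring

lemma contDiffAt_inv_one_sub_normSq_smul {z : ℂ} (hz : z ∈ ball (0 : ℂ) 1) :
    ContDiffAt ℝ 1 (fun z : ℂ => (1 - ‖z‖ ^ 2)⁻¹ • z) z :=
  ((contDiffAt_const.sub (contDiff_norm_sq ℝ).contDiffAt).inv
    (one_sub_normSq_pos hz).ne').smul contDiffAt_id

lemma planeDivergence_inv_one_sub_normSq_smul {z : ℂ} (hz : z ∈ ball (0 : ℂ) 1) :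
    planeDivergence (fun z => (1 - ‖z‖ ^ 2)⁻¹ • z) z = 2 * ((1 - ‖z‖ ^ 2) ^ 2)⁻¹ := by
  have hne := (one_sub_normSq_pos hz).ne'
  have hid : planeDivergence (fun z => z) z = 2 := by
    simp [planeDivergence, one_add_one_eq_two]
  rw [planeDivergence_smul (V := fun z => z) (hasFDerivAt_inv_one_sub_normSq hz)
    differentiableAt_id, hid, smul_apply, innerSL_apply_apply,
    real_inner_self_eq_norm_sq, smul_eq_mul]
  field_simp
  ring

section

variable {φ : ℂ → ℝ} {E : Set ℂ}

lemma integral_fderiv_self_div_one_sub_normSq (hφ : ContDiff ℝ 1 φ) (hc : HasCompactSupport φ)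
    (hs : tsupport φ ⊆ ball 0 1) :
    ∫ w, fderiv ℝ φ w w / (1 - ‖w‖ ^ 2) = -2 * ∫ w, φ w * ((1 - ‖w‖ ^ 2) ^ 2)⁻¹ := by
  have h := integral_fderiv_apply_eq_neg_integral_mul_planeDivergence hφ hc
    (V := fun w => (1 - ‖w‖ ^ 2)⁻¹ • w) fun w hw => contDiffAt_inv_one_sub_normSq_smul (hs hw)
  calc ∫ w, fderiv ℝ φ w w / (1 - ‖w‖ ^ 2)
    _ = ∫ w, fderiv ℝ φ w ((1 - ‖w‖ ^ 2)⁻¹ • w) := by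
      simp only [map_smul, smul_eq_mul, div_eq_inv_mul]
    _ = -∫ w, 2 * (φ w * ((1 - ‖w‖ ^ 2) ^ 2)⁻¹) := by
      rw [h]
      congr 2 with w
      by_cases hw : w ∈ tsupport φ
      · rw [planeDivergence_inv_one_sub_normSq_smul (hs hw), mul_left_comm]
      · simp [image_eq_zero_of_notMem_tsupport hw]
    _ = -2 * ∫ w, φ w * ((1 - ‖w‖ ^ 2) ^ 2)⁻¹ := by rw [integral_const_mul, neg_mul]

lemma hyperbolicMeasure_le_integral (hφ : Continuous φ) (hc : HasCompactSupport φ)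
    (hs : tsupport φ ⊆ ball 0 1) (hnn : ∀ z, 0 ≤ φ z) (hE : MeasurableSet E)
    (h1 : ∀ z ∈ E, 1 ≤ φ z) :
    hyperbolicMeasure E ≤ ENNReal.ofReal ((∫ w, φ w * ((1 - ‖w‖ ^ 2) ^ 2)⁻¹) / π) := by
  have hint : Integrable fun w => φ w * ((1 - ‖w‖ ^ 2) ^ 2)⁻¹ := by
    refine integrable_of_isCompact_of_continuousAt hc
      (fun w hw => by simp [image_eq_zero_of_notMem_tsupport hw]) fun w hw => ?_
    exact hφ.continuousAt.mul (ContinuousAt.inv₀ (by fun_prop)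
      (pow_ne_zero 2 (one_sub_normSq_pos (hs hw)).ne'))
  rw [← lintegral_indicator_one hE, lintegral_hyperbolicMeasure, ← integral_div,
    ofReal_integral_eq_lintegral_ofReal (hint.div_const _)
      (ae_of_all _ fun w => by have := hnn w; positivity)]
  refine (setLIntegral_le_lintegral _ _).trans (lintegral_mono fun z => ?_)
  by_cases hz : z ∈ E
  · rw [indicator_of_mem hz, Pi.one_apply, mul_one, mul_div_assoc]
    exact ENNReal.ofReal_le_ofReal (le_mul_of_one_le_left (by positivity) (h1 z hz))
  · simp [hz]

/-- The derivative of `φ` at `w` in the direction of the conjugate Möbius kernel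
`(1 - w z̄) / (w̄ - z̄)`, divided by `1 - |w|²`; its `w`-integral reproduces `φ z`
up to a constant. -/
noncomputable def kernelPairing (φ : ℂ → ℝ) (z w : ℂ) : ℝ :=
  fderiv ℝ φ w (conj (discInvolution w z)⁻¹) / (1 - ‖w‖ ^ 2)

lemma kernelPairing_of_notMem_tsupport (z : ℂ) {w : ℂ} (hw : w ∉ tsupport φ) :
    kernelPairing φ z w = 0 := by
  simp [kernelPairing, fderiv_of_notMem_tsupport ℝ hw]

lemma conj_inv_discInvolution_eq {w z : ℂ} (hwz : w ≠ z) :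
    conj (discInvolution w z)⁻¹ = ((1 - ‖w‖ ^ 2) / ‖w - z‖ ^ 2) • (w - z) + w := by
  have hne : w - z ≠ 0 := sub_ne_zero.2 hwz
  have hne' : conj (w - z) ≠ 0 := (map_ne_zero _).2 hne
  rw [discInvolution, inv_div, map_div₀, div_eq_iff hne', add_mul, smul_mul_assoc,
    Complex.mul_conj', Complex.real_smul]
  have : (‖w - z‖ : ℂ) ^ 2 ≠ 0 := by simpa using hne
  push_cast
  rw [div_mul_cancel₀ _ this, ← Complex.mul_conj']
  simp only [map_sub, map_one, map_mul, Complex.conj_conj]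
  ring

lemma kernelPairing_eq {z w : ℂ} (hwz : w ≠ z) (hs : tsupport φ ⊆ ball 0 1) :
    kernelPairing φ z w =
      fderiv ℝ φ w (w - z) / ‖w - z‖ ^ 2 + fderiv ℝ φ w w / (1 - ‖w‖ ^ 2) := by
  by_cases hw : w ∈ tsupport φ
  · have hpos := one_sub_normSq_pos (hs hw)
    rw [kernelPairing, conj_inv_discInvolution_eq hwz, map_add, map_smul, smul_eq_mul]
    field_simp
  · simp [kernelPairing, fderiv_of_notMem_tsupport ℝ hw]

lemma integral_kernelPairing (hφ : ContDiff ℝ 1 φ) (hc : HasCompactSupport φ)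
    (hs : tsupport φ ⊆ ball 0 1) {z : ℂ} (hz : φ z ≠ 0) :
    ∫ w, kernelPairing φ z w =
      -(2 * π) * (φ z + (∫ w, φ w * ((1 - ‖w‖ ^ 2) ^ 2)⁻¹) / π) := by
  have hrep := integral_fderiv_sub_div_normSq hφ hc z
  have hint : Integrable fun w => fderiv ℝ φ w (w - z) / ‖w - z‖ ^ 2 :=
    Integrable.of_integral_ne_zero <| by
      rw [hrep]
      exact mul_ne_zero (by simp [Real.pi_ne_zero]) hz
  have hint' : Integrable fun w => fderiv ℝ φ w w / (1 - ‖w‖ ^ 2) := by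
    simpa only [map_smul, smul_eq_mul, div_eq_inv_mul] using integrable_fderiv_apply hφ hc
      (V := fun w => (1 - ‖w‖ ^ 2)⁻¹ • w) fun w hw =>
        (contDiffAt_inv_one_sub_normSq_smul (hs hw)).continuousAt
  rw [integral_congr_ae ((Measure.ae_ne volume z).mono fun w hwz => kernelPairing_eq hwz hs),
    integral_add hint hint', hrep, integral_fderiv_self_div_one_sub_normSq hφ hc hs]
  field_simp
  ring

lemma measurable_uncurry_kernelPairing (hφ : ContDiff ℝ 1 φ) :
    Measurable (Function.uncurry (kernelPairing φ)) := by
  have hkernel : Measurable fun p : ℂ × ℂ => conj (discInvolution p.2 p.1)⁻¹ := by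
    unfold discInvolution
    exact Complex.continuous_conj.measurable.comp (by fun_prop)
  exact ((isBoundedBilinearMap_apply (𝕜 := ℝ) (E := ℂ) (F := ℝ)).continuous.measurable.comp
    (((hφ.continuous_fderiv one_ne_zero).measurable.comp measurable_snd).prodMk hkernel)).div
      (by fun_prop)

lemma abs_fderiv_conj_div_le (hs : tsupport φ ⊆ ball 0 1) (w v : ℂ) :
    |fderiv ℝ φ w (conj v) / (1 - ‖w‖ ^ 2)| ≤ ‖v‖ * (‖fderiv ℝ φ w‖ / (1 - ‖w‖ ^ 2)) := by
  by_cases hw : w ∈ tsupport φ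
  · have hpos := one_sub_normSq_pos (hs hw)
    rw [abs_div, abs_of_pos hpos, mul_div_assoc']
    gcongr
    simpa [mul_comm] using (fderiv ℝ φ w).le_opNorm (conj v)
  · simp [fderiv_of_notMem_tsupport ℝ hw]

lemma integrable_norm_fderiv_div (hφ : ContDiff ℝ 1 φ) (hc : HasCompactSupport φ)
    (hs : tsupport φ ⊆ ball 0 1) : Integrable fun w => ‖fderiv ℝ φ w‖ / (1 - ‖w‖ ^ 2) :=
  integrable_of_isCompact_of_continuousAt hc
    (fun w hw => by simp [fderiv_of_notMem_tsupport ℝ hw]) fun w hw =>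
      (hφ.continuous_fderiv one_ne_zero).norm.continuousAt.div (by fun_prop)
        (one_sub_normSq_pos (hs hw)).ne'

lemma norm_fderiv_div_nonneg (hs : tsupport φ ⊆ ball 0 1) (w : ℂ) :
    0 ≤ ‖fderiv ℝ φ w‖ / (1 - ‖w‖ ^ 2) := by
  by_cases hw : w ∈ tsupport φ
  · exact div_nonneg (norm_nonneg _) (one_sub_normSq_pos (hs hw)).le
  · simp [fderiv_of_notMem_tsupport ℝ hw]

lemma setLIntegral_enorm_kernelPairing_le (hs : tsupport φ ⊆ ball 0 1) (w : ℂ) :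
    ∫⁻ z in E, ‖kernelPairing φ z w‖ₑ ∂hyperbolicMeasure ≤
      4 * (2 * hyperbolicMeasure E + 1) * ‖‖fderiv ℝ φ w‖ / (1 - ‖w‖ ^ 2)‖ₑ := by
  by_cases hw : w ∈ tsupport φ
  · calc ∫⁻ z in E, ‖kernelPairing φ z w‖ₑ ∂hyperbolicMeasure
      _ ≤ ∫⁻ z in E, ‖(discInvolution w z)⁻¹‖ₑ * ‖‖fderiv ℝ φ w‖ / (1 - ‖w‖ ^ 2)‖ₑ
          ∂hyperbolicMeasure := lintegral_mono fun z => by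
        rw [← enorm_norm (discInvolution w z)⁻¹, ← enorm_mul]
        exact enorm_le_iff_norm_le.2 ((abs_fderiv_conj_div_le hs w _).trans (le_abs_self _))
      _ ≤ 4 * (2 * hyperbolicMeasure E + 1) * ‖‖fderiv ℝ φ w‖ / (1 - ‖w‖ ^ 2)‖ₑ := by
        rw [lintegral_mul_const' _ _ enorm_ne_top]
        gcongr
        exact setLIntegral_enorm_inv_discInvolution_le (hs hw) E
  · simp [kernelPairing_of_notMem_tsupport _ hw]

instance : SFinite hyperbolicMeasure := by
  unfold hyperbolicMeasure
  infer_instance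

lemma integrable_uncurry_kernelPairing (hφ : ContDiff ℝ 1 φ) (hc : HasCompactSupport φ)
    (hs : tsupport φ ⊆ ball 0 1) (hE : hyperbolicMeasure E ≠ ∞) :
    Integrable (Function.uncurry (kernelPairing φ))
      ((hyperbolicMeasure.restrict E).prod volume) := by
  have hmeas := measurable_uncurry_kernelPairing hφ
  have hconst : 4 * (2 * hyperbolicMeasure E + 1) ≠ ∞ := by simp [ENNReal.mul_eq_top, hE]
  refine ⟨hmeas.aestronglyMeasurable, ?_⟩
  rw [HasFiniteIntegral, lintegral_prod_symm _ hmeas.enorm.aemeasurable]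
  refine (lintegral_mono fun w => setLIntegral_enorm_kernelPairing_le hs w).trans_lt ?_
  rw [lintegral_const_mul' _ _ hconst]
  exact ENNReal.mul_lt_top hconst.lt_top (integrable_norm_fderiv_div hφ hc hs).2

lemma abs_setIntegral_kernelPairing_le (hs : tsupport φ ⊆ ball 0 1)
    (hE : hyperbolicMeasure E ≠ ∞) (w : ℂ) :
    |∫ z in E, kernelPairing φ z w ∂hyperbolicMeasure| ≤
      √(hyperbolicMeasure.real E * (1 + hyperbolicMeasure.real E)) *
        (‖fderiv ℝ φ w‖ / (1 - ‖w‖ ^ 2)) := by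
  by_cases hw : w ∈ tsupport φ
  · have hpos := one_sub_normSq_pos (hs hw)
    have hcomm : ∫ z in E, kernelPairing φ z w ∂hyperbolicMeasure =
        fderiv ℝ φ w (conj (∫ z in E, (discInvolution w z)⁻¹ ∂hyperbolicMeasure)) /
          (1 - ‖w‖ ^ 2) := by
      simp only [kernelPairing]
      rw [integral_div]
      congr 1
      exact ContinuousLinearMap.integral_comp_comm
        ((fderiv ℝ φ w).comp (Complex.conjCLE : ℂ →L[ℝ] ℂ))
        (integrableOn_inv_discInvolution (hs hw) hE)
    rw [hcomm]
    refine (abs_fderiv_conj_div_le hs w _).trans ?_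
    gcongr
    exact norm_setIntegral_inv_discInvolution_le (hs hw) hE
  · simp [kernelPairing_of_notMem_tsupport _ hw, fderiv_of_notMem_tsupport ℝ hw]

/-- A functional form of the isoperimetric inequality `4πA + 4A² ≤ L²` of the hyperbolic plane. -/
theorem two_mul_sqrt_hyperbolicMeasure_le (hφ : ContDiff ℝ 1 φ) (hc : HasCompactSupport φ)
    (hs : tsupport φ ⊆ ball 0 1) (hnn : ∀ z, 0 ≤ φ z) (hE : MeasurableSet E)
    (h1 : ∀ z ∈ E, φ z = 1) :
    2 * √(hyperbolicMeasure.real E * (1 + hyperbolicMeasure.real E)) ≤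
      (∫ w, ‖fderiv ℝ φ w‖ / (1 - ‖w‖ ^ 2)) / π := by
  set A := hyperbolicMeasure.real E
  set J := (∫ w, φ w * ((1 - ‖w‖ ^ 2) ^ 2)⁻¹) / π
  set L := ∫ w, ‖fderiv ℝ φ w‖ / (1 - ‖w‖ ^ 2)
  have hJ : 0 ≤ J :=
    div_nonneg (integral_nonneg fun w => mul_nonneg (hnn w) (by positivity)) Real.pi_pos.le
  have hAJ := hyperbolicMeasure_le_integral hφ.continuous hc hs hnn hE fun z hz => (h1 z hz).ge
  have hE' : hyperbolicMeasure E ≠ ∞ := ne_top_of_le_ne_top ENNReal.ofReal_ne_top hAJ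
  have hA : 0 ≤ A := measureReal_nonneg
  replace hAJ : A ≤ J := ENNReal.toReal_le_of_le_ofReal hJ hAJ
  set s := √(A * (1 + A))
  have hrep : ∫ z in E, (∫ w, kernelPairing φ z w) ∂hyperbolicMeasure =
      -(2 * π * (1 + J) * A) := by
    rw [setIntegral_congr_fun hE (g := fun _ => -(2 * π) * (1 + J)) fun z hz => by
      rw [integral_kernelPairing hφ hc hs (by simp [h1 z hz]), h1 z hz], setIntegral_const,
      smul_eq_mul]
    ring
  have hbound : |∫ z in E, (∫ w, kernelPairing φ z w) ∂hyperbolicMeasure| ≤ s * L := by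
    rw [integral_integral_swap (integrable_uncurry_kernelPairing hφ hc hs hE'),
      ← integral_const_mul, ← Real.norm_eq_abs]
    exact norm_integral_le_of_norm_le ((integrable_norm_fderiv_div hφ hc hs).const_mul s)
      (ae_of_all _ fun w => abs_setIntegral_kernelPairing_le hs hE' w)
  rw [hrep, abs_neg, abs_of_nonneg (mul_nonneg (by positivity) hA)] at hbound
  have hs0 : 0 ≤ s := Real.sqrt_nonneg _
  rw [le_div_iff₀ Real.pi_pos]
  rcases hs0.eq_or_lt with hs0 | hs0
  · rw [← hs0, mul_zero, zero_mul]
    exact integral_nonneg (norm_fderiv_div_nonneg hs)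
  · refine le_of_mul_le_mul_left (le_trans ?_ hbound) hs0
    calc s * (2 * s * π) = 2 * π * (1 + A) * A := by
          linear_combination 2 * π * Real.sq_sqrt (show 0 ≤ A * (1 + A) by positivity)
      _ ≤ 2 * π * (1 + J) * A := by gcongr

end

/-! ### Superlevel sets of the weighted modulus -/

/-- The weighted modulus `|f|^κ (1 - |z|²)`, whose superlevel sets are compared with hyperbolic
discs. -/
noncomputable def weightedModulus (f : ℂ → ℂ) (κ : ℝ) (z : ℂ) : ℝ := ‖f z‖ ^ κ * (1 - ‖z‖ ^ 2)

/-- The gradient of `log (|f|^κ (1 - |z|²))`, as a vector of the plane. -/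
noncomputable def logGradWeightedModulus (f : ℂ → ℂ) (κ : ℝ) (z : ℂ) : ℂ :=
  κ • conj (logDeriv f z) - (2 : ℝ) • (1 - ‖z‖ ^ 2)⁻¹ • z

section

variable {f : ℂ → ℂ} {κ : ℝ} {z : ℂ}

lemma continuous_weightedModulus (hf : Continuous f) (hκ : 0 ≤ κ) :
    Continuous (weightedModulus f κ) :=
  (hf.norm.rpow_const fun _ => Or.inr hκ).mul (by fun_prop)

lemma mem_ball_of_weightedModulus_pos (h : 0 < weightedModulus f κ z) : z ∈ ball (0 : ℂ) 1 := by
  have hpos : 0 < 1 - ‖z‖ ^ 2 := pos_of_mul_pos_right h (by positivity)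
  rw [mem_ball_zero_iff]
  nlinarith [norm_nonneg z]

lemma ne_zero_of_weightedModulus_pos (hκ : κ ≠ 0) (h : 0 < weightedModulus f κ z) :
    f z ≠ 0 := by
  intro h0
  simp [weightedModulus, h0, Real.zero_rpow hκ] at h

lemma isCompact_le_weightedModulus (hf : Continuous f) (hκ : 0 ≤ κ) {t : ℝ} (ht : 0 < t) :
    IsCompact {z | t ≤ weightedModulus f κ z} :=
  (isCompact_closedBall (0 : ℂ) 1).of_isClosed_subset
    (isClosed_le continuous_const (continuous_weightedModulus hf hκ)) fun _ hz =>
      ball_subset_closedBall (mem_ball_of_weightedModulus_pos (ht.trans_le hz))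

lemma hasFDerivAt_norm_comp_rpow (hf : DifferentiableAt ℂ f z) (hfz : f z ≠ 0) :
    HasFDerivAt (fun v => ‖f v‖ ^ κ) ((‖f z‖ ^ κ * κ) • innerSL ℝ (conj (logDeriv f z))) z := by
  have hn : 0 < ‖f z‖ := norm_pos_iff.2 hfz
  have hsq : ∀ v, (‖f v‖ ^ 2) ^ (κ / 2) = ‖f v‖ ^ κ := fun v => by
    rw [← Real.rpow_natCast, ← Real.rpow_mul (norm_nonneg _), Nat.cast_ofNat, mul_div_cancel₀ _
      two_ne_zero]
  have hderiv := (Real.hasDerivAt_rpow_const (p := κ / 2) (Or.inl (pow_pos hn 2).ne')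
    ).comp_hasFDerivAt z (hf.hasDerivAt.hasFDerivAt.restrictScalars ℝ).norm_sq
  refine (hderiv.congr_of_eventuallyEq (.of_forall fun v => (hsq v).symm)).congr_fderiv ?_
  have hlog : logDeriv f z = ((‖f z‖ ^ 2)⁻¹ : ℝ) * (conj (f z) * deriv f z) := by
    have : conj (f z) ≠ 0 := (map_ne_zero _).2 hfz
    rw [← Complex.normSq_eq_norm_sq, Complex.ofReal_inv, ← Complex.mul_conj, logDeriv_apply]
    field_simp
  have hinner : ∀ v, inner ℝ (conj (logDeriv f z)) v =
      (‖f z‖ ^ 2)⁻¹ * inner ℝ (f z) (deriv f z * v) := fun v => by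
    simp only [hlog, Complex.inner, Complex.conj_conj]
    rw [← Complex.re_ofReal_mul]
    ring_nf
  ext v
  simp only [smul_apply, ContinuousLinearMap.comp_apply, innerSL_apply_apply, hinner, hsq,
    Real.rpow_sub_one (pow_pos hn 2).ne', ContinuousLinearMap.coe_restrictScalars',
    ContinuousLinearMap.toSpanSingleton_apply, smul_eq_mul, nsmul_eq_mul, Nat.cast_ofNat,
    mul_comm v]
  field_simp

lemma hasFDerivAt_weightedModulus (hf : Differentiable ℂ f) (hκ : κ ≠ 0)
    (h : 0 < weightedModulus f κ z) :
    HasFDerivAt (weightedModulus f κ)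
      (weightedModulus f κ z • innerSL ℝ (logGradWeightedModulus f κ z)) z := by
  have hz := one_sub_normSq_pos (mem_ball_of_weightedModulus_pos h)
  refine ((hasFDerivAt_norm_comp_rpow (hf z) (ne_zero_of_weightedModulus_pos hκ h)).mul
    ((hasStrictFDerivAt_norm_sq z).hasFDerivAt.const_sub 1)).congr_fderiv ?_
  ext v
  simp only [weightedModulus, logGradWeightedModulus, add_apply, smul_apply, neg_apply,
    innerSL_apply_apply, inner_sub_left, inner_smul_left, smul_eq_mul, nsmul_eq_mul,
    conj_trivial, Nat.cast_ofNat]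
  field_simp
  ring

lemma contDiffAt_weightedModulus (hf : Differentiable ℂ f) (hκ : κ ≠ 0)
    (h : 0 < weightedModulus f κ z) : ContDiffAt ℝ 1 (weightedModulus f κ) z := by
  have hfz := ne_zero_of_weightedModulus_pos hκ h
  exact ((hf.contDiff.contDiffAt.restrict_scalars ℝ).norm ℝ hfz |>.rpow_const_of_ne
    (by simpa using hfz)).mul (contDiffAt_const.sub (contDiff_norm_sq ℝ).contDiffAt)

lemma contDiffAt_logDeriv (hf : Differentiable ℂ f) (hfz : f z ≠ 0) :
    ContDiffAt ℂ 1 (logDeriv f) z :=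
  (((contDiff_succ_iff_deriv (n := 1)).1 hf.contDiff).2.2.contDiffAt).div
    hf.contDiff.contDiffAt hfz

lemma contDiffAt_logGradWeightedModulus (hf : Differentiable ℂ f) (hκ : κ ≠ 0)
    (h : 0 < weightedModulus f κ z) : ContDiffAt ℝ 1 (logGradWeightedModulus f κ) z := by
  have hlog := (contDiffAt_logDeriv hf (ne_zero_of_weightedModulus_pos hκ h)).restrict_scalars ℝ
  exact ((Complex.conjCLE.contDiff.contDiffAt.comp z hlog).const_smul κ).sub
    ((contDiffAt_inv_one_sub_normSq_smul (mem_ball_of_weightedModulus_pos h)).const_smul 2)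

-- `log |f|` is harmonic, so only the weight contributes.
lemma planeDivergence_logGradWeightedModulus (hf : Differentiable ℂ f) (hκ : κ ≠ 0)
    (h : 0 < weightedModulus f κ z) :
    planeDivergence (logGradWeightedModulus f κ) z = -4 * ((1 - ‖z‖ ^ 2) ^ 2)⁻¹ := by
  have hz := mem_ball_of_weightedModulus_pos h
  have hlog : DifferentiableAt ℂ (logDeriv f) z :=
    (contDiffAt_logDeriv hf (ne_zero_of_weightedModulus_pos hκ h)).differentiableAt one_ne_zero
  have hconj : DifferentiableAt ℝ (fun z => conj (logDeriv f z)) z :=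
    Complex.conjCLE.differentiableAt.comp z (hlog.restrictScalars ℝ)
  have hweight := (contDiffAt_inv_one_sub_normSq_smul hz).differentiableAt one_ne_zero
  calc planeDivergence (logGradWeightedModulus f κ) z
    _ = κ * planeDivergence (fun z => conj (logDeriv f z)) z -
        2 * planeDivergence (fun z => (1 - ‖z‖ ^ 2)⁻¹ • z) z := by
      rw [← planeDivergence_const_smul κ hconj, ← planeDivergence_const_smul 2 hweight]
      exact planeDivergence_sub (hconj.const_smul κ) (hweight.const_smul (2 : ℝ))
    _ = -4 * ((1 - ‖z‖ ^ 2) ^ 2)⁻¹ := by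
      rw [planeDivergence_conj_eq_zero hlog, planeDivergence_inv_one_sub_normSq_smul hz]
      ring

variable {χ : ℝ → ℝ} {t : ℝ}

lemma tsupport_comp_weightedModulus_subset (hf : Continuous f) (hκ : 0 ≤ κ)
    (hχ0 : ∀ s ≤ t, χ s = 0) :
    tsupport (fun z => χ (weightedModulus f κ z)) ⊆ {z | t ≤ weightedModulus f κ z} :=
  closure_minimal (fun _ hz => (not_le.1 fun h => hz (hχ0 _ h)).le)
    (isClosed_le continuous_const (continuous_weightedModulus hf hκ))

lemma hasCompactSupport_comp_weightedModulus (hf : Continuous f) (hκ : 0 ≤ κ) (ht : 0 < t)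
    (hχ0 : ∀ s ≤ t, χ s = 0) : HasCompactSupport fun z => χ (weightedModulus f κ z) :=
  (isCompact_le_weightedModulus hf hκ ht).of_isClosed_subset (isClosed_tsupport _)
    (tsupport_comp_weightedModulus_subset hf hκ hχ0)

lemma contDiff_comp_weightedModulus (hf : Differentiable ℂ f) (hκ : 0 < κ) (ht : 0 < t)
    (hχ : ContDiff ℝ 1 χ) (hχ0 : ∀ s ≤ t, χ s = 0) :
    ContDiff ℝ 1 fun z => χ (weightedModulus f κ z) :=
  contDiff_of_isCompact_of_contDiffAt (isCompact_le_weightedModulus hf.continuous hκ.le ht)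
    (fun _ hz => hχ0 _ (not_le.1 hz).le) fun z hz =>
      hχ.contDiffAt.comp z (contDiffAt_weightedModulus hf hκ.ne' (ht.trans_le hz))

lemma fderiv_comp_weightedModulus (hf : Differentiable ℂ f) (hκ : 0 < κ) (ht : 0 < t)
    (hχ : Differentiable ℝ χ) (hχ0 : ∀ s ≤ t, χ s = 0) (z : ℂ) :
    fderiv ℝ (fun z => χ (weightedModulus f κ z)) z =
      (deriv χ (weightedModulus f κ z) * weightedModulus f κ z) •
        innerSL ℝ (logGradWeightedModulus f κ z) := by
  rcases lt_or_ge (weightedModulus f κ z) t with hz | hz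
  · have hlocal : χ =ᶠ[𝓝 (weightedModulus f κ z)] fun _ => 0 :=
      (eventually_lt_nhds hz).mono fun s hs => hχ0 s hs.le
    rw [fderiv_of_notMem_tsupport ℝ fun h => hz.not_ge
      (tsupport_comp_weightedModulus_subset hf.continuous hκ.le hχ0 h), hlocal.deriv_eq]
    simp
  · rw [mul_smul]
    exact ((hχ _).hasDerivAt.comp_hasFDerivAt z
      (hasFDerivAt_weightedModulus hf hκ.ne' (ht.trans_le hz))).fderiv

theorem integral_deriv_comp_weightedModulus (hf : Differentiable ℂ f) (hκ : 0 < κ) (ht : 0 < t)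
    (hχ : ContDiff ℝ 1 χ) (hχ0 : ∀ s ≤ t, χ s = 0) :
    ∫ z, deriv χ (weightedModulus f κ z) * weightedModulus f κ z *
        ‖logGradWeightedModulus f κ z‖ ^ 2 =
      4 * ∫ z, χ (weightedModulus f κ z) * ((1 - ‖z‖ ^ 2) ^ 2)⁻¹ := by
  have hpos : ∀ z ∈ tsupport (fun z => χ (weightedModulus f κ z)), 0 < weightedModulus f κ z :=
    fun z hz => ht.trans_le (tsupport_comp_weightedModulus_subset hf.continuous hκ.le hχ0 hz)
  calc ∫ z, deriv χ (weightedModulus f κ z) * weightedModulus f κ z *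
        ‖logGradWeightedModulus f κ z‖ ^ 2
    _ = ∫ z, fderiv ℝ (fun z => χ (weightedModulus f κ z)) z (logGradWeightedModulus f κ z) := by
      simp only [fderiv_comp_weightedModulus hf hκ ht (hχ.differentiable one_ne_zero) hχ0,
        smul_apply, innerSL_apply_apply, real_inner_self_eq_norm_sq, smul_eq_mul]
    _ = -∫ z, -4 * (χ (weightedModulus f κ z) * ((1 - ‖z‖ ^ 2) ^ 2)⁻¹) := by
      rw [integral_fderiv_apply_eq_neg_integral_mul_planeDivergence
        (contDiff_comp_weightedModulus hf hκ ht hχ hχ0)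
        (hasCompactSupport_comp_weightedModulus hf.continuous hκ.le ht hχ0)
        fun z hz => contDiffAt_logGradWeightedModulus hf hκ.ne' (hpos z hz)]
      congr 2 with z
      by_cases hz : z ∈ tsupport fun z => χ (weightedModulus f κ z)
      · rw [planeDivergence_logGradWeightedModulus hf hκ.ne' (hpos z hz), mul_left_comm]
      · simp [image_eq_zero_of_notMem_tsupport hz]
    _ = 4 * ∫ z, χ (weightedModulus f κ z) * ((1 - ‖z‖ ^ 2) ^ 2)⁻¹ := by
      rw [integral_const_mul, neg_mul, neg_neg]

end

lemma sq_integral_mul_mul_le {X : Type*} [MeasurableSpace X] {μ : Measure X} {w g h : X → ℝ}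
    (hw : ∀ x, 0 ≤ w x) (hgg : Integrable (fun x => w x * g x ^ 2) μ)
    (hgh : Integrable (fun x => w x * (g x * h x)) μ)
    (hhh : Integrable (fun x => w x * h x ^ 2) μ) :
    (∫ x, w x * (g x * h x) ∂μ) ^ 2 ≤
      (∫ x, w x * g x ^ 2 ∂μ) * ∫ x, w x * h x ^ 2 ∂μ := by
  have hquad : ∀ c : ℝ, 0 ≤ (∫ x, w x * g x ^ 2 ∂μ) * (c * c) +
      -2 * (∫ x, w x * (g x * h x) ∂μ) * c + ∫ x, w x * h x ^ 2 ∂μ := fun c => by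
    calc 0 ≤ ∫ x, w x * (c * g x - h x) ^ 2 ∂μ :=
          integral_nonneg fun x => mul_nonneg (hw x) (sq_nonneg _)
      _ = ∫ x, (w x * g x ^ 2 * (c * c) + w x * (g x * h x) * (-2 * c) + w x * h x ^ 2) ∂μ := by
          congr 1 with x
          ring
      _ = _ := by
          have hgg' := hgg.mul_const (c * c)
          have hgh' := hgh.mul_const (-2 * c)
          rw [integral_add (by exact hgg'.add hgh') hhh, integral_add hgg' hgh',
            integral_mul_const, integral_mul_const]
          ring
  have := discrim_le_zero hquad
  rw [discrim] at this
  linarith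

lemma hyperbolicMeasure_lt_top_of_isCompact {K : Set ℂ} (hK : IsCompact K) (hKb : K ⊆ ball 0 1) :
    hyperbolicMeasure K < ∞ := by
  obtain ⟨ρ, hρ1, hsub⟩ := exists_lt_subset_ball hK.isClosed hKb
  refine (measure_mono (hsub.trans (ball_subset_ball (le_max_left ρ 0)))).trans_lt ?_
  rw [hyperbolicMeasure_ball (le_max_right _ _) (max_lt hρ1 one_pos)]
  exact ENNReal.ofReal_lt_top

lemma integral_mul_inv_one_sub_normSq_sq_le {g : ℂ → ℝ} {S : Set ℂ} {c : ℝ}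
    (hS : MeasurableSet S) (hSb : S ⊆ ball 0 1) (hSt : hyperbolicMeasure S ≠ ∞) (hc : 0 ≤ c)
    (hg : ∀ z, 0 ≤ g z) (hgc : ∀ z ∈ S, g z ≤ c) (hgS : ∀ z ∉ S, g z = 0)
    (hint : Integrable fun z => g z * ((1 - ‖z‖ ^ 2) ^ 2)⁻¹) :
    ∫ z, g z * ((1 - ‖z‖ ^ 2) ^ 2)⁻¹ ≤ π * (c * hyperbolicMeasure.real S) := by
  rw [← div_le_iff₀' Real.pi_pos, div_eq_mul_inv, ← integral_mul_const,
    ← ENNReal.ofReal_le_ofReal_iff (by positivity), ENNReal.ofReal_mul hc,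
    ofReal_measureReal hSt, ofReal_integral_eq_lintegral_ofReal (hint.mul_const _)
      (ae_of_all _ fun z => by have := hg z; positivity),
    ← lintegral_indicator_one hS, lintegral_hyperbolicMeasure,
    ← lintegral_const_mul' _ _ ENNReal.ofReal_ne_top, ← lintegral_indicator measurableSet_ball]
  refine lintegral_mono fun z => ?_
  by_cases hz : z ∈ S
  · rw [indicator_of_mem (hSb hz), indicator_of_mem hz, Pi.one_apply, mul_one,
      ← ENNReal.ofReal_mul hc, mul_assoc, div_eq_mul_inv]
    exact ENNReal.ofReal_le_ofReal (mul_le_mul_of_nonneg_right (hgc z hz) (by positivity))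
  · simp [hgS z hz]

lemma exists_continuous_le_integral {a b m : ℝ} (hm : 0 ≤ m) (hmb : m < b - a) :
    ∃ ψ : C(ℝ, ℝ), (∀ s ∉ Ioo a b, ψ s = 0) ∧ (∀ s, ψ s ∈ Icc 0 1) ∧ m ≤ ∫ s in a..b, ψ s := by
  set δ := (b - a - m) / 2
  have hδ : 0 < δ := half_pos (sub_pos.2 hmb)
  have hwidth : (b - δ) - (a + δ) = m := by ring
  obtain ⟨ψ, hψ0, hψ1, hψ⟩ := exists_continuous_zero_one_of_isClosed
    (isOpen_Ioo (a := a) (b := b)).isClosed_compl (isClosed_Icc (a := a + δ) (b := b - δ))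
    (disjoint_compl_left_iff_subset.2 fun s hs => ⟨by linarith [hs.1], by linarith [hs.2]⟩)
  refine ⟨ψ, hψ0, hψ, ?_⟩
  calc m = ∫ _ in (a + δ)..(b - δ), (1 : ℝ) := by simp [hwidth]
    _ = ∫ s in (a + δ)..(b - δ), ψ s := intervalIntegral.integral_congr fun s hs =>
        (hψ1 (by rwa [uIcc_of_le (by linarith)] at hs)).symm
    _ ≤ ∫ s in a..b, ψ s :=
        intervalIntegral.integral_mono_interval (by linarith) (by linarith) (by linarith)
          (ae_of_all _ fun s => (hψ s).1) (ψ.continuous.intervalIntegrable _ _)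

/-- `χ` is a `C¹` transition from `0` to `1` across `[a, b]` whose slope lies in `[0, C]`. -/
structure IsTransition (χ : ℝ → ℝ) (a b C : ℝ) : Prop where
  contDiff : ContDiff ℝ 1 χ
  eq_zero : ∀ s ≤ a, χ s = 0
  eq_one : ∀ s, b ≤ s → χ s = 1
  deriv_mem_Icc : ∀ s, deriv χ s ∈ Icc 0 C

namespace IsTransition

variable {χ : ℝ → ℝ} {a b C : ℝ}

lemma monotone (h : IsTransition χ a b C) : Monotone χ :=
  monotone_of_deriv_nonneg (h.contDiff.differentiable one_ne_zero) fun s => (h.deriv_mem_Icc s).1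

lemma mem_Icc (h : IsTransition χ a b C) (s : ℝ) : χ s ∈ Icc 0 1 :=
  ⟨(h.eq_zero _ (min_le_right s a)).symm.trans_le (h.monotone (min_le_left s a)),
    (h.monotone (le_max_left s b)).trans_eq (h.eq_one _ (le_max_right s b))⟩

lemma deriv_eq_zero_of_le (h : IsTransition χ a b C) {s : ℝ} (hs : s ≤ a) : deriv χ s = 0 :=
  IsLocalMin.deriv_eq_zero <| .of_forall fun x => (h.eq_zero s hs).trans_le (h.mem_Icc x).1

lemma deriv_eq_zero_of_ge (h : IsTransition χ a b C) {s : ℝ} (hs : b ≤ s) : deriv χ s = 0 :=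
  IsLocalMax.deriv_eq_zero <| .of_forall fun x => (h.mem_Icc x).2.trans_eq (h.eq_one s hs).symm

end IsTransition

lemma exists_isTransition {a b C : ℝ} (hab : a < b) (hC : (b - a)⁻¹ < C) :
    ∃ χ : ℝ → ℝ, IsTransition χ a b C := by
  have hC0 : 0 < C := (inv_pos.2 (sub_pos.2 hab)).trans hC
  obtain ⟨ψ, hψ0, hψ, hm⟩ := exists_continuous_le_integral (inv_pos.2 hC0).le
    (inv_lt_of_inv_lt₀ (sub_pos.2 hab) hC)
  set m := ∫ s in a..b, ψ s
  have hm0 : 0 < m := (inv_pos.2 hC0).trans_le hm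
  have hint : ∀ x y, IntervalIntegrable ψ volume x y := ψ.continuous.intervalIntegrable
  have hzero : ∀ x y, Disjoint (uIcc x y) (Ioo a b) → ∫ s in x..y, ψ s = 0 := fun x y h => by
    rw [intervalIntegral.integral_congr fun s hs => hψ0 s (disjoint_left.1 h hs),
      intervalIntegral.integral_zero]
  have hderiv : deriv (fun s => (∫ x in a..s, ψ x) / m) = fun s => ψ s / m := funext fun s => by
    rw [deriv_div_const, ψ.continuous.deriv_integral]
  refine ⟨fun s => (∫ x in a..s, ψ x) / m, contDiff_one_iff_deriv.2 ⟨fun s => ?_, ?_⟩,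
    fun s hs => ?_, fun s hs => ?_, fun s => ?_⟩
  · exact ((ψ.continuous.integral_hasStrictDerivAt a s).hasDerivAt.div_const m).differentiableAt
  · rw [hderiv]
    fun_prop
  · rw [hzero a s, zero_div]
    rw [uIcc_of_ge hs]
    exact disjoint_left.2 fun x hx hx' => hx'.1.not_ge hx.2
  · rw [← intervalIntegral.integral_add_adjacent_intervals (hint a b) (hint b s), hzero b s,
      add_zero, div_self hm0.ne']
    rw [uIcc_of_le hs]
    exact disjoint_left.2 fun x hx hx' => hx'.2.not_ge hx.1
  · rw [hderiv]
    exact ⟨div_nonneg (hψ s).1 hm0.le, (div_le_iff₀ hm0).2 <|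
      (hψ s).2.trans ((inv_le_iff_one_le_mul₀' hC0).1 hm)⟩

/-- The hyperbolic area of the superlevel set of the weighted modulus at height `t`: the
distribution function to which the isoperimetric inequality is applied. -/
noncomputable def superlevelArea (f : ℂ → ℂ) (κ t : ℝ) : ℝ :=
  hyperbolicMeasure.real {z | t < weightedModulus f κ z}

lemma superlevelArea_nonneg (f : ℂ → ℂ) (κ t : ℝ) : 0 ≤ superlevelArea f κ t :=
  measureReal_nonneg

section Levels

variable {f : ℂ → ℂ} {κ : ℝ}

lemma hyperbolicMeasure_superlevel_ne_top (hf : Continuous f) (hκ : 0 ≤ κ) {t : ℝ} (ht : 0 < t) :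
    hyperbolicMeasure {z | t < weightedModulus f κ z} ≠ ∞ := by
  have hsub : {z | t < weightedModulus f κ z} ⊆ {z | t ≤ weightedModulus f κ z} :=
    fun z (hz : t < _) => hz.le
  exact ((measure_mono hsub).trans_lt (hyperbolicMeasure_lt_top_of_isCompact
    (isCompact_le_weightedModulus hf hκ ht)
    fun z hz => mem_ball_of_weightedModulus_pos (ht.trans_le hz))).ne

lemma superlevelArea_anti (hf : Continuous f) (hκ : 0 ≤ κ) {s t : ℝ} (hs : 0 < s) (hst : s ≤ t) :
    superlevelArea f κ t ≤ superlevelArea f κ s :=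
  measureReal_mono (fun _ hz => hst.trans_lt hz) (hyperbolicMeasure_superlevel_ne_top hf hκ hs)

lemma measurableSet_superlevel (hf : Continuous f) (hκ : 0 ≤ κ) (t : ℝ) :
    MeasurableSet {z | t < weightedModulus f κ z} :=
  measurableSet_lt measurable_const (continuous_weightedModulus hf hκ).measurable

lemma measureReal_superlevel_diff (hf : Continuous f) (hκ : 0 ≤ κ) {s t : ℝ} (hs : 0 < s)
    (hst : s ≤ t) :
    hyperbolicMeasure.real ({z | s < weightedModulus f κ z} \ {z | t < weightedModulus f κ z}) =
      superlevelArea f κ s - superlevelArea f κ t :=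
  measureReal_sdiff (fun _ hz => hst.trans_lt hz) (measurableSet_superlevel hf hκ t)
    (hyperbolicMeasure_superlevel_ne_top hf hκ hs)

variable {χ : ℝ → ℝ} {a b C : ℝ}

lemma integrable_comp_weightedModulus_mul {η : ℝ → ℝ} {g : ℂ → ℝ} (hf : Continuous f)
    (hκ : 0 ≤ κ) (ha : 0 < a) (hη : Continuous η) (hηa : ∀ s ≤ a, η s = 0)
    (hg : ∀ z, 0 < weightedModulus f κ z → ContinuousAt g z) :
    Integrable fun z => η (weightedModulus f κ z) * g z :=
  integrable_of_isCompact_of_continuousAt (isCompact_le_weightedModulus hf hκ ha)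
    (fun z hz => by rw [hηa _ (not_le.1 hz).le, zero_mul]) fun z hz =>
      (hη.comp (continuous_weightedModulus hf hκ)).continuousAt.mul (hg z (ha.trans_le hz))

lemma continuousAt_inv_one_sub_normSq {z : ℂ} (hz : z ∈ ball (0 : ℂ) 1) :
    ContinuousAt (fun z : ℂ => (1 - ‖z‖ ^ 2)⁻¹) z :=
  ContinuousAt.inv₀ (by fun_prop) (one_sub_normSq_pos hz).ne'

lemma continuousAt_inv_one_sub_normSq_sq {z : ℂ} (hz : z ∈ ball (0 : ℂ) 1) :
    ContinuousAt (fun z : ℂ => ((1 - ‖z‖ ^ 2) ^ 2)⁻¹) z :=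
  ContinuousAt.inv₀ (by fun_prop) (pow_pos (one_sub_normSq_pos hz) 2).ne'

lemma isTransition_deriv_mul_nonneg (hχ : IsTransition χ a b C) (ha : 0 < a) (s : ℝ) :
    0 ≤ deriv χ s * s := by
  rcases le_or_gt s a with hs | hs
  · rw [hχ.deriv_eq_zero_of_le hs, zero_mul]
  · exact mul_nonneg (hχ.deriv_mem_Icc s).1 (ha.trans hs).le

lemma integral_deriv_comp_mul_normSq_logGrad_le (hf : Differentiable ℂ f) (hκ : 0 < κ)
    (ha : 0 < a) (hχ : IsTransition χ a b C) :
    ∫ z, deriv χ (weightedModulus f κ z) * weightedModulus f κ z *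
      ‖logGradWeightedModulus f κ z‖ ^ 2 ≤ 4 * (π * superlevelArea f κ a) := by
  rw [integral_deriv_comp_weightedModulus hf hκ ha hχ.contDiff hχ.eq_zero]
  refine mul_le_mul_of_nonneg_left ?_ zero_le_four
  rw [← one_mul (superlevelArea f κ a)]
  exact integral_mul_inv_one_sub_normSq_sq_le (measurableSet_superlevel hf.continuous hκ.le a)
    (fun z hz => mem_ball_of_weightedModulus_pos (ha.trans hz))
    (hyperbolicMeasure_superlevel_ne_top hf.continuous hκ.le ha) zero_le_one
    (fun z => (hχ.mem_Icc _).1) (fun z _ => (hχ.mem_Icc _).2)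
    (fun z hz => hχ.eq_zero _ (not_lt.1 hz))
    (integrable_comp_weightedModulus_mul hf.continuous hκ.le ha hχ.contDiff.continuous hχ.eq_zero
      fun z hz => continuousAt_inv_one_sub_normSq_sq (mem_ball_of_weightedModulus_pos hz))

lemma integral_deriv_comp_mul_inv_le (hf : Continuous f) (hκ : 0 ≤ κ) (ha : 0 < a)
    (hab : a < b) (hC : 0 ≤ C) (hχ : IsTransition χ a b C) :
    ∫ z, deriv χ (weightedModulus f κ z) * weightedModulus f κ z * ((1 - ‖z‖ ^ 2) ^ 2)⁻¹ ≤
      π * (C * b * (superlevelArea f κ a - superlevelArea f κ b)) := by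
  have hb : 0 < b := ha.trans hab
  rw [← measureReal_superlevel_diff hf hκ ha hab.le]
  refine integral_mul_inv_one_sub_normSq_sq_le
    ((measurableSet_superlevel hf hκ a).diff (measurableSet_superlevel hf hκ b))
    (fun z hz => mem_ball_of_weightedModulus_pos (ha.trans hz.1))
    (measure_ne_top_of_subset sdiff_subset (hyperbolicMeasure_superlevel_ne_top hf hκ ha))
    (mul_nonneg hC hb.le) (fun z => isTransition_deriv_mul_nonneg hχ ha _) (fun z hz => ?_)
    (fun z hz => ?_) ?_
  · exact mul_le_mul (hχ.deriv_mem_Icc _).2 (not_lt.1 hz.2) (ha.trans hz.1).le hC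
  · rcases le_or_gt (weightedModulus f κ z) a with hza | hza
    · rw [hχ.deriv_eq_zero_of_le hza, zero_mul]
    · have hzb : b ≤ weightedModulus f κ z := (not_lt.1 fun h => hz ⟨hza, h.not_gt⟩)
      rw [hχ.deriv_eq_zero_of_ge hzb, zero_mul]
  · exact integrable_comp_weightedModulus_mul (η := fun s => deriv χ s * s) hf hκ ha
      ((hχ.contDiff.continuous_deriv le_rfl).mul continuous_id)
      (fun s hs => by rw [hχ.deriv_eq_zero_of_le hs, zero_mul])
      fun z hz => continuousAt_inv_one_sub_normSq_sq (mem_ball_of_weightedModulus_pos hz)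

lemma two_pi_mul_sqrt_superlevelArea_le (hf : Differentiable ℂ f) (hκ : 0 < κ) (ha : 0 < a)
    (hχ : IsTransition χ a b C) :
    2 * √(superlevelArea f κ b * (1 + superlevelArea f κ b)) * π ≤
      ∫ z, deriv χ (weightedModulus f κ z) * weightedModulus f κ z *
        (‖logGradWeightedModulus f κ z‖ * (1 - ‖z‖ ^ 2)⁻¹) := by
  have hiso := two_mul_sqrt_hyperbolicMeasure_le
    (contDiff_comp_weightedModulus hf hκ ha hχ.contDiff hχ.eq_zero)
    (hasCompactSupport_comp_weightedModulus hf.continuous hκ.le ha hχ.eq_zero)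
    (fun z hz => mem_ball_of_weightedModulus_pos (ha.trans_le
      (tsupport_comp_weightedModulus_subset hf.continuous hκ.le hχ.eq_zero hz)))
    (fun z => (hχ.mem_Icc _).1) (measurableSet_superlevel hf.continuous hκ.le b)
    (fun z hz => hχ.eq_one _ (le_of_lt hz))
  rw [le_div_iff₀ Real.pi_pos] at hiso
  refine hiso.trans_eq (integral_congr_ae (.of_forall fun z => ?_))
  beta_reduce
  rw [fderiv_comp_weightedModulus hf hκ ha (hχ.contDiff.differentiable one_ne_zero) hχ.eq_zero,
    norm_smul, innerSL_apply_norm, Real.norm_of_nonneg (isTransition_deriv_mul_nonneg hχ ha _),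
    div_eq_mul_inv, mul_assoc]

lemma superlevelArea_mul_le_of_isTransition (hf : Differentiable ℂ f) (hκ : 0 < κ) (ha : 0 < a)
    (hab : a < b) (hC : 0 ≤ C) (hχ : IsTransition χ a b C) :
    superlevelArea f κ b * (1 + superlevelArea f κ b) ≤
      C * b * (superlevelArea f κ a * (superlevelArea f κ a - superlevelArea f κ b)) := by
  have hη : Continuous fun s => deriv χ s * s :=
    (hχ.contDiff.continuous_deriv le_rfl).mul continuous_id
  have hηa : ∀ s ≤ a, deriv χ s * s = 0 := fun s hs => by
    rw [hχ.deriv_eq_zero_of_le hs, zero_mul]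
  have hη0 := isTransition_deriv_mul_nonneg hχ ha
  have hG : ∀ z, 0 < weightedModulus f κ z →
      ContinuousAt (fun z => ‖logGradWeightedModulus f κ z‖) z := fun z hz =>
    (contDiffAt_logGradWeightedModulus hf hκ.ne' hz).continuousAt.norm
  have hinv : ∀ z, 0 < weightedModulus f κ z → ContinuousAt (fun z : ℂ => (1 - ‖z‖ ^ 2)⁻¹) z :=
    fun z hz => continuousAt_inv_one_sub_normSq (mem_ball_of_weightedModulus_pos hz)
  have hCS := sq_integral_mul_mul_le (fun z => hη0 (weightedModulus f κ z))
    (integrable_comp_weightedModulus_mul hf.continuous hκ.le ha hη hηa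
      fun z hz => (hG z hz).pow 2)
    (integrable_comp_weightedModulus_mul hf.continuous hκ.le ha hη hηa
      fun z hz => (hG z hz).mul (hinv z hz))
    (integrable_comp_weightedModulus_mul hf.continuous hκ.le ha hη hηa
      fun z hz => (hinv z hz).pow 2)
  have hA := integral_deriv_comp_mul_normSq_logGrad_le hf hκ ha hχ
  have hB := integral_deriv_comp_mul_inv_le hf.continuous hκ.le ha hab hC hχ
  simp only [inv_pow] at hCS
  set x := superlevelArea f κ a
  set y := superlevelArea f κ b
  have hx := superlevelArea_nonneg f κ a
  have hy : 0 ≤ y * (1 + y) := by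
    have := superlevelArea_nonneg f κ b
    positivity
  refine le_of_mul_le_mul_left (a := 4 * π ^ 2) ?_ (by positivity)
  calc 4 * π ^ 2 * (y * (1 + y)) = (2 * √(y * (1 + y)) * π) ^ 2 := by
        rw [mul_pow, mul_pow, Real.sq_sqrt hy]
        ring
    _ ≤ _ := pow_le_pow_left₀ (by positivity)
        (two_pi_mul_sqrt_superlevelArea_le hf hκ ha hχ) 2
    _ ≤ _ := hCS
    _ ≤ 4 * (π * x) * (π * (C * b * (x - y))) := mul_le_mul hA hB
        (integral_nonneg fun z => mul_nonneg (hη0 _) (by positivity))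
        (mul_nonneg zero_le_four (mul_nonneg Real.pi_pos.le hx))
    _ = 4 * π ^ 2 * (C * b * (x * (x - y))) := by ring

theorem sub_mul_superlevelArea_mul_le (hf : Differentiable ℂ f) (hκ : 0 < κ) (ha : 0 < a)
    (hab : a ≤ b) :
    (b - a) * (superlevelArea f κ b * (1 + superlevelArea f κ b)) ≤
      b * (superlevelArea f κ a * (superlevelArea f κ a - superlevelArea f κ b)) := by
  rcases hab.eq_or_lt with rfl | hlt
  · simp
  rw [← le_inv_mul_iff₀ (sub_pos.2 hlt), ← mul_assoc]
  set K := superlevelArea f κ a * (superlevelArea f κ a - superlevelArea f κ b)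
  have hlim : Tendsto (fun C => C * b * K) (𝓝[>] (b - a)⁻¹) (𝓝 ((b - a)⁻¹ * b * K)) :=
    (Continuous.tendsto (by fun_prop) _).mono_left nhdsWithin_le_nhds
  refine ge_of_tendsto hlim (eventually_nhdsWithin_of_forall fun C hC => ?_)
  obtain ⟨χ, hχ⟩ := exists_isTransition hlt hC
  exact superlevelArea_mul_le_of_isTransition hf hκ ha hlt
    ((inv_pos.2 (sub_pos.2 hlt)).le.trans hC.le) hχ

end Levels

/-- Over an equipartition into `N` steps the increments of `F` add up to
`C * (b - a) / N * (ν a - ν b)`, which tends to `0`. -/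
lemma le_of_forall_sub_le_mul {F ν : ℝ → ℝ} {a b C : ℝ} (hab : a ≤ b)
    (h : ∀ s t, a ≤ s → s ≤ t → t ≤ b → F t - F s ≤ C * ((t - s) * (ν s - ν t))) :
    F b ≤ F a := by
  have hN : ∀ N : ℕ, F b - F a ≤ C * (b - a) * (ν a - ν b) / ((N : ℝ) + 1) := fun N => by
    set x : ℕ → ℝ := fun i => a + i * ((b - a) / (N + 1)) with hx
    have hx0 : x 0 = a := by simp [hx]
    have hxN : x (N + 1) = b := by
      simp only [hx, Nat.cast_add, Nat.cast_one]
      field_simp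
      ring
    have hstep : ∀ i, x (i + 1) - x i = (b - a) / (N + 1) := fun i => by
      simp only [hx, Nat.cast_add, Nat.cast_one]
      ring
    have hmono : Monotone x := monotone_nat_of_le_succ fun i => sub_nonneg.1 <|
      (hstep i).symm ▸ div_nonneg (sub_nonneg.2 hab) (by positivity)
    calc F b - F a = ∑ i ∈ Finset.range (N + 1), (F (x (i + 1)) - F (x i)) := by
          rw [Finset.sum_range_sub fun i => F (x i), hx0, hxN]
      _ ≤ ∑ i ∈ Finset.range (N + 1), C * ((b - a) / (N + 1) * (ν (x i) - ν (x (i + 1)))) :=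
          Finset.sum_le_sum fun i hi => hstep i ▸ h _ _ (hx0.ge.trans (hmono i.zero_le))
            (hmono i.le_succ) ((hmono (Finset.mem_range.1 hi)).trans hxN.le)
      _ = C * (b - a) * (ν a - ν b) / (N + 1) := by
          rw [← Finset.mul_sum, ← Finset.mul_sum, Finset.sum_range_sub' fun i => ν (x i), hx0, hxN]
          ring
  refine sub_nonpos.1 (ge_of_tendsto' (x := atTop) ?_ hN)
  exact tendsto_const_nhds.div_atTop 
    (tendsto_atTop_add_const_right atTop 1 tendsto_natCast_atTop_atTop)

lemma mul_one_add_sub_mul_one_add_le {s t x y m M : ℝ} (hst : s ≤ t) (hm : 0 < m)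
    (hmy : m ≤ y) (hyx : y ≤ x) (hxM : x ≤ M)
    (h : (t - s) * (y * (1 + y)) ≤ t * (x * (x - y))) :
    t * (1 + y) - s * (1 + x) ≤ (1 + 2 * M) / m * ((t - s) * (x - y)) := by
  have hd : 0 ≤ x - y := sub_nonneg.2 hyx
  have hδ : 0 ≤ t - s := sub_nonneg.2 hst
  have hrhs : 0 ≤ (t - s) * (x - y) := mul_nonneg hδ hd
  rw [div_mul_eq_mul_div, le_div_iff₀ hm]
  rcases le_total (t * (1 + y) - s * (1 + x)) 0 with hneg | hpos
  · exact (mul_nonpos_of_nonpos_of_nonneg hneg hm.le).trans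
      (mul_nonneg (by linarith) hrhs)
  have hsd : s * (x - y) ≤ (t - s) * (1 + y) := by linarith
  calc (t * (1 + y) - s * (1 + x)) * m ≤ (t * (1 + y) - s * (1 + x)) * y := by gcongr
    _ = (t - s) * (y * (1 + y)) - s * (y * (x - y)) := by ring
    _ ≤ t * (x * (x - y)) - s * (y * (x - y)) := by gcongr
    _ = (t - s) * x * (x - y) + s * (x - y) * (x - y) := by ring
    _ ≤ (t - s) * x * (x - y) + (t - s) * (1 + y) * (x - y) := by gcongr
    _ = (1 + x + y) * ((t - s) * (x - y)) := by ring
    _ ≤ (1 + 2 * M) * ((t - s) * (x - y)) :=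
        mul_le_mul_of_nonneg_right (by linarith) hrhs

theorem mul_one_add_superlevelArea_anti {f : ℂ → ℂ} {κ a b : ℝ} (hf : Differentiable ℂ f)
    (hκ : 0 < κ) (ha : 0 < a) (hab : a ≤ b) (hb : 0 < superlevelArea f κ b) :
    b * (1 + superlevelArea f κ b) ≤ a * (1 + superlevelArea f κ a) :=
  le_of_forall_sub_le_mul (F := fun t => t * (1 + superlevelArea f κ t)) hab
    fun _ _ has hst htb =>
      have hs := ha.trans_le has
      mul_one_add_sub_mul_one_add_le hst hb
        (superlevelArea_anti hf.continuous hκ.le (hs.trans_le hst) htb)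
        (superlevelArea_anti hf.continuous hκ.le hs hst)
        (superlevelArea_anti hf.continuous hκ.le ha has)
        (sub_mul_superlevelArea_mul_le hf hκ hs hst)

/-! ### Contractive inclusions on the disc -/

/-- The superlevel area of the constant function `f = l ^ κ⁻¹`, which is extremal in the
isoperimetric inequality. -/
noncomputable def extremalArea (l t : ℝ) : ℝ := max (l / t - 1) 0

lemma extremalArea_nonneg (l t : ℝ) : 0 ≤ extremalArea l t := le_max_right _ _

@[fun_prop]
lemma measurable_extremalArea (l : ℝ) : Measurable (extremalArea l) := by
  unfold extremalArea
  fun_prop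

section ExtremalArea

variable {l r t : ℝ}

lemma extremalArea_of_le (ht : 0 < t) (htl : t ≤ l) : extremalArea l t = l / t - 1 :=
  max_eq_left (sub_nonneg.2 ((one_le_div ht).2 htl))

lemma extremalArea_of_ge (ht : 0 < t) (hlt : l ≤ t) : extremalArea l t = 0 :=
  max_eq_right (sub_nonpos.2 ((div_le_one ht).2 hlt))

lemma integral_mul_rpow_sub_rpow (hr : 1 < r) (hl : 0 ≤ l) :
    ∫ t in (0 : ℝ)..l, (l * t ^ (r - 2) - t ^ (r - 1)) = l ^ r / (r * (r - 1)) := by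
  have hpow : l ^ r = l * l ^ (r - 1) := by
    rw [mul_comm, ← Real.rpow_add_one' hl (by linarith), sub_add_cancel]
  rw [intervalIntegral.integral_sub
    ((intervalIntegral.intervalIntegrable_rpow' (by linarith)).const_mul _)
    (intervalIntegral.intervalIntegrable_rpow' (by linarith)),
    intervalIntegral.integral_const_mul, integral_rpow (.inl (by linarith)),
    integral_rpow (.inl (by linarith)), show r - 2 + 1 = r - 1 by ring, sub_add_cancel,
    Real.zero_rpow (by linarith), Real.zero_rpow (by linarith), sub_zero, sub_zero, hpow]
  have hr0 : r ≠ 0 := by linarith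
  have hr1 : r - 1 ≠ 0 := by linarith
  field_simp
  ring

lemma extremalArea_mul_rpow (ht : 0 < t) (htl : t ≤ l) :
    extremalArea l t * t ^ (r - 1) = l * t ^ (r - 2) - t ^ (r - 1) := by
  have hpow : t ^ (r - 1) = t ^ (r - 2) * t := by
    rw [← Real.rpow_add_one ht.ne']
    congr 1
    ring
  rw [extremalArea_of_le ht htl, hpow]
  field_simp

lemma lintegral_extremalArea_mul_rpow (hr : 1 < r) (hl : 0 ≤ l) :
    ∫⁻ t in Ioi (0 : ℝ), ENNReal.ofReal (extremalArea l t) * ENNReal.ofReal (t ^ (r - 1)) =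
      ENNReal.ofReal (l ^ r / (r * (r - 1))) := by
  have hint : IntervalIntegrable (fun t : ℝ => l * t ^ (r - 2) - t ^ (r - 1)) volume 0 l :=
    ((intervalIntegral.intervalIntegrable_rpow' (by linarith)).const_mul _).sub
      (intervalIntegral.intervalIntegrable_rpow' (by linarith))
  have htail : ∫⁻ t in Ioi l,
      ENNReal.ofReal (extremalArea l t) * ENNReal.ofReal (t ^ (r - 1)) = 0 :=
    setLIntegral_eq_zero measurableSet_Ioi fun t ht => by
      rw [extremalArea_of_ge (hl.trans_lt ht) (le_of_lt ht), ENNReal.ofReal_zero, zero_mul,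
        Pi.zero_apply]
  rw [← Ioc_union_Ioi_eq_Ioi hl, lintegral_union measurableSet_Ioi Ioc_disjoint_Ioi_same, htail,
    add_zero, ← integral_mul_rpow_sub_rpow hr hl, intervalIntegral.integral_of_le hl,
    ofReal_integral_eq_lintegral_ofReal hint.1 ((ae_restrict_iff' measurableSet_Ioc).2 <|
      .of_forall fun t ht => ?_)]
  · refine setLIntegral_congr_fun measurableSet_Ioc fun t ht => ?_
    rw [← ENNReal.ofReal_mul (extremalArea_nonneg l t), extremalArea_mul_rpow ht.1 ht.2]
  · refine (mul_nonneg ?_ ?_).trans_eq (extremalArea_mul_rpow ht.1 ht.2)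
    exacts [extremalArea_nonneg l t, Real.rpow_nonneg ht.1.le _]

end ExtremalArea

/-- The weight `t ^ (b - a) - T ^ (b - a)` changes sign where `y - x` does, so the product of the
two is nonnegative. -/
lemma mul_rpow_add_mul_le_of_crossing {a b t T x y : ℝ} (hab : a ≤ b) (ht : 0 < t) (hT : 0 ≤ T)
    (hright : T < t → x ≤ y) (hleft : t < T → y ≤ x) :
    x * t ^ (b - 1) + T ^ (b - a) * (y * t ^ (a - 1)) ≤
      y * t ^ (b - 1) + T ^ (b - a) * (x * t ^ (a - 1)) := by
  have hpow : t ^ (b - 1) = t ^ (b - a) * t ^ (a - 1) := by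
    rw [← Real.rpow_add ht, sub_add_sub_cancel]
  have hcross : x * t ^ (b - a) + y * T ^ (b - a) ≤ y * t ^ (b - a) + x * T ^ (b - a) := by
    rcases lt_trichotomy t T with hlt | rfl | hgt
    · linarith [mul_add_mul_le_mul_add_mul (hleft hlt)
        (Real.rpow_le_rpow ht.le hlt.le (sub_nonneg.2 hab))]
    · exact (add_comm _ _).le
    · linarith [mul_add_mul_le_mul_add_mul (hright hgt)
        (Real.rpow_le_rpow hT hgt.le (sub_nonneg.2 hab))]
  rw [hpow]
  linarith [mul_le_mul_of_nonneg_right hcross (Real.rpow_nonneg ht.le (a - 1))]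

lemma lintegral_mul_rpow_le_of_crossing {ν ν₀ : ℝ → ℝ} {a b T : ℝ} (hab : a ≤ b) (hT : 0 ≤ T)
    (hν : ∀ t, 0 ≤ ν t) (hν₀ : ∀ t, 0 ≤ ν₀ t) (hmeas : Measurable ν₀)
    (hright : ∀ t, T < t → ν t ≤ ν₀ t) (hleft : ∀ t, 0 < t → t < T → ν₀ t ≤ ν t)
    (hfin : ∫⁻ t in Ioi (0 : ℝ), ENNReal.ofReal (ν₀ t) * ENNReal.ofReal (t ^ (a - 1)) ≠ ∞)
    (h : ∫⁻ t in Ioi (0 : ℝ), ENNReal.ofReal (ν t) * ENNReal.ofReal (t ^ (a - 1)) ≤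
      ∫⁻ t in Ioi (0 : ℝ), ENNReal.ofReal (ν₀ t) * ENNReal.ofReal (t ^ (a - 1))) :
    ∫⁻ t in Ioi (0 : ℝ), ENNReal.ofReal (ν t) * ENNReal.ofReal (t ^ (b - 1)) ≤
      ∫⁻ t in Ioi (0 : ℝ), ENNReal.ofReal (ν₀ t) * ENNReal.ofReal (t ^ (b - 1)) := by
  set c := ENNReal.ofReal (T ^ (b - a))
  have hpoint : ∀ t ∈ Ioi (0 : ℝ),
      ENNReal.ofReal (ν t) * ENNReal.ofReal (t ^ (b - 1)) +
          c * (ENNReal.ofReal (ν₀ t) * ENNReal.ofReal (t ^ (a - 1))) ≤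
        ENNReal.ofReal (ν₀ t) * ENNReal.ofReal (t ^ (b - 1)) +
          c * (ENNReal.ofReal (ν t) * ENNReal.ofReal (t ^ (a - 1))) := fun t ht => by
    have ht0 : 0 < t := ht
    have hνt := hν t
    have hν₀t := hν₀ t
    rw [← ENNReal.ofReal_mul hνt, ← ENNReal.ofReal_mul hν₀t, ← ENNReal.ofReal_mul hν₀t,
      ← ENNReal.ofReal_mul hνt, ← ENNReal.ofReal_mul (by positivity),
      ← ENNReal.ofReal_mul (by positivity), ← ENNReal.ofReal_add (by positivity) (by positivity),
      ← ENNReal.ofReal_add (by positivity) (by positivity)]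
    exact ENNReal.ofReal_le_ofReal
      (mul_rpow_add_mul_le_of_crossing hab ht0 hT (hright t) (hleft t ht0))
  have hsum := setLIntegral_mono' (μ := volume) measurableSet_Ioi hpoint
  rw [lintegral_add_right _ (by fun_prop), lintegral_add_left (by fun_prop),
    lintegral_const_mul' _ _ ENNReal.ofReal_ne_top,
    lintegral_const_mul' _ _ ENNReal.ofReal_ne_top] at hsum
  exact (ENNReal.add_le_add_iff_right (ENNReal.mul_ne_top ENNReal.ofReal_ne_top hfin)).1
    (hsum.trans (by gcongr))

section Contractive

variable {f : ℂ → ℂ} {κ : ℝ}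

lemma ae_weightedModulus_nonneg : 0 ≤ᵐ[hyperbolicMeasure] weightedModulus f κ := by
  filter_upwards [ae_hyperbolicMeasure_mem_ball] with z hz
  exact mul_nonneg (by positivity) (one_sub_normSq_pos hz).le

lemma exists_weightedModulus_le (hf : Continuous f) (hκ : 0 ≤ κ) :
    ∃ B, ∀ z, weightedModulus f κ z ≤ B := by
  obtain ⟨B, hB⟩ := (isCompact_closedBall (0 : ℂ) 1).bddAbove_image
    (continuous_weightedModulus hf hκ).continuousOn
  refine ⟨max B 0, fun z => ?_⟩
  rcases le_or_gt (weightedModulus f κ z) 0 with hz | hz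
  · exact hz.trans (le_max_right _ _)
  · exact (hB ⟨z, ball_subset_closedBall (mem_ball_of_weightedModulus_pos hz), rfl⟩).trans
      (le_max_left _ _)

lemma superlevelArea_eq_zero {B t : ℝ} (hB : ∀ z, weightedModulus f κ z ≤ B) (ht : B ≤ t) :
    superlevelArea f κ t = 0 := by
  have hempty : {z | t < weightedModulus f κ z} = ∅ :=
    eq_empty_of_forall_notMem fun z hz => ((hB z).trans ht).not_gt hz
  rw [superlevelArea, hempty, measureReal_empty]

lemma exists_superlevelArea_crossing (hf : Differentiable ℂ f) (hκ : 0 < κ) (l : ℝ) :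
    ∃ T, 0 ≤ T ∧ (∀ t, T < t → superlevelArea f κ t ≤ extremalArea l t) ∧
      ∀ s, 0 < s → s < T → extremalArea l s ≤ superlevelArea f κ s := by
  set S : Set ℝ := {t | 0 < t ∧ extremalArea l t < superlevelArea f κ t}
  obtain ⟨B, hB⟩ := exists_weightedModulus_le hf.continuous hκ.le
  have hbdd : BddAbove S := ⟨B, fun t ht => le_of_not_gt fun hBt =>
    ((extremalArea_nonneg l t).trans_lt ht.2).ne' (superlevelArea_eq_zero hB hBt.le)⟩
  have hT : 0 ≤ sSup S := Real.sSup_nonneg fun t ht => ht.1.le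
  refine ⟨sSup S, hT, fun t ht => le_of_not_gt fun hlt =>
    ht.not_ge (le_csSup hbdd ⟨hT.trans_lt ht, hlt⟩), fun s hs hsT => ?_⟩
  have hne : S.Nonempty := nonempty_iff_ne_empty.2 fun h => by
    rw [h, Real.sSup_empty] at hsT
    exact hs.not_gt hsT
  obtain ⟨t, ⟨ht, hlt⟩, hst⟩ := exists_lt_of_lt_csSup hne hsT
  have hanti := mul_one_add_superlevelArea_anti hf hκ hs hst.le
    ((extremalArea_nonneg l t).trans_lt hlt)
  have hl := (le_max_left _ _).trans_lt hlt
  rw [sub_lt_iff_lt_add', div_lt_iff₀ ht] at hl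
  refine max_le ?_ (superlevelArea_nonneg f κ s)
  rw [sub_le_iff_le_add', div_le_iff₀ hs]
  linarith

lemma lintegral_weightedModulus_rpow (hf : Continuous f) (hκ : 0 ≤ κ) {r : ℝ} (hr : 0 < r) :
    ∫⁻ z, ENNReal.ofReal (weightedModulus f κ z ^ r) ∂hyperbolicMeasure =
      ENNReal.ofReal r * ∫⁻ t in Ioi (0 : ℝ),
        ENNReal.ofReal (superlevelArea f κ t) * ENNReal.ofReal (t ^ (r - 1)) := by
  rw [lintegral_rpow_eq_lintegral_meas_lt_mul _ ae_weightedModulus_nonneg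
    (continuous_weightedModulus hf hκ).measurable.aemeasurable hr]
  congr 1
  refine setLIntegral_congr_fun measurableSet_Ioi fun t ht => ?_
  rw [superlevelArea, ofReal_measureReal (hyperbolicMeasure_superlevel_ne_top hf hκ ht)]

theorem lintegral_weightedModulus_rpow_le (hf : Differentiable ℂ f) (hκ : 0 < κ) {a b l : ℝ}
    (ha : 1 < a) (hab : a ≤ b) (hl : 0 ≤ l)
    (h : ENNReal.ofReal (a - 1) *
      ∫⁻ z, ENNReal.ofReal (weightedModulus f κ z ^ a) ∂hyperbolicMeasure ≤
        ENNReal.ofReal (l ^ a)) :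
    ENNReal.ofReal (b - 1) *
      ∫⁻ z, ENNReal.ofReal (weightedModulus f κ z ^ b) ∂hyperbolicMeasure ≤
        ENNReal.ofReal (l ^ b) := by
  obtain ⟨T, hT, hright, hleft⟩ := exists_superlevelArea_crossing hf hκ l
  have hmoment : ∀ r : ℝ, 1 < r → (ENNReal.ofReal (r - 1) *
      ∫⁻ z, ENNReal.ofReal (weightedModulus f κ z ^ r) ∂hyperbolicMeasure ≤
        ENNReal.ofReal (l ^ r) ↔
      ∫⁻ t in Ioi (0 : ℝ), ENNReal.ofReal (superlevelArea f κ t) * ENNReal.ofReal (t ^ (r - 1)) ≤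
        ∫⁻ t in Ioi (0 : ℝ), ENNReal.ofReal (extremalArea l t) * ENNReal.ofReal (t ^ (r - 1))) :=
    fun r hr => by
      have hr0 : 0 < r := one_pos.trans hr
      have hr1 : 0 < r * (r - 1) := mul_pos hr0 (sub_pos.2 hr)
      rw [lintegral_weightedModulus_rpow hf.continuous hκ.le hr0,
        lintegral_extremalArea_mul_rpow hr hl, ENNReal.ofReal_div_of_pos hr1,
        ENNReal.le_div_iff_mul_le (.inl (ENNReal.ofReal_pos.2 hr1).ne')
          (.inl ENNReal.ofReal_ne_top), ENNReal.ofReal_mul hr0.le, ← mul_assoc, mul_comm,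
        mul_comm (ENNReal.ofReal r)]
  rw [hmoment b (ha.trans_le hab)]
  rw [hmoment a ha] at h
  refine lintegral_mul_rpow_le_of_crossing hab hT (superlevelArea_nonneg f κ)
    (extremalArea_nonneg l) (measurable_extremalArea l) hright hleft ?_ h
  rw [lintegral_extremalArea_mul_rpow ha hl]
  exact ENNReal.ofReal_ne_top

end Contractive

lemma lintegral_bergmanMeasure (α : ℝ) (g : ℂ → ℝ≥0∞) :
    ∫⁻ z, g z ∂bergmanMeasure α = ∫⁻ z in ball (0 : ℂ) 1,
      ENNReal.ofReal ((α - 1) * (1 - ‖z‖ ^ 2) ^ (α - 2) / π) * g z := by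
  rw [bergmanMeasure, lintegral_withDensity_eq_lintegral_mul_non_measurable₀ _ (by fun_prop)
    (ae_of_all _ fun _ => ENNReal.ofReal_lt_top)]
  rfl

lemma enorm_rpow_eq_ofReal {E : Type*} [SeminormedAddCommGroup E] (x : E) {p : ℝ} (hp : 0 ≤ p) :
    ‖x‖ₑ ^ p = ENNReal.ofReal (‖x‖ ^ p) := by
  rw [← ofReal_norm, ENNReal.ofReal_rpow_of_nonneg (norm_nonneg _) hp]

lemma lintegral_enorm_rpow_bergmanMeasure (f : ℂ → ℂ) {α p : ℝ} (hα : 1 ≤ α) (hp : 0 ≤ p) :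
    ∫⁻ z, ‖f z‖ₑ ^ p ∂bergmanMeasure α = ENNReal.ofReal (α - 1) *
      ∫⁻ z, ENNReal.ofReal (weightedModulus f (p / α) z ^ α) ∂hyperbolicMeasure := by
  rw [lintegral_bergmanMeasure, lintegral_hyperbolicMeasure,
    ← lintegral_const_mul' _ _ ENNReal.ofReal_ne_top]
  refine setLIntegral_congr_fun measurableSet_ball fun z hz => ?_
  have hα1 : 0 ≤ α - 1 := sub_nonneg.2 hα
  have hz1 := one_sub_normSq_pos hz
  rw [enorm_rpow_eq_ofReal _ hp, ← ENNReal.ofReal_mul (by positivity),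
    ← ENNReal.ofReal_mul (by positivity), ← ENNReal.ofReal_mul hα1, weightedModulus,
    Real.mul_rpow (by positivity) hz1.le, ← Real.rpow_mul (norm_nonneg _),
    div_mul_cancel₀ _ (by linarith), Real.rpow_sub hz1, Real.rpow_two]
  congr 1
  ring

theorem lintegral_bergmanMeasure_contractive {f : ℂ → ℂ} (hf : Differentiable ℂ f) {α p q : ℝ}
    (hα : 1 < α) (hp : 0 < p) (hpq : p ≤ q) :
    ∫⁻ z, ‖f z‖ₑ ^ q ∂bergmanMeasure (α * q / p) ≤
      (∫⁻ z, ‖f z‖ₑ ^ p ∂bergmanMeasure α) ^ (q / p) := by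
  have hα0 : 0 < α := one_pos.trans hα
  have hq : 0 < q := hp.trans_le hpq
  have hb : α ≤ α * q / p := by
    rw [mul_div_assoc]
    exact le_mul_of_one_le_right hα0.le ((one_le_div hp).2 hpq)
  have hκ : q / (α * q / p) = p / α := by field_simp
  rw [lintegral_enorm_rpow_bergmanMeasure f (hα.le.trans hb) hq.le, hκ,
    lintegral_enorm_rpow_bergmanMeasure f hα.le hp.le]
  set J := ENNReal.ofReal (α - 1) *
    ∫⁻ z, ENNReal.ofReal (weightedModulus f (p / α) z ^ α) ∂hyperbolicMeasure
  rcases eq_or_ne J ∞ with hJ | hJ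
  · rw [hJ, ENNReal.top_rpow_of_pos (div_pos hq hp)]
    exact le_top
  have hJ0 : 0 ≤ J.toReal := ENNReal.toReal_nonneg
  refine (lintegral_weightedModulus_rpow_le hf (div_pos hp hα0) hα hb
    (Real.rpow_nonneg hJ0 α⁻¹) ?_).trans_eq ?_
  · rw [← Real.rpow_mul hJ0, inv_mul_cancel₀ hα0.ne', Real.rpow_one, ENNReal.ofReal_toReal hJ]
  · rw [← Real.rpow_mul hJ0, ← ENNReal.ofReal_rpow_of_nonneg hJ0 (by positivity),
      ENNReal.ofReal_toReal hJ]
    congr 1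
    field_simp

/-! ### Convexity of circle means -/

/-- First derivative of `‖G‖ ^ 2` in the direction `e`, for `G` entire. -/
noncomputable def normSqDeriv (G : ℂ → ℂ) (e w : ℂ) : ℝ :=
  2 * (e * deriv G w * conj (G w)).re

/-- Second derivative of `‖G‖ ^ 2` in the direction `e`, for `G` entire. -/
noncomputable def normSqDerivTwo (G : ℂ → ℂ) (e w : ℂ) : ℝ :=
  2 * ‖e * deriv G w‖ ^ 2 + 2 * (e * (e * deriv (deriv G) w) * conj (G w)).re

/-- The smooth substitute for the weight `‖G‖ ^ 2 * ‖g‖ ^ (2 * c)`, to which it reduces at `ε = 0`.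
Positive `ε` removes the singularities at the zeros of `g`. -/
noncomputable def regWeight (G g : ℂ → ℂ) (ε c : ℝ) (w : ℂ) : ℝ := ‖G w‖ ^ 2 * (‖g w‖ ^ 2 + ε) ^ c

/-- First derivative of `regWeight` in the direction `e`, for `G` and `g` entire. -/
noncomputable def regWeightDeriv (G g : ℂ → ℂ) (ε c : ℝ) (e w : ℂ) : ℝ :=
  normSqDeriv G e w * (‖g w‖ ^ 2 + ε) ^ c
    + ‖G w‖ ^ 2 * (normSqDeriv g e w * c * (‖g w‖ ^ 2 + ε) ^ (c - 1))

/-- Second derivative of `regWeight` in the direction `e`, for `G` and `g` entire. -/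
noncomputable def regWeightDerivTwo (G g : ℂ → ℂ) (ε c : ℝ) (e w : ℂ) : ℝ :=
  normSqDerivTwo G e w * (‖g w‖ ^ 2 + ε) ^ c
    + normSqDeriv G e w * (normSqDeriv g e w * c * (‖g w‖ ^ 2 + ε) ^ (c - 1))
  + (normSqDeriv G e w * (normSqDeriv g e w * c * (‖g w‖ ^ 2 + ε) ^ (c - 1))
    + ‖G w‖ ^ 2 * (normSqDerivTwo g e w * c * (‖g w‖ ^ 2 + ε) ^ (c - 1)
      + normSqDeriv g e w * c * (normSqDeriv g e w * (c - 1) * (‖g w‖ ^ 2 + ε) ^ (c - 1 - 1))))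

/-- The Laplacian of `regWeight` for `G` and `g` entire, written as a sum of squares so that its
nonnegativity is visible. -/
noncomputable def regWeightLaplacian (G g : ℂ → ℂ) (ε c : ℝ) (w : ℂ) : ℝ :=
  4 * (‖g w‖ ^ 2 + ε) ^ (c - 2) *
    (‖deriv G w * (‖g w‖ ^ 2 + ε : ℝ) + c * G w * deriv g w * conj (g w)‖ ^ 2
      + c * ε * ‖G w‖ ^ 2 * ‖deriv g w‖ ^ 2)

section RegWeight

variable {G g : ℂ → ℂ} {ε c : ℝ}

lemma hasDerivAt_comp_line (hG : Differentiable ℂ G) (w e : ℂ) (s : ℝ) :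
    HasDerivAt (fun s : ℝ => G (w + s * e)) (e * deriv G (w + s * e)) s := by
  have hline : HasDerivAt (fun z : ℂ => w + z * e) e (s : ℂ) := by
    simpa using ((hasDerivAt_id (s : ℂ)).mul_const e).const_add w
  exact ((hG _).hasDerivAt.comp (s : ℂ) hline).comp_ofReal.congr_deriv (mul_comm _ _)

lemma hasDerivAt_normSq_line (hG : Differentiable ℂ G) (w e : ℂ) (s : ℝ) :
    HasDerivAt (fun s : ℝ => ‖G (w + s * e)‖ ^ 2) (normSqDeriv G e (w + s * e)) s := by
  refine (hasDerivAt_comp_line hG w e s).norm_sq.congr_deriv ?_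
  rw [normSqDeriv, Complex.inner]

lemma hasDerivAt_normSqDeriv_line (hG : Differentiable ℂ G) (w e : ℂ) (s : ℝ) :
    HasDerivAt (fun s : ℝ => normSqDeriv G e (w + s * e)) (normSqDerivTwo G e (w + s * e)) s := by
  have h := ((hasDerivAt_comp_line hG w e s).inner ℝ
    ((hasDerivAt_comp_line hG.deriv w e s).const_mul e)).const_mul 2
  simp only [Complex.inner] at h
  refine h.congr_deriv ?_
  rw [← Complex.inner (e * _) (e * _), real_inner_self_eq_norm_sq, normSqDerivTwo]
  ring

lemma hasDerivAt_normSq_add_rpow_line (hg : Differentiable ℂ g) (hε : 0 < ε) (c : ℝ) (w e : ℂ)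
    (s : ℝ) :
    HasDerivAt (fun s : ℝ => (‖g (w + s * e)‖ ^ 2 + ε) ^ c)
      (normSqDeriv g e (w + s * e) * c * (‖g (w + s * e)‖ ^ 2 + ε) ^ (c - 1)) s :=
  ((hasDerivAt_normSq_line hg w e s).add_const ε).rpow_const (Or.inl (by positivity))

lemma hasDerivAt_regWeight_line (hG : Differentiable ℂ G) (hg : Differentiable ℂ g) (hε : 0 < ε)
    (w e : ℂ) (s : ℝ) :
    HasDerivAt (fun s : ℝ => regWeight G g ε c (w + s * e))
      (regWeightDeriv G g ε c e (w + s * e)) s :=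
  (hasDerivAt_normSq_line hG w e s).mul (hasDerivAt_normSq_add_rpow_line hg hε c w e s)

lemma hasDerivAt_regWeightDeriv_line (hG : Differentiable ℂ G) (hg : Differentiable ℂ g)
    (hε : 0 < ε) (w e : ℂ) (s : ℝ) :
    HasDerivAt (fun s : ℝ => regWeightDeriv G g ε c e (w + s * e))
      (regWeightDerivTwo G g ε c e (w + s * e)) s :=
  ((hasDerivAt_normSqDeriv_line hG w e s).mul
    (hasDerivAt_normSq_add_rpow_line hg hε c w e s)).add
      ((hasDerivAt_normSq_line hG w e s).mul
        (((hasDerivAt_normSqDeriv_line hg w e s).mul_const c).mul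
          (hasDerivAt_normSq_add_rpow_line hg hε (c - 1) w e s)))

lemma regWeightDerivTwo_one_add_I (hε : 0 < ε) (w : ℂ) :
    regWeightDerivTwo G g ε c 1 w + regWeightDerivTwo G g ε c I w
      = regWeightLaplacian G g ε c w := by
  have hpos : 0 < ‖g w‖ ^ 2 + ε := by positivity
  have hpow_one : (‖g w‖ ^ 2 + ε) ^ (c - 1)
      = (‖g w‖ ^ 2 + ε) ^ (c - 2) * (‖g w‖ ^ 2 + ε) := by
    rw [← Real.rpow_add_one hpos.ne']; congr 1; ring
  have hpow : (‖g w‖ ^ 2 + ε) ^ c = (‖g w‖ ^ 2 + ε) ^ (c - 2) * (‖g w‖ ^ 2 + ε) ^ 2 := by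
    rw [← Real.rpow_two (_ + ε), ← Real.rpow_add hpos, sub_add_cancel]
  rw [regWeightDerivTwo, regWeightDerivTwo, regWeightLaplacian, sub_sub, one_add_one_eq_two,
    hpow_one, hpow]
  simp only [normSqDeriv, normSqDerivTwo, ← Complex.normSq_eq_norm_sq, Complex.normSq_apply,
    Complex.mul_re, Complex.mul_im, Complex.add_re, Complex.add_im, Complex.conj_re,
    Complex.conj_im, Complex.ofReal_re, Complex.ofReal_im, Complex.one_re, Complex.one_im,
    Complex.I_re, Complex.I_im]
  ring

lemma continuous_normSq_add_rpow (hg : Continuous g) (hε : 0 < ε) (c : ℝ) :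
    Continuous fun w => (‖g w‖ ^ 2 + ε) ^ c :=
  (by fun_prop : Continuous fun w => ‖g w‖ ^ 2 + ε).rpow_const fun _ => Or.inl (by positivity)

lemma continuous_regWeight (hG : Continuous G) (hg : Continuous g) (hε : 0 < ε) :
    Continuous (regWeight G g ε c) :=
  (hG.norm.pow 2).mul (continuous_normSq_add_rpow hg hε c)

lemma continuous_regWeightDeriv (hG : Differentiable ℂ G) (hg : Differentiable ℂ g) (hε : 0 < ε)
    (e : ℂ) : Continuous (regWeightDeriv G g ε c e) := by
  have := hG.continuous
  have := hG.deriv.continuous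
  have := hg.continuous
  have := hg.deriv.continuous
  have := continuous_normSq_add_rpow hg.continuous hε
  unfold regWeightDeriv normSqDeriv
  fun_prop

lemma continuous_regWeightDerivTwo (hG : Differentiable ℂ G) (hg : Differentiable ℂ g)
    (hε : 0 < ε) (e : ℂ) : Continuous (regWeightDerivTwo G g ε c e) := by
  have := hG.continuous
  have := hG.deriv.continuous
  have := hG.deriv.deriv.continuous
  have := hg.continuous
  have := hg.deriv.continuous
  have := hg.deriv.deriv.continuous
  have := continuous_normSq_add_rpow hg.continuous hε
  unfold regWeightDerivTwo normSqDeriv normSqDerivTwo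
  fun_prop

lemma regWeight_nonneg (hε : 0 ≤ ε) (w : ℂ) : 0 ≤ regWeight G g ε c w := by
  unfold regWeight; positivity

lemma regWeightLaplacian_nonneg (hε : 0 ≤ ε) (hc : 0 ≤ c) (w : ℂ) :
    0 ≤ regWeightLaplacian G g ε c w := by
  unfold regWeightLaplacian; positivity

end RegWeight

/-- The integral of `h` over the vertical segment `[x - π * I, x + π * I]`. For `h` of the form
`k ∘ exp` this is an integral over the circle of radius `exp x`. -/
noncomputable def verticalIntegral (h : ℂ → ℝ) (x : ℝ) : ℝ := ∫ θ in (-π)..π, h (x + θ * I)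

section VerticalIntegral

variable {h k : ℂ → ℝ}

lemma intervalIntegrable_vertical (hh : Continuous h) (x : ℝ) :
    IntervalIntegrable (fun θ : ℝ => h (x + θ * I)) volume (-π) π :=
  (by fun_prop : Continuous fun θ : ℝ => h (x + θ * I)).intervalIntegrable _ _

lemma verticalIntegral_mono (hh : Continuous h) (hk : Continuous k) {x : ℝ}
    (hle : ∀ θ : ℝ, h (x + θ * I) ≤ k (x + θ * I)) :
    verticalIntegral h x ≤ verticalIntegral k x :=
  intervalIntegral.integral_mono (by linarith [Real.pi_pos]) (intervalIntegrable_vertical hh x)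
    (intervalIntegrable_vertical hk x) hle

lemma verticalIntegral_nonneg (hle : ∀ w, 0 ≤ h w) (x : ℝ) : 0 ≤ verticalIntegral h x :=
  intervalIntegral.integral_nonneg (by linarith [Real.pi_pos]) fun _ _ => hle _

lemma hasDerivAt_verticalIntegral (hh : Continuous h) (hk : Continuous k)
    (hderiv : ∀ (w : ℂ) (s : ℝ), HasDerivAt (fun s : ℝ => h (w + s * 1)) (k (w + s * 1)) s)
    (x : ℝ) : HasDerivAt (verticalIntegral h) (verticalIntegral k x) x := by
  obtain ⟨B, hB⟩ := ((isCompact_Icc (a := x - 1) (b := x + 1)).prod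
    (isCompact_Icc (a := -π) (b := π))).exists_bound_of_continuousOn
    (by fun_prop : Continuous fun y : ℝ × ℝ => k (y.1 + y.2 * I)).continuousOn
  refine (intervalIntegral.hasDerivAt_integral_of_dominated_loc_of_deriv_le
    (F := fun (x θ : ℝ) => h (x + θ * I)) (F' := fun (x θ : ℝ) => k (x + θ * I))
    (bound := fun _ => B) (s := Icc (x - 1) (x + 1)) (Icc_mem_nhds (by linarith) (by linarith))
    (.of_forall fun y => (intervalIntegrable_vertical hh y).aestronglyMeasurable_restrict_uIoc)
    (intervalIntegrable_vertical hh x)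
    (intervalIntegrable_vertical hk x).aestronglyMeasurable_restrict_uIoc
    (.of_forall fun θ hθ y hy => hB (y, θ) ⟨hy, ?_⟩) intervalIntegrable_const
    (.of_forall fun θ _ y _ => ?_)).2
  · rw [uIoc_of_le (by linarith [Real.pi_pos])] at hθ
    exact Ioc_subset_Icc_self hθ
  · simpa only [mul_one, add_comm] using hderiv (θ * I) y

variable {G g : ℂ → ℂ} {ε c : ℝ}

lemma periodic_deriv {p : ℂ} (hG : Function.Periodic G p) : Function.Periodic (deriv G) p := by
  intro w
  rw [← deriv_comp_add_const, hG.funext]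

lemma verticalIntegral_regWeightDerivTwo_I (hG : Differentiable ℂ G) (hg : Differentiable ℂ g)
    (hε : 0 < ε) (hGp : Function.Periodic G (2 * π * I)) (hgp : Function.Periodic g (2 * π * I))
    (x : ℝ) : verticalIntegral (regWeightDerivTwo G g ε c I) x = 0 := by
  rw [verticalIntegral, intervalIntegral.integral_eq_sub_of_hasDerivAt
    (fun θ _ => hasDerivAt_regWeightDeriv_line hG hg hε x I θ)
    (intervalIntegrable_vertical (continuous_regWeightDerivTwo hG hg hε _) x)]
  have hshift : (x : ℂ) + (π : ℝ) * I = (x + ((-π : ℝ) : ℂ) * I) + 2 * π * I := by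
    push_cast; ring
  simp only [hshift, regWeightDeriv, normSqDeriv, hGp _, hgp _, periodic_deriv hGp _,
    periodic_deriv hgp _, sub_self]

lemma hasDerivAt_verticalIntegral_regWeight (hG : Differentiable ℂ G) (hg : Differentiable ℂ g)
    (hε : 0 < ε) (x : ℝ) :
    HasDerivAt (verticalIntegral (regWeight G g ε c))
      (verticalIntegral (regWeightDeriv G g ε c 1) x) x :=
  hasDerivAt_verticalIntegral (continuous_regWeight hG.continuous hg.continuous hε)
    (continuous_regWeightDeriv hG hg hε 1) (fun w s => hasDerivAt_regWeight_line hG hg hε w 1 s) x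

lemma hasDerivAt_verticalIntegral_regWeightDeriv (hG : Differentiable ℂ G)
    (hg : Differentiable ℂ g) (hε : 0 < ε) (hGp : Function.Periodic G (2 * π * I))
    (hgp : Function.Periodic g (2 * π * I)) (x : ℝ) :
    HasDerivAt (verticalIntegral (regWeightDeriv G g ε c 1))
      (verticalIntegral (regWeightLaplacian G g ε c) x) x := by
  have hsum : verticalIntegral (regWeightLaplacian G g ε c) x
      = verticalIntegral (regWeightDerivTwo G g ε c 1) x
        + verticalIntegral (regWeightDerivTwo G g ε c I) x := by
    simp only [verticalIntegral, ← regWeightDerivTwo_one_add_I hε]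
    exact intervalIntegral.integral_add
      (intervalIntegrable_vertical (continuous_regWeightDerivTwo hG hg hε 1) x)
      (intervalIntegrable_vertical (continuous_regWeightDerivTwo hG hg hε I) x)
  rw [hsum, verticalIntegral_regWeightDerivTwo_I hG hg hε hGp hgp, add_zero]
  exact hasDerivAt_verticalIntegral (continuous_regWeightDeriv hG hg hε 1)
    (continuous_regWeightDerivTwo hG hg hε 1)
    (fun w s => hasDerivAt_regWeightDeriv_line hG hg hε w 1 s) x

end VerticalIntegral

lemma nonneg_of_monotone_of_neg_le_deriv {U U' φ : ℝ → ℝ} (hφ : Monotone φ)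
    (hU : ∀ x, HasDerivAt U (U' x) x) (hle : ∀ x, -φ x ≤ U' x) (hU0 : ∀ x ≤ 0, 0 ≤ U x)
    (x : ℝ) : 0 ≤ φ x := by
  by_contra! hneg
  have hmono : MonotoneOn (fun y => U y + φ x * y) (Iic x) := by
    have hderiv (y : ℝ) : HasDerivAt (fun y => U y + φ x * y) (U' y + φ x * 1) y :=
      (hU y).add ((hasDerivAt_id y).const_mul (φ x))
    refine monotoneOn_of_hasDerivWithinAt_nonneg (convex_Iic x)
      (fun y _ => (hderiv y).continuousAt.continuousWithinAt)
      (fun y _ => (hderiv y).hasDerivWithinAt) fun y hy => ?_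
    rw [interior_Iic] at hy
    linarith [hle y, hφ (le_of_lt hy)]
  -- `U` would be negative to the left of `z`.
  set z := (U x + φ x * x + 1) / φ x with hz
  have hyx : min (min x 0) z ≤ x := (min_le_left _ _).trans (min_le_left _ _)
  have hy0 : 0 ≤ U (min (min x 0) z) := hU0 _ ((min_le_left _ _).trans (min_le_right _ _))
  have hyz := mul_le_mul_of_nonpos_left (min_le_right (min x 0) z) hneg.le
  rw [hz, mul_div_cancel₀ _ hneg.ne, ← hz] at hyz
  have hcontra : U (min (min x 0) z) + φ x * min (min x 0) z ≤ U x + φ x * x :=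
    hmono (mem_Iic.2 hyx) (mem_Iic.2 le_rfl) hyx
  linarith

/-- The integral of `regWeight a b ε c` over the circle of radius `exp x`, as a function of the
logarithmic radius `x`. -/
noncomputable def logCircleIntegral (a b : ℂ → ℂ) (ε c : ℝ) : ℝ → ℝ :=
  verticalIntegral (regWeight (a ∘ Complex.exp) (b ∘ Complex.exp) ε c)

/-- The derivative of `logCircleIntegral`, for `a` and `b` entire. -/
noncomputable def logCircleIntegralDeriv (a b : ℂ → ℂ) (ε c : ℝ) : ℝ → ℝ :=
  verticalIntegral (regWeightDeriv (a ∘ Complex.exp) (b ∘ Complex.exp) ε c 1)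

section LogCircleIntegral

variable {a b f : ℂ → ℂ} {ε c k : ℝ}

lemma norm_exp_add_mul_I (x θ : ℝ) : ‖Complex.exp (x + θ * I)‖ = Real.exp x := by
  simp [Complex.norm_exp]

lemma logCircleIntegral_nonneg (hε : 0 ≤ ε) (x : ℝ) : 0 ≤ logCircleIntegral a b ε c x :=
  verticalIntegral_nonneg (regWeight_nonneg hε) x

lemma hasDerivAt_logCircleIntegral (ha : Differentiable ℂ a) (hb : Differentiable ℂ b)
    (hε : 0 < ε) (x : ℝ) :
    HasDerivAt (logCircleIntegral a b ε c) (logCircleIntegralDeriv a b ε c x) x :=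
  hasDerivAt_verticalIntegral_regWeight (ha.comp Complex.differentiable_exp)
    (hb.comp Complex.differentiable_exp) hε x

lemma hasDerivAt_logCircleIntegralDeriv (ha : Differentiable ℂ a) (hb : Differentiable ℂ b)
    (hε : 0 < ε) (x : ℝ) :
    HasDerivAt (logCircleIntegralDeriv a b ε c)
      (verticalIntegral (regWeightLaplacian (a ∘ Complex.exp) (b ∘ Complex.exp) ε c) x) x :=
  hasDerivAt_verticalIntegral_regWeightDeriv (ha.comp Complex.differentiable_exp)
    (hb.comp Complex.differentiable_exp) hε (Complex.exp_periodic.comp a)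
    (Complex.exp_periodic.comp b) x

lemma exists_logCircleIntegral_le (ha : Continuous a) (hb : Continuous b) (hε : 0 < ε) :
    ∃ B, ∀ x ≤ 0, logCircleIntegral a b ε c x ≤ B := by
  obtain ⟨B, hB⟩ := (isCompact_closedBall (0 : ℂ) 1).exists_bound_of_continuousOn
    (continuous_regWeight (c := c) ha hb hε).continuousOn
  refine ⟨B * |π - -π|, fun x hx => (Real.le_norm_self _).trans
    (intervalIntegral.norm_integral_le_of_norm_le_const fun θ _ =>
      hB (Complex.exp (x + θ * I)) ?_)⟩
  rw [mem_closedBall_zero_iff, norm_exp_add_mul_I]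
  exact Real.exp_le_one_iff.2 hx

lemma monotone_logCircleIntegralDeriv (ha : Differentiable ℂ a) (hb : Differentiable ℂ b)
    (hε : 0 < ε) (hc : 0 ≤ c) : Monotone (logCircleIntegralDeriv a b ε c) :=
  monotone_of_hasDerivAt_nonneg (hasDerivAt_logCircleIntegralDeriv ha hb hε)
    fun x => verticalIntegral_nonneg (regWeightLaplacian_nonneg hε.le hc) x

lemma logCircleIntegralDeriv_nonneg (ha : Differentiable ℂ a) (hb : Differentiable ℂ b)
    (hε : 0 < ε) (hc : 0 ≤ c) (x : ℝ) : 0 ≤ logCircleIntegralDeriv a b ε c x := by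
  obtain ⟨B, hB⟩ := exists_logCircleIntegral_le (c := c) ha.continuous hb.continuous hε
  exact nonneg_of_monotone_of_neg_le_deriv (monotone_logCircleIntegralDeriv ha hb hε hc)
    (fun x => (hasDerivAt_logCircleIntegral ha hb hε x).const_sub B) (fun _ => le_rfl)
    (fun x hx => sub_nonneg.2 (hB x hx)) x

lemma regWeightLaplacian_one_exp (hf : Differentiable ℂ f) (hε : 0 < ε) (x θ : ℝ) :
    regWeightLaplacian ((1 : ℂ → ℂ) ∘ Complex.exp) (f ∘ Complex.exp) ε k (x + θ * I)
      = Real.exp (2 * x) *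
        (4 * k ^ 2 * regWeight (deriv f ∘ Complex.exp) (f ∘ Complex.exp) ε (k - 1) (x + θ * I)
        - 4 * k * (k - 1) *
          (ε * regWeight (deriv f ∘ Complex.exp) (f ∘ Complex.exp) ε (k - 2) (x + θ * I))) := by
  set w : ℂ := x + θ * I with hw
  have hderiv : deriv (f ∘ Complex.exp) w = deriv f (Complex.exp w) * Complex.exp w :=
    ((hf _).hasDerivAt.comp w (Complex.hasDerivAt_exp w)).deriv
  have hone : (1 : ℂ → ℂ) ∘ Complex.exp = fun _ => 1 := rfl
  have hpos : 0 < ‖f (Complex.exp w)‖ ^ 2 + ε := by positivity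
  have hpow : (‖f (Complex.exp w)‖ ^ 2 + ε) ^ (k - 1)
      = (‖f (Complex.exp w)‖ ^ 2 + ε) ^ (k - 2) * (‖f (Complex.exp w)‖ ^ 2 + ε) := by
    rw [← Real.rpow_add_one hpos.ne']; congr 1; ring
  simp only [regWeightLaplacian, regWeight, hone, hderiv, Function.comp_apply, Pi.one_apply, hpow,
    deriv_const, zero_mul, zero_add, mul_one, norm_mul, Complex.norm_real, RCLike.norm_conj,
    mul_pow, norm_one, one_pow]
  rw [hw, norm_exp_add_mul_I, Real.norm_eq_abs, sq_abs, two_mul x, Real.exp_add]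
  ring

lemma hasDerivAt_logCircleIntegralDeriv_one (hf : Differentiable ℂ f) (hε : 0 < ε) (x : ℝ) :
    HasDerivAt (logCircleIntegralDeriv 1 f ε k)
      (Real.exp (2 * x) * (4 * k ^ 2 * logCircleIntegral (deriv f) f ε (k - 1) x
        - 4 * k * (k - 1) * (ε * logCircleIntegral (deriv f) f ε (k - 2) x))) x := by
  refine (hasDerivAt_logCircleIntegralDeriv differentiable_one hf hε x).congr_deriv ?_
  have hint (c : ℝ) := intervalIntegrable_vertical (continuous_regWeight (c := c)
    (hf.deriv.continuous.comp Complex.continuous_exp) (hf.continuous.comp Complex.continuous_exp)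
    hε) x
  simp only [verticalIntegral, logCircleIntegral]
  simp_rw [← intervalIntegral.integral_const_mul]
  rw [← intervalIntegral.integral_sub ((hint _).const_mul _) (((hint _).const_mul _).const_mul _),
    ← intervalIntegral.integral_const_mul]
  exact intervalIntegral.integral_congr fun θ _ => regWeightLaplacian_one_exp hf hε x θ

lemma mul_regWeight_sub_one_le {δ : ℝ} (hε : 0 < ε) (hε1 : ε ≤ 1) (hδ : δ ≤ 1) (hδc : δ ≤ c)
    (w : ℂ) : ε * regWeight a b ε (c - 1) w ≤ ε ^ δ * regWeight a b 1 (c - δ) w := by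
  have hpos : 0 < ‖b w‖ ^ 2 + ε := by positivity
  have hsplit : (‖b w‖ ^ 2 + ε) ^ (c - 1)
      = (‖b w‖ ^ 2 + ε) ^ (δ - 1) * (‖b w‖ ^ 2 + ε) ^ (c - δ) := by
    rw [← Real.rpow_add hpos]; congr 1; ring
  calc ε * regWeight a b ε (c - 1) w
      ≤ ε * (‖a w‖ ^ 2 * (ε ^ (δ - 1) * (‖b w‖ ^ 2 + 1) ^ (c - δ))) := by
        rw [regWeight, hsplit]
        have hneg : (‖b w‖ ^ 2 + ε) ^ (δ - 1) ≤ ε ^ (δ - 1) :=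
          Real.rpow_le_rpow_of_nonpos hε (le_add_of_nonneg_left (sq_nonneg _)) (sub_nonpos.2 hδ)
        gcongr ε * (_ * ?_)
        exact mul_le_mul hneg (Real.rpow_le_rpow hpos.le (by linarith) (sub_nonneg.2 hδc))
          (by positivity) (by positivity)
    _ = ε ^ δ * regWeight a b 1 (c - δ) w := by
        rw [regWeight, ← sub_add_cancel δ 1, Real.rpow_add_one hε.ne', sub_add_cancel]
        ring

lemma mul_logCircleIntegral_sub_one_le {δ : ℝ} (ha : Continuous a) (hb : Continuous b)
    (hε : 0 < ε) (hε1 : ε ≤ 1) (hδ : δ ≤ 1) (hδc : δ ≤ c) (x : ℝ) :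
    ε * logCircleIntegral a b ε (c - 1) x ≤ ε ^ δ * logCircleIntegral a b 1 (c - δ) x := by
  have hcont {r : ℝ} (hr : 0 < r) (s : ℝ) := continuous_regWeight (c := s)
    (ha.comp Complex.continuous_exp) (hb.comp Complex.continuous_exp) hr
  simp only [logCircleIntegral, verticalIntegral, ← intervalIntegral.integral_const_mul]
  exact verticalIntegral_mono ((hcont hε _).const_mul ε) ((hcont one_pos _).const_mul _)
    fun θ => mul_regWeight_sub_one_le hε hε1 hδ hδc _

lemma hasDerivAt_exp_const_mul (r x : ℝ) :
    HasDerivAt (fun x : ℝ => Real.exp (r * x)) (r * Real.exp (r * x)) x :=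
  ((hasDerivAt_id x).const_mul r).exp.congr_deriv (by rw [mul_one, mul_comm, id])

lemma logCircleIntegralDeriv_one_le (hf : Differentiable ℂ f) (hε : 0 < ε) (hk : 1 ≤ k) (x : ℝ) :
    logCircleIntegralDeriv 1 f ε k x
      ≤ 2 * k ^ 2 * (Real.exp (2 * x) * logCircleIntegral (deriv f) f ε (k - 1) x) := by
  set φ : ℝ → ℝ := fun x =>
    2 * k ^ 2 * (Real.exp (2 * x) * logCircleIntegral (deriv f) f ε (k - 1) x)
      - logCircleIntegralDeriv 1 f ε k x
  have hφ_deriv (x : ℝ) :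
      HasDerivAt φ (2 * k ^ 2 * (Real.exp (2 * x) * logCircleIntegralDeriv (deriv f) f ε (k - 1) x)
        + Real.exp (2 * x) *
          (4 * k * (k - 1) * (ε * logCircleIntegral (deriv f) f ε (k - 2) x))) x :=
    ((((hasDerivAt_exp_const_mul 2 x).mul
      (hasDerivAt_logCircleIntegral hf.deriv hf hε x)).const_mul _).sub
        (hasDerivAt_logCircleIntegralDeriv_one hf hε x)).congr_deriv (by ring)
  have hφ_mono : Monotone φ := by
    refine monotone_of_hasDerivAt_nonneg hφ_deriv fun x => ?_
    have hD := logCircleIntegralDeriv_nonneg hf.deriv hf hε (sub_nonneg.2 hk) x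
    have hL := logCircleIntegral_nonneg (a := deriv f) (b := f) (c := k - 2) hε.le x
    have hcoef : 0 ≤ 4 * k * (k - 1) := mul_nonneg (by linarith) (by linarith)
    exact add_nonneg (by positivity)
      (mul_nonneg (Real.exp_pos _).le (mul_nonneg hcoef (mul_nonneg hε.le hL)))
  refine sub_nonneg.1 (nonneg_of_monotone_of_neg_le_deriv hφ_mono
    (hasDerivAt_logCircleIntegral (c := k) differentiable_one hf hε) (fun x => ?_)
    (fun x _ => logCircleIntegral_nonneg hε.le x) x)
  have hL := logCircleIntegral_nonneg (a := deriv f) (b := f) (c := k - 1) hε.le x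
  rw [neg_sub]
  exact sub_le_self _ (by positivity)

lemma monotoneOn_exp_mul_logCircleIntegralDeriv_add (hf : Differentiable ℂ f) (hε : 0 < ε)
    (hk : 1 ≤ k) {η : ℝ}
    (hη : ∀ x ≤ 0, 4 * k * (k - 1) * (ε * logCircleIntegral (deriv f) f ε (k - 2) x) ≤ η) :
    MonotoneOn (fun x => Real.exp (-2 * x) * logCircleIntegralDeriv 1 f ε k x + η * x)
      (Iic 0) := by
  have hderiv (x : ℝ) := ((hasDerivAt_exp_const_mul (-2) x).mul
    (hasDerivAt_logCircleIntegralDeriv_one (k := k) hf hε x)).add ((hasDerivAt_id x).const_mul η)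
  refine monotoneOn_of_hasDerivWithinAt_nonneg (convex_Iic 0)
    (fun x _ => (hderiv x).continuousAt.continuousWithinAt)
    (fun x _ => (hderiv x).hasDerivWithinAt) fun x hx => ?_
  rw [interior_Iic] at hx
  have hexp : Real.exp (-2 * x) * Real.exp (2 * x) = 1 := by rw [← Real.exp_add]; simp
  have hle := mul_le_mul_of_nonneg_left (logCircleIntegralDeriv_one_le hf hε hk x)
    (Real.exp_pos (-2 * x)).le
  rw [mul_left_comm, ← mul_assoc (Real.exp (-2 * x)), hexp, one_mul] at hle
  rw [← mul_assoc (Real.exp (-2 * x)) (Real.exp (2 * x)), hexp, one_mul]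
  linarith [hη x (le_of_lt hx)]

end LogCircleIntegral

/-- The integral of `(‖f‖ ^ 2 + ε) ^ k` over the circle of radius `√t`, for `0 < t`. -/
noncomputable def regCircleMean (f : ℂ → ℂ) (ε k t : ℝ) : ℝ :=
  logCircleIntegral 1 f ε k (Real.log t / 2)

/-- The mean of `‖f‖ ^ q` over the circle of radius `√t`, without the normalizing factor
`(2 * π)⁻¹`. -/
noncomputable def circleMean (f : ℂ → ℂ) (q t : ℝ) : ℝ :=
  ∫ θ in (-π)..π, ‖f (√t * Complex.exp (θ * I))‖ ^ q

section CircleMean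

variable {f : ℂ → ℂ} {ε k q : ℝ}

lemma hasDerivAt_regCircleMean_add (hf : Differentiable ℂ f) (hε : 0 < ε) (η : ℝ) {t : ℝ}
    (ht : 0 < t) :
    HasDerivAt (fun t => regCircleMean f ε k t + η / 4 * (t * Real.log t - t))
      ((Real.exp (-2 * (Real.log t / 2)) * logCircleIntegralDeriv 1 f ε k (Real.log t / 2)
        + η * (Real.log t / 2)) / 2) t := by
  have hlog := Real.hasDerivAt_log ht.ne'
  have hmean := (hasDerivAt_logCircleIntegral (c := k) differentiable_one hf hε
    (Real.log t / 2)).comp t (hlog.div_const 2)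
  have hcorr := (((hasDerivAt_id t).mul hlog).sub (hasDerivAt_id t)).const_mul (η / 4)
  refine (hmean.add hcorr).congr_deriv ?_
  have hexp : Real.exp (-2 * (Real.log t / 2)) = t⁻¹ := by
    rw [neg_mul, mul_div_cancel₀ _ two_ne_zero, Real.exp_neg, Real.exp_log ht]
  rw [hexp, id]
  field_simp
  ring

lemma convexOn_regCircleMean_add (hf : Differentiable ℂ f) (hε : 0 < ε) (hk : 1 ≤ k) {η : ℝ}
    (hη : ∀ x ≤ 0, 4 * k * (k - 1) * (ε * logCircleIntegral (deriv f) f ε (k - 2) x) ≤ η) :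
    ConvexOn ℝ (Ioo 0 1) fun t => regCircleMean f ε k t + η / 4 * (t * Real.log t - t) := by
  have hderiv {t : ℝ} (ht : t ∈ Ioo (0 : ℝ) 1) :=
    hasDerivAt_regCircleMean_add (k := k) hf hε η ht.1
  have hlog {t : ℝ} (ht : t ∈ Ioo (0 : ℝ) 1) : Real.log t / 2 ∈ Iic (0 : ℝ) :=
    div_nonpos_of_nonpos_of_nonneg (Real.log_nonpos ht.1.le ht.2.le) zero_le_two
  refine MonotoneOn.convexOn_of_deriv (convex_Ioo 0 1)
    (fun t ht => (hderiv ht).continuousAt.continuousWithinAt) ?_ ?_ <;> rw [interior_Ioo]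
  · exact fun t ht => (hderiv ht).differentiableAt.differentiableWithinAt
  · intro s hs t ht hst
    rw [(hderiv hs).deriv, (hderiv ht).deriv]
    refine div_le_div_of_nonneg_right (monotoneOn_exp_mul_logCircleIntegralDeriv_add hf hε hk hη
      (hlog hs) (hlog ht) ?_) zero_le_two
    exact div_le_div_of_nonneg_right (Real.log_le_log hs.1 hst) zero_le_two

lemma tendsto_regCircleMean (hf : Continuous f) (hk : 0 < k) {t : ℝ} (ht : 0 < t) :
    Tendsto (fun ε => regCircleMean f ε k t) (𝓝[>] (0 : ℝ)) (𝓝 (circleMean f (2 * k) t)) := by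
  have hcont : Continuous fun ε : ℝ => regCircleMean f ε k t := by
    unfold regCircleMean logCircleIntegral verticalIntegral regWeight
    refine intervalIntegral.continuous_parametric_intervalIntegral_of_continuous' ?_ _ _
    simp only [Function.comp_apply, Pi.one_apply, norm_one, one_pow, one_mul]
    exact Continuous.rpow_const (by fun_prop) fun _ => Or.inr hk.le
  have hzero : regCircleMean f 0 k t = circleMean f (2 * k) t := by
    refine intervalIntegral.integral_congr fun θ _ => ?_
    have hexp : Complex.exp ((Real.log t / 2 : ℝ) + θ * I) = √t * Complex.exp (θ * I) := by
      rw [Complex.exp_add, ← Complex.ofReal_exp, Real.exp_half, Real.exp_log ht]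
    simp only [regWeight, Function.comp_apply, hexp, Real.rpow_mul (norm_nonneg _), Real.rpow_two,
      Pi.one_apply, norm_one, one_pow, one_mul, add_zero]
  rw [← hzero]
  exact (hcont.tendsto 0).mono_left nhdsWithin_le_nhds

theorem circleMean_mono (hf : Differentiable ℂ f) (hq : 0 < q) {s t : ℝ} (hs : 0 < s)
    (hst : s ≤ t) : circleMean f q s ≤ circleMean f q t := by
  obtain ⟨k, hk, rfl⟩ : ∃ k, 0 < k ∧ q = 2 * k := ⟨q / 2, half_pos hq, by ring⟩
  refine le_of_tendsto_of_tendsto (tendsto_regCircleMean hf.continuous hk hs)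
    (tendsto_regCircleMean hf.continuous hk (hs.trans_le hst)) ?_
  filter_upwards [self_mem_nhdsWithin] with ε (hε : 0 < ε)
  exact monotone_of_hasDerivAt_nonneg (hasDerivAt_logCircleIntegral differentiable_one hf hε)
    (logCircleIntegralDeriv_nonneg differentiable_one hf hε hk.le)
    (div_le_div_of_nonneg_right (Real.log_le_log hs hst) zero_le_two)

lemma exists_tendsto_zero_mul_logCircleIntegral_le (hf : Differentiable ℂ f) (hk : 1 ≤ k) :
    ∃ η : ℝ → ℝ, Tendsto η (𝓝[>] 0) (𝓝 0) ∧ ∀ ε ∈ Ioc (0 : ℝ) 1, ∀ x ≤ 0,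
      4 * k * (k - 1) * (ε * logCircleIntegral (deriv f) f ε (k - 2) x) ≤ η ε := by
  rcases hk.eq_or_lt with rfl | hk1
  · exact ⟨fun _ => 0, tendsto_const_nhds, by simp⟩
  set δ := min 1 (k - 1)
  have hδ : 0 < δ := lt_min one_pos (sub_pos.2 hk1)
  obtain ⟨B, hB⟩ := exists_logCircleIntegral_le (c := k - 1 - δ) hf.deriv.continuous hf.continuous
    one_pos
  refine ⟨fun ε => 4 * k * (k - 1) * (ε ^ δ * B), ?_, fun ε hε x hx => ?_⟩
  · have hcont : Continuous fun ε : ℝ => 4 * k * (k - 1) * (ε ^ δ * B) := by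
      have := Real.continuous_rpow_const hδ.le
      fun_prop
    simpa [Real.zero_rpow hδ.ne'] using
      (hcont.tendsto 0).mono_left (nhdsWithin_le_nhds (s := Ioi 0))
  · have hle := mul_logCircleIntegral_sub_one_le hf.deriv.continuous hf.continuous hε.1 hε.2
      (min_le_left 1 (k - 1)) (min_le_right _ _) x
    rw [sub_sub, one_add_one_eq_two] at hle
    have hk0 : 0 ≤ 4 * k * (k - 1) := mul_nonneg (by linarith) (by linarith)
    exact mul_le_mul_of_nonneg_left (hle.trans
      (mul_le_mul_of_nonneg_left (hB x hx) (Real.rpow_nonneg hε.1.le _))) hk0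

theorem convexOn_circleMean (hf : Differentiable ℂ f) (hq : 2 ≤ q) :
    ConvexOn ℝ (Ioo 0 1) (circleMean f q) := by
  obtain ⟨k, hk, rfl⟩ : ∃ k, 1 ≤ k ∧ q = 2 * k := ⟨q / 2, by linarith, by ring⟩
  obtain ⟨η, hη_lim, hη⟩ := exists_tendsto_zero_mul_logCircleIntegral_le hf hk
  have hlim {t : ℝ} (ht : t ∈ Ioo (0 : ℝ) 1) : Tendsto
      (fun ε => regCircleMean f ε k t + η ε / 4 * (t * Real.log t - t)) (𝓝[>] 0)
      (𝓝 (circleMean f (2 * k) t)) := by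
    simpa using (tendsto_regCircleMean hf.continuous (one_pos.trans_le hk) ht.1).add
      ((hη_lim.div_const 4).mul_const (t * Real.log t - t))
  refine ⟨convex_Ioo 0 1, fun s hs t ht a b ha hb hab => ?_⟩
  refine le_of_tendsto_of_tendsto (hlim (convex_Ioo (0 : ℝ) 1 hs ht ha hb hab))
    (((hlim hs).const_smul a).add ((hlim ht).const_smul b)) ?_
  filter_upwards [Ioc_mem_nhdsGT zero_lt_one] with ε hε
  exact (convexOn_regCircleMean_add hf hε.1 hk (hη ε hε)).2 hs ht ha hb hab

end CircleMean

/-! ### Dilations -/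

lemma exists_antitoneOn_monotoneOn_sub_mul {S : Set ℝ} (hS : IsOpen S) {M : ℝ → ℝ}
    (hM : ConvexOn ℝ S M) {s : ℝ} (hs : s ∈ S) :
    ∃ g, AntitoneOn (fun x => M x - g * x) (S ∩ Iic s) ∧
      MonotoneOn (fun x => M x - g * x) (S ∩ Ici s) := by
  have hint {x : ℝ} (hx : x ∈ S) : x ∈ interior S := hS.interior_eq.symm ▸ hx
  refine ⟨derivWithin M (Ioi s) s, fun x hx y hy hxy => ?_, fun x hx y hy hxy => ?_⟩
  · rcases hxy.eq_or_lt with rfl | hlt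
    · rfl
    have hslope := ((hM.slope_le_leftDeriv_of_mem_interior hx.1 (hint hy.1) hlt).trans
      (hM.monotoneOn_leftDeriv (hint hy.1) (hint hs) hy.2)).trans
      (hM.leftDeriv_le_rightDeriv_of_mem_interior (hint hs))
    rw [slope_def_field, div_le_iff₀ (sub_pos.2 hlt)] at hslope
    simp only
    linarith
  · rcases hxy.eq_or_lt with rfl | hlt
    · rfl
    have hslope := (hM.monotoneOn_rightDeriv (hint hs) (hint hx.1) hx.2).trans
      (hM.rightDeriv_le_slope_of_mem_interior (hint hx.1) hy.1 hlt)
    rw [slope_def_field, le_div_iff₀ (sub_pos.2 hlt)] at hslope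
    simp only
    linarith

-- Subtracting from `M` a supporting line at `s` does not change the difference of the two
-- integrals and makes `M` monotone on either side of `s`.
lemma integral_comp_le_of_crossing {Ω : Type*} [MeasurableSpace Ω] {μ : Measure Ω} {S : Set ℝ}
    (hS : IsOpen S) {M : ℝ → ℝ} (hM : ConvexOn ℝ S M) {X Y : Ω → ℝ} {s : ℝ} (hs : s ∈ S)
    (hXS : ∀ᵐ ω ∂μ, X ω ∈ S) (hYS : ∀ᵐ ω ∂μ, Y ω ∈ S)
    (hcross : ∀ᵐ ω ∂μ, s ≤ X ω ∧ X ω ≤ Y ω ∨ Y ω ≤ X ω ∧ X ω ≤ s)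
    (hX : Integrable X μ) (hY : Integrable Y μ) (hXY : ∫ ω, X ω ∂μ = ∫ ω, Y ω ∂μ)
    (hMX : Integrable (fun ω => M (X ω)) μ) (hMY : Integrable (fun ω => M (Y ω)) μ) :
    ∫ ω, M (X ω) ∂μ ≤ ∫ ω, M (Y ω) ∂μ := by
  obtain ⟨g, hanti, hmono⟩ := exists_antitoneOn_monotoneOn_sub_mul hS hM hs
  have hle : ∫ ω, (M (X ω) - g * X ω) ∂μ ≤ ∫ ω, (M (Y ω) - g * Y ω) ∂μ := by
    refine integral_mono_ae (hMX.sub (hX.const_mul g)) (hMY.sub (hY.const_mul g)) ?_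
    filter_upwards [hXS, hYS, hcross] with ω hXω hYω hω
    rcases hω with ⟨hsX, hXY⟩ | ⟨hYX, hXs⟩
    · exact hmono ⟨hXω, hsX⟩ ⟨hYω, hsX.trans hXY⟩ hXY
    · exact hanti ⟨hYω, hYX.trans hXs⟩ ⟨hXω, hXs⟩ hYX
  rw [integral_sub hMX (hX.const_mul g), integral_sub hMY (hY.const_mul g), integral_const_mul,
    integral_const_mul, hXY] at hle
  exact (sub_le_sub_iff_right _).1 hle

lemma exists_crossing_one_sub_rpow {γ r : ℝ} (hr0 : 0 < r) (hr1 : r < 1) (hrγ : 1 < r * γ) :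
    ∃ y₀ ∈ Ioo (0 : ℝ) 1, 1 - y₀ = r * (1 - y₀ ^ γ) ∧
      (∀ y ∈ Icc 0 y₀, r * (1 - y ^ γ) ≤ 1 - y) ∧
      ∀ y ∈ Icc y₀ 1, 1 - y ≤ r * (1 - y ^ γ) := by
  have hγ : 1 < γ := by nlinarith
  set D : ℝ → ℝ := fun y => 1 - y - r * (1 - y ^ γ) with hD
  have hD_one : D 1 = 0 := by simp [hD]
  have hD_zero : 0 < D 0 := by simpa [hD, Real.zero_rpow (by linarith : γ ≠ 0)] using hr1
  have hD_conv : ConvexOn ℝ (Ici 0) D :=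
    (((convexOn_const 1 (convex_Ici 0)).sub (concaveOn_id (convex_Ici 0))).sub
      (((concaveOn_const 1 (convex_Ici 0)).sub (convexOn_rpow hγ.le)).smul hr0.le))
  have hD_cont : Continuous D := by
    have := Real.continuous_rpow_const (zero_le_one.trans hγ.le)
    fun_prop
  have hD_deriv : HasDerivAt D (-1 - r * -γ) 1 := by
    refine (((hasDerivAt_id 1).const_sub 1).sub (((Real.hasDerivAt_rpow_const (p := γ)
      (Or.inl one_ne_zero)).const_sub 1).const_mul r)).congr_deriv ?_
    rw [Real.one_rpow, mul_one]
  obtain ⟨y₁, hy₁_sign, hy₁⟩ : ∃ y₁, SignType.sign (D y₁) = SignType.sign (y₁ - 1) ∧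
      y₁ ∈ Ioo (0 : ℝ) 1 :=
    (((eventually_nhdsWithin_sign_eq_of_deriv_pos (by rw [hD_deriv.deriv]; linarith)
      hD_one).filter_mono nhdsWithin_le_nhds).and (Ioo_mem_nhdsLT one_pos)).exists
  have hD_y₁ : D y₁ < 0 := by
    rwa [sign_neg (sub_neg.2 hy₁.2), sign_eq_neg_one_iff] at hy₁_sign
  obtain ⟨y₀, hy₀, hD_y₀⟩ := intermediate_value_Ioo' hy₁.1.le hD_cont.continuousOn
    (show (0 : ℝ) ∈ Ioo (D y₁) (D 0) from ⟨hD_y₁, hD_zero⟩)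
  have hy₀_lt : y₀ < 1 := hy₀.2.trans hy₁.2
  refine ⟨y₀, ⟨hy₀.1, hy₀_lt⟩, sub_eq_zero.1 hD_y₀, fun y hy => ?_, fun y hy => ?_⟩
  · rcases hy.2.eq_or_lt with rfl | hlt
    · exact (sub_eq_zero.1 hD_y₀).ge
    have hsec := hD_conv.secant_mono_aux1 hy.1 (mem_Ici.2 zero_le_one) hlt hy₀_lt
    rw [hD_one, hD_y₀, mul_zero, mul_zero, add_zero] at hsec
    exact sub_nonneg.1 (nonneg_of_mul_nonneg_right hsec (sub_pos.2 hy₀_lt))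
  · rcases hy.1.eq_or_lt with rfl | hlt
    · exact (sub_eq_zero.1 hD_y₀).le
    rcases hy.2.eq_or_lt with rfl | hlt_one
    · exact (sub_eq_zero.1 hD_one).le
    have hsec := hD_conv.secant_mono_aux1 hy₀.1.le (mem_Ici.2 zero_le_one) hlt hlt_one
    rw [hD_one, hD_y₀, mul_zero, mul_zero, add_zero] at hsec
    exact sub_nonpos.1 (nonpos_of_mul_nonpos_right hsec (sub_pos.2 hy₀_lt))

/-- The value of `‖z‖ ^ 2` at which the `bergmanMeasure β`-mass of `{w | ‖z‖ < ‖w‖}` equals `v`.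
For `v` uniform in `(0, 1)` it is distributed as `‖z‖ ^ 2` under `bergmanMeasure β`. -/
noncomputable def bergmanRadiusSq (β v : ℝ) : ℝ := 1 - v ^ (1 / (β - 1))

section BergmanRadiusSq

variable {β β' : ℝ}

lemma continuous_bergmanRadiusSq (hβ : 1 < β) : Continuous (bergmanRadiusSq β) :=
  continuous_const.sub (Real.continuous_rpow_const (one_div_pos.2 (sub_pos.2 hβ)).le)

lemma bergmanRadiusSq_mem_Ioo (hβ : 1 < β) {v : ℝ} (hv : v ∈ Ioo (0 : ℝ) 1) :
    bergmanRadiusSq β v ∈ Ioo (0 : ℝ) 1 :=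
  ⟨sub_pos.2 (Real.rpow_lt_one hv.1.le hv.2 (one_div_pos.2 (sub_pos.2 hβ))),
    sub_lt_self _ (Real.rpow_pos_of_pos hv.1 _)⟩

lemma one_sub_bergmanRadiusSq_rpow (hβ : 1 < β) {v : ℝ} (hv : 0 ≤ v) :
    (1 - bergmanRadiusSq β v) ^ (β - 1) = v := by
  rw [bergmanRadiusSq, sub_sub_cancel, ← Real.rpow_mul hv, one_div_mul_cancel (sub_pos.2 hβ).ne',
    Real.rpow_one]

lemma bergmanRadiusSq_one_sub_rpow (hβ : 1 < β) {t : ℝ} (ht : t ≤ 1) :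
    bergmanRadiusSq β ((1 - t) ^ (β - 1)) = t := by
  rw [bergmanRadiusSq, ← Real.rpow_mul (sub_nonneg.2 ht), mul_one_div_cancel (sub_pos.2 hβ).ne',
    Real.rpow_one, sub_sub_cancel]

lemma setIntegral_bergmanRadiusSq (hβ : 1 < β) :
    ∫ v in Ioo (0 : ℝ) 1, bergmanRadiusSq β v = 1 / β := by
  have hβ1 : 0 < β - 1 := sub_pos.2 hβ
  have hexp : 0 < 1 / (β - 1) := one_div_pos.2 hβ1
  have hexp_add : 1 / (β - 1) + 1 = β / (β - 1) := by field_simp; ring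
  simp only [bergmanRadiusSq]
  rw [← integral_Ioc_eq_integral_Ioo, ← intervalIntegral.integral_of_le zero_le_one,
    intervalIntegral.integral_sub (by simp)
      (intervalIntegral.intervalIntegrable_rpow' (by linarith)),
    integral_rpow (Or.inl (by linarith)), Real.zero_rpow (by linarith), hexp_add,
    intervalIntegral.integral_const, Real.one_rpow, sub_zero, smul_eq_mul, mul_one]
  field_simp
  ring

lemma integrableOn_comp_mul_bergmanRadiusSq {M : ℝ → ℝ} (hM : Continuous M) (hβ : 1 < β) (c : ℝ) :
    IntegrableOn (fun v => M (c * bergmanRadiusSq β v)) (Ioo 0 1) :=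
  ((hM.comp (continuous_const.mul (continuous_bergmanRadiusSq hβ))).integrableOn_Icc
    (a := 0) (b := 1)).mono_set Ioo_subset_Icc_self

lemma exists_crossing_bergmanRadiusSq (hβ : 1 < β) (hlt : β < β') :
    ∃ s ∈ Ioo (0 : ℝ) 1, ∀ v ∈ Ioo (0 : ℝ) 1,
      s ≤ β / β' * bergmanRadiusSq β v ∧ β / β' * bergmanRadiusSq β v ≤ bergmanRadiusSq β' v ∨
        bergmanRadiusSq β' v ≤ β / β' * bergmanRadiusSq β v ∧
          β / β' * bergmanRadiusSq β v ≤ s := by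
  have hβ1 : 0 < β - 1 := sub_pos.2 hβ
  have hβ1' : 0 < β' - 1 := sub_pos.2 (hβ.trans hlt)
  have hr0 : 0 < β / β' := div_pos (by linarith) (by linarith)
  set γ := (β' - 1) / (β - 1) with hγ
  have hrγ : 1 < β / β' * γ := by
    rw [hγ, div_mul_div_comm, one_lt_div (mul_pos (by linarith) hβ1)]
    linarith
  obtain ⟨y₀, hy₀, heq, hlow, hhigh⟩ :=
    exists_crossing_one_sub_rpow hr0 ((div_lt_one (by linarith)).2 hlt) hrγ
  refine ⟨1 - y₀, ⟨sub_pos.2 hy₀.2, sub_lt_self _ hy₀.1⟩, fun v hv => ?_⟩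
  have hy : v ^ (1 / (β' - 1)) ∈ Ioo (0 : ℝ) 1 := ⟨Real.rpow_pos_of_pos hv.1 _,
    Real.rpow_lt_one hv.1.le hv.2 (one_div_pos.2 hβ1')⟩
  have hpow : v ^ (1 / (β - 1)) = (v ^ (1 / (β' - 1))) ^ γ := by
    rw [← Real.rpow_mul hv.1.le, hγ]
    congr 1
    field_simp
  have hγ0 : 0 ≤ γ := (div_pos hβ1' hβ1).le
  simp only [bergmanRadiusSq, hpow, heq]
  rcases le_total (v ^ (1 / (β' - 1))) y₀ with hle | hle
  · exact Or.inl ⟨mul_le_mul_of_nonneg_left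
      (sub_le_sub_left (Real.rpow_le_rpow hy.1.le hle hγ0) 1) hr0.le, hlow _ ⟨hy.1.le, hle⟩⟩
  · exact Or.inr ⟨hhigh _ ⟨hle, hy.2.le⟩, mul_le_mul_of_nonneg_left
      (sub_le_sub_left (Real.rpow_le_rpow hy₀.1.le hle hγ0) 1) hr0.le⟩

theorem setIntegral_comp_div_mul_bergmanRadiusSq_le {M : ℝ → ℝ} (hM : ConvexOn ℝ (Ioo 0 1) M)
    (hM_cont : Continuous M) (hβ : 1 < β) (hle : β ≤ β') :
    ∫ v in Ioo (0 : ℝ) 1, M (β / β' * bergmanRadiusSq β v)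
      ≤ ∫ v in Ioo (0 : ℝ) 1, M (bergmanRadiusSq β' v) := by
  rcases hle.eq_or_lt with rfl | hlt
  · rw [div_self (by linarith)]
    simp only [one_mul, le_refl]
  have hβ' : 1 < β' := hβ.trans hlt
  have hr0 : 0 < β / β' := div_pos (by linarith) (by linarith)
  have hr1 : β / β' < 1 := (div_lt_one (by linarith)).2 hlt
  have hint {N : ℝ → ℝ} (hN : Continuous N) :
      IntegrableOn (fun v => N (bergmanRadiusSq β' v)) (Ioo 0 1) := by
    simpa only [one_mul] using integrableOn_comp_mul_bergmanRadiusSq hN hβ' 1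
  obtain ⟨s, hs, hcross⟩ := exists_crossing_bergmanRadiusSq hβ hlt
  refine integral_comp_le_of_crossing isOpen_Ioo hM hs
    (ae_restrict_of_forall_mem measurableSet_Ioo fun v hv => ?_)
    (ae_restrict_of_forall_mem measurableSet_Ioo fun v hv => bergmanRadiusSq_mem_Ioo hβ' hv)
    (ae_restrict_of_forall_mem measurableSet_Ioo hcross)
    (integrableOn_comp_mul_bergmanRadiusSq continuous_id hβ _) (hint continuous_id) ?_
    (integrableOn_comp_mul_bergmanRadiusSq hM_cont hβ _) (hint hM_cont)
  · have hv' := bergmanRadiusSq_mem_Ioo hβ hv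
    exact ⟨mul_pos hr0 hv'.1, mul_lt_one_of_nonneg_of_lt_one_left hr0.le hr1 hv'.2.le⟩
  · rw [integral_const_mul, setIntegral_bergmanRadiusSq hβ, setIntegral_bergmanRadiusSq hβ']
    have : β ≠ 0 := by linarith
    field_simp

lemma setLIntegral_ball_eq_polar {Φ : ℂ → ℝ≥0∞} (hΦ : Measurable Φ) (R : ℝ) :
    ∫⁻ z in ball 0 R, Φ z = ∫⁻ ρ in Ioo 0 R, ENNReal.ofReal ρ *
      ∫⁻ θ in Ioo (-π) π, Φ (ρ * Complex.exp (θ * I)) := by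
  have hpolar : ∀ p ∈ Ioi (0 : ℝ) ×ˢ Ioo (-π) π,
      ENNReal.ofReal p.1 • (ball (0 : ℂ) R).indicator Φ (Complex.polarCoord.symm p)
        = (Iio R).indicator ENNReal.ofReal p.1 * Φ (p.1 * Complex.exp (p.2 * I)) := by
    rintro ⟨ρ, θ⟩ ⟨hρ : 0 < ρ, -⟩
    have hsymm : Complex.polarCoord.symm (ρ, θ) = ρ * Complex.exp (θ * I) := by
      rw [Complex.polarCoord_symm_apply, Complex.exp_mul_I, Complex.ofReal_cos, Complex.ofReal_sin]
    have hnorm : ‖(ρ : ℂ) * Complex.exp (θ * I)‖ = ρ := by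
      rw [norm_mul, Complex.norm_exp_ofReal_mul_I, mul_one, Complex.norm_of_nonneg hρ.le]
    simp only [hsymm, indicator, mem_ball_zero_iff, hnorm, mem_Iio, smul_eq_mul]
    split_ifs <;> simp only [mul_zero, zero_mul]
  have hmeas : Measurable ((Iio R).indicator ENNReal.ofReal) :=
    ENNReal.measurable_ofReal.indicator measurableSet_Iio
  rw [← lintegral_indicator measurableSet_ball, ← Complex.lintegral_comp_polarCoord_symm,
    polarCoord_target, setLIntegral_congr_fun (measurableSet_Ioi.prod measurableSet_Ioo) hpolar,
    Measure.volume_eq_prod, setLIntegral_prod _ (by fun_prop),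
    ← Ioi_inter_Iio (a := (0 : ℝ)) (b := R), inter_comm,
    ← setLIntegral_indicator measurableSet_Iio]
  refine lintegral_congr fun ρ => ?_
  dsimp only
  rw [lintegral_const_mul _ (by fun_prop)]
  simp only [indicator, ite_mul, zero_mul]

lemma setLIntegral_Ioo_comp_one_sub_sq_rpow (hβ : 1 < β) (H : ℝ → ℝ≥0∞) :
    ∫⁻ v in Ioo (0 : ℝ) 1, H v = ∫⁻ ρ in Ioo (0 : ℝ) 1,
      ENNReal.ofReal (2 * ρ * ((β - 1) * (1 - ρ ^ 2) ^ (β - 2))) * H ((1 - ρ ^ 2) ^ (β - 1)) := by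
  have hβ1 : 0 < β - 1 := sub_pos.2 hβ
  have hpos {ρ : ℝ} (hρ : ρ ∈ Ioo (0 : ℝ) 1) : 0 < 1 - ρ ^ 2 :=
    sub_pos.2 (pow_lt_one₀ hρ.1.le hρ.2 two_ne_zero)
  have hinj : InjOn (fun ρ : ℝ => (1 - ρ ^ 2) ^ (β - 1)) (Ioo 0 1) := fun x hx y hy hxy =>
    (pow_left_inj₀ hx.1.le hy.1.le two_ne_zero).1
      (sub_right_injective ((Real.rpow_left_inj (hpos hx).le (hpos hy).le hβ1.ne').1 hxy))
  have himage : (fun ρ : ℝ => (1 - ρ ^ 2) ^ (β - 1)) '' Ioo 0 1 = Ioo 0 1 := by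
    refine Subset.antisymm (image_subset_iff.2 fun ρ hρ => ⟨Real.rpow_pos_of_pos (hpos hρ) _,
      Real.rpow_lt_one (hpos hρ).le (sub_lt_self _ (pow_pos hρ.1 2)) hβ1⟩) fun v hv => ?_
    have hv' := bergmanRadiusSq_mem_Ioo hβ hv
    refine ⟨√(bergmanRadiusSq β v), ⟨Real.sqrt_pos.2 hv'.1, ?_⟩, ?_⟩
    · rw [Real.sqrt_lt' one_pos, one_pow]
      exact hv'.2
    · simp only [Real.sq_sqrt hv'.1.le, one_sub_bergmanRadiusSq_rpow hβ hv.1.le]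
  have hderiv {ρ : ℝ} (hρ : ρ ∈ Ioo (0 : ℝ) 1) :
      HasDerivWithinAt (fun ρ : ℝ => (1 - ρ ^ 2) ^ (β - 1))
        (-(2 * ρ * ((β - 1) * (1 - ρ ^ 2) ^ (β - 2)))) (Ioo 0 1) ρ := by
    refine ((((hasDerivAt_id ρ).pow 2).const_sub 1).rpow_const (p := β - 1)
      (Or.inl (hpos hρ).ne')).hasDerivWithinAt.congr_deriv ?_
    rw [sub_sub, one_add_one_eq_two]
    simp only [id, Pi.pow_apply, Nat.cast_ofNat, Nat.add_one_sub_one, pow_one, mul_one]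
    ring
  conv_lhs => rw [← himage]
  rw [lintegral_image_eq_lintegral_abs_deriv_mul measurableSet_Ioo (fun ρ => hderiv) hinj]
  refine setLIntegral_congr_fun measurableSet_Ioo fun ρ hρ => ?_
  rw [abs_neg, abs_of_pos (mul_pos (mul_pos two_pos hρ.1)
    (mul_pos hβ1 (Real.rpow_pos_of_pos (hpos hρ) _)))]

theorem lintegral_bergmanMeasure_eq_polar (hβ : 1 < β) {Φ : ℂ → ℝ≥0∞} (hΦ : Measurable Φ) :
    ∫⁻ z, Φ z ∂bergmanMeasure β = ∫⁻ v in Ioo (0 : ℝ) 1, ENNReal.ofReal (1 / (2 * π)) *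
      ∫⁻ θ in Ioo (-π) π, Φ (√(bergmanRadiusSq β v) * Complex.exp (θ * I)) := by
  rw [lintegral_bergmanMeasure, setLIntegral_ball_eq_polar (by fun_prop),
    setLIntegral_Ioo_comp_one_sub_sq_rpow hβ fun v => ENNReal.ofReal (1 / (2 * π)) *
      ∫⁻ θ in Ioo (-π) π, Φ (√(bergmanRadiusSq β v) * Complex.exp (θ * I))]
  refine setLIntegral_congr_fun measurableSet_Ioo fun ρ hρ => ?_
  have hρ2 : ρ ^ 2 ≤ 1 := pow_le_one₀ hρ.1.le hρ.2.le
  have hdensity : 0 ≤ (β - 1) * (1 - ρ ^ 2) ^ (β - 2) :=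
    mul_nonneg (sub_nonneg.2 hβ.le) (Real.rpow_nonneg (sub_nonneg.2 hρ2) _)
  have hnorm (θ : ℝ) : ‖(ρ : ℂ) * Complex.exp (θ * I)‖ = ρ := by
    rw [norm_mul, Complex.norm_exp_ofReal_mul_I, mul_one, Complex.norm_of_nonneg hρ.1.le]
  simp only [hnorm]
  rw [bergmanRadiusSq_one_sub_rpow hβ hρ2, Real.sqrt_sq hρ.1.le,
    lintegral_const_mul _ (by fun_prop), ← mul_assoc, ← mul_assoc,
    ← ENNReal.ofReal_mul hρ.1.le, ← ENNReal.ofReal_mul (mul_nonneg (by linarith [hρ.1]) hdensity)]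
  congr 2
  field_simp

theorem isProbabilityMeasure_bergmanMeasure (hβ : 1 < β) :
    IsProbabilityMeasure (bergmanMeasure β) := by
  have hnormalized : ENNReal.ofReal (1 / (2 * π)) * ENNReal.ofReal (π - -π) = 1 := by
    rw [← ENNReal.ofReal_mul (by positivity), ← ENNReal.ofReal_one]
    congr 1
    field_simp
    ring
  constructor
  rw [← lintegral_one, lintegral_bergmanMeasure_eq_polar hβ measurable_const]
  simp only [setLIntegral_one, Real.volume_Ioo, hnormalized, sub_zero, ENNReal.ofReal_one]

end BergmanRadiusSq

section Dilation

variable {f : ℂ → ℂ} {α β β' p q r : ℝ}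

lemma circleMean_nonneg (f : ℂ → ℂ) (q t : ℝ) : 0 ≤ circleMean f q t :=
  intervalIntegral.integral_nonneg (by linarith [Real.pi_pos]) fun _ _ => by positivity

lemma continuous_circleMean (hf : Continuous f) (hq : 0 ≤ q) : Continuous (circleMean f q) := by
  refine intervalIntegral.continuous_parametric_intervalIntegral_of_continuous' ?_ _ _
  exact (by fun_prop : Continuous fun x : ℝ × ℝ =>
    ‖f (√x.1 * Complex.exp (x.2 * I))‖).rpow_const fun _ => Or.inr hq

lemma setLIntegral_enorm_rpow_circle (hf : Continuous f) (hq : 0 ≤ q) (t : ℝ) :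
    ∫⁻ θ in Ioo (-π) π, ‖f (√t * Complex.exp (θ * I))‖ₑ ^ q
      = ENNReal.ofReal (circleMean f q t) := by
  have hcont : Continuous fun θ : ℝ => ‖f (√t * Complex.exp (θ * I))‖ ^ q :=
    (by fun_prop : Continuous fun θ : ℝ => ‖f (√t * Complex.exp (θ * I))‖).rpow_const
      fun _ => Or.inr hq
  rw [circleMean, intervalIntegral.integral_of_le (by linarith [Real.pi_pos]),
    integral_Ioc_eq_integral_Ioo, ofReal_integral_eq_lintegral_ofReal
      ((hcont.integrableOn_Icc (a := -π) (b := π)).mono_set Ioo_subset_Icc_self)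
      (.of_forall fun _ => by positivity)]
  simp only [enorm_rpow_eq_ofReal _ hq]

lemma lintegral_bergmanMeasure_eq_circleMean (hf : Continuous f) (hq : 0 ≤ q) (hβ : 1 < β)
    (hr : 0 ≤ r) :
    ∫⁻ z, ‖f (r * z)‖ₑ ^ q ∂bergmanMeasure β = ENNReal.ofReal (1 / (2 * π)) *
      ENNReal.ofReal (∫ v in Ioo (0 : ℝ) 1, circleMean f q (r ^ 2 * bergmanRadiusSq β v)) := by
  have hmeas : Measurable fun z : ℂ => ‖f (r * z)‖ₑ ^ q :=
    (by fun_prop : Continuous fun z : ℂ => f (r * z)).measurable.enorm.pow_const q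
  rw [lintegral_bergmanMeasure_eq_polar hβ hmeas, lintegral_const_mul' _ _ ENNReal.ofReal_ne_top,
    ofReal_integral_eq_lintegral_ofReal
      (integrableOn_comp_mul_bergmanRadiusSq (continuous_circleMean hf hq) hβ _)
      (.of_forall fun _ => circleMean_nonneg _ _ _)]
  congr 1
  refine lintegral_congr fun v => ?_
  rw [← setLIntegral_enorm_rpow_circle hf hq, Real.sqrt_mul (sq_nonneg r), Real.sqrt_sq hr]
  simp only [Complex.ofReal_mul, mul_assoc]

theorem lintegral_bergmanMeasure_dilation_le (hf : Differentiable ℂ f) (hq : 2 ≤ q) (hβ : 1 < β)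
    (hle : β ≤ β') (hr : 0 ≤ r) (hr2 : r ^ 2 = β / β') :
    ∫⁻ z, ‖f (r * z)‖ₑ ^ q ∂bergmanMeasure β ≤ ∫⁻ z, ‖f z‖ₑ ^ q ∂bergmanMeasure β' := by
  have hq0 : 0 ≤ q := by linarith
  have hone := lintegral_bergmanMeasure_eq_circleMean hf.continuous hq0 (hβ.trans_le hle)
    zero_le_one
  simp only [Complex.ofReal_one, one_mul, one_pow] at hone
  rw [lintegral_bergmanMeasure_eq_circleMean hf.continuous hq0 hβ hr, hone, hr2]
  refine mul_le_mul_right (ENNReal.ofReal_le_ofReal ?_) _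
  exact setIntegral_comp_div_mul_bergmanRadiusSq_le (convexOn_circleMean hf hq)
    (continuous_circleMean hf.continuous hq0) hβ hle

theorem lintegral_bergmanMeasure_hypercontractive (hf : Differentiable ℂ f) (hα : 1 < α)
    (hβ : 1 < β) (hp : 0 < p) (hpq : p ≤ q) (hq : 2 ≤ q) (hle : β * p ≤ α * q) (hr : 0 ≤ r)
    (hr2 : r ^ 2 = β * p / (α * q)) :
    ∫⁻ z, ‖f (r * z)‖ₑ ^ q ∂bergmanMeasure β
      ≤ (∫⁻ z, ‖f z‖ₑ ^ p ∂bergmanMeasure α) ^ (q / p) := by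
  refine (lintegral_bergmanMeasure_dilation_le hf hq hβ (β' := α * q / p)
    ((le_div_iff₀ hp).2 hle) hr ?_).trans (lintegral_bergmanMeasure_contractive hf hα hp hpq)
  rw [hr2]
  field_simp

end Dilation

/-! ### The polydisc -/

section Minkowski

variable {X Y : Type*} [MeasurableSpace X] [MeasurableSpace Y] {μ : Measure X} {ν : Measure Y}
  [SFinite ν] {F : X → Y → ℝ≥0∞}

lemma lintegral_mul_lintegral_le [SFinite μ] (hF : Measurable (Function.uncurry F)) {G : X → ℝ≥0∞}
    (hG : Measurable G) {s t : ℝ} (hst : s.HolderConjugate t) :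
    ∫⁻ x, G x * ∫⁻ y, F x y ∂ν ∂μ
      ≤ (∫⁻ x, G x ^ s ∂μ) ^ (1 / s) * ∫⁻ y, (∫⁻ x, F x y ^ t ∂μ) ^ (1 / t) ∂ν :=
  calc ∫⁻ x, G x * ∫⁻ y, F x y ∂ν ∂μ
    _ = ∫⁻ x, ∫⁻ y, G x * F x y ∂ν ∂μ :=
      lintegral_congr fun x => (lintegral_const_mul _ (by fun_prop)).symm
    _ = ∫⁻ y, ∫⁻ x, G x * F x y ∂μ ∂ν :=
      lintegral_lintegral_swap ((hG.comp measurable_fst).mul hF).aemeasurable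
    _ ≤ ∫⁻ y, (∫⁻ x, G x ^ s ∂μ) ^ (1 / s) * (∫⁻ x, F x y ^ t ∂μ) ^ (1 / t) ∂ν :=
      lintegral_mono fun y =>
        ENNReal.lintegral_mul_le_Lp_mul_Lq μ hst hG.aemeasurable (by fun_prop)
    _ = (∫⁻ x, G x ^ s ∂μ) ^ (1 / s) * ∫⁻ y, (∫⁻ x, F x y ^ t ∂μ) ^ (1 / t) ∂ν :=
      lintegral_const_mul _ (Measurable.pow_const (hF.pow_const t).lintegral_prod_left' _)

lemma le_rpow_of_le_rpow_mul {a b : ℝ≥0∞} (ha : a ≠ ∞) {s t : ℝ} (hst : s.HolderConjugate t)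
    (h : a ≤ a ^ (1 / s) * b) : a ≤ b ^ t := by
  rcases eq_or_ne a 0 with rfl | ha0
  · exact zero_le
  have hsplit : a ^ (1 / s) * a ^ (1 / t) = a := by
    rw [← ENNReal.rpow_add _ _ ha0 ha, hst.one_div_add_one_div, one_div_one, ENNReal.rpow_one]
  have hroot : a ^ (1 / t) ≤ b := by
    rwa [← ENNReal.mul_le_mul_iff_right (ENNReal.rpow_pos (pos_iff_ne_zero.2 ha0) ha).ne'
      (ENNReal.rpow_ne_top_of_nonneg hst.one_div_nonneg ha), hsplit]
  rwa [one_div, ENNReal.rpow_inv_le_iff hst.symm.pos] at hroot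

lemma lintegral_rpow_le_of_le_lintegral [SFinite μ] (hF : Measurable (Function.uncurry F))
    {K : X → ℝ≥0∞} (hK : Measurable K) (hKF : ∀ x, K x ≤ ∫⁻ y, F x y ∂ν) {s : ℝ} (hs : 1 < s)
    (hfin : ∫⁻ x, K x ^ s ∂μ ≠ ∞) :
    ∫⁻ x, K x ^ s ∂μ ≤ (∫⁻ y, (∫⁻ x, F x y ^ s ∂μ) ^ (1 / s) ∂ν) ^ s := by
  have hconj := (Real.HolderConjugate.conjExponent hs).symm
  have hpow (a : ℝ≥0∞) : (a ^ (s - 1)) ^ Real.conjExponent s = a ^ s := by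
    rw [← ENNReal.rpow_mul, hconj.symm.sub_one_mul_conj]
  have hHolder := lintegral_mul_lintegral_le (ν := ν) (μ := μ) hF (hK.pow_const (s - 1)) hconj
  simp only [hpow] at hHolder
  refine le_rpow_of_le_rpow_mul hfin hconj ((lintegral_mono fun x => ?_).trans hHolder)
  calc K x ^ s = K x ^ (s - 1) * K x := by
        nth_rw 1 [← sub_add_cancel s 1]
        rw [ENNReal.rpow_add_of_nonneg _ _ (sub_nonneg.2 hs.le) zero_le_one, ENNReal.rpow_one]
    _ ≤ K x ^ (s - 1) * ∫⁻ y, F x y ∂ν := mul_le_mul_right (hKF x) _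

-- Truncating the inner integral makes the left-hand side finite, as Hölder's argument requires.
theorem lintegral_rpow_lintegral_le [IsFiniteMeasure μ] (hF : Measurable (Function.uncurry F))
    {s : ℝ} (hs : 1 ≤ s) :
    ∫⁻ x, (∫⁻ y, F x y ∂ν) ^ s ∂μ ≤ (∫⁻ y, (∫⁻ x, F x y ^ s ∂μ) ^ (1 / s) ∂ν) ^ s := by
  rcases hs.eq_or_lt with rfl | hs
  · simp only [ENNReal.rpow_one, div_one, lintegral_lintegral_swap hF.aemeasurable, le_refl]
  have hs0 : 0 ≤ s := zero_le_one.trans hs.le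
  set H : X → ℝ≥0∞ := fun x => ∫⁻ y, F x y ∂ν
  have hH : Measurable H := hF.lintegral_prod_right'
  have hmin (N : ℕ) : Measurable fun x => min (H x) N := hH.min measurable_const
  have hfin (N : ℕ) : ∫⁻ x, min (H x) N ^ s ∂μ ≠ ∞ := by
    refine ((lintegral_mono fun x => ENNReal.rpow_le_rpow (min_le_right _ _) hs0).trans_lt ?_).ne
    rw [lintegral_const]
    exact ENNReal.mul_lt_top (ENNReal.rpow_lt_top_of_nonneg hs0 (ENNReal.natCast_ne_top N))
      (measure_lt_top μ _)
  refine le_of_tendsto' (lintegral_tendsto_of_tendsto_of_monotone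
    (fun N => ((hmin N).pow_const s).aemeasurable) (.of_forall fun x N N' hN => ?_)
    (.of_forall fun x => ?_)) fun N =>
    lintegral_rpow_le_of_le_lintegral hF (hmin N) (fun x => min_le_left _ _) hs (hfin N)
  · exact ENNReal.rpow_le_rpow (min_le_min_left _ (Nat.cast_le.2 hN)) hs0
  · have hlim := (tendsto_const_nhds (x := H x)).min ENNReal.tendsto_nat_nhds_top
    rw [min_eq_left le_top] at hlim
    exact (ENNReal.continuous_rpow_const.tendsto (H x)).comp hlim

end Minkowski

section BergmanMeasurePi

variable {α β p q r : ℝ} {n : ℕ}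

lemma isProbabilityMeasure_bergmanMeasurePi (hβ : 1 < β) (n : ℕ) :
    IsProbabilityMeasure (bergmanMeasurePi n β) := by
  have := isProbabilityMeasure_bergmanMeasure hβ
  rw [bergmanMeasurePi]
  infer_instance

lemma lintegral_bergmanMeasurePi_succ (hβ : 1 < β) {Φ : (Fin (n + 1) → ℂ) → ℝ≥0∞}
    (hΦ : Measurable Φ) :
    ∫⁻ z, Φ z ∂bergmanMeasurePi (n + 1) β
      = ∫⁻ a, ∫⁻ z, Φ (Fin.cons a z) ∂bergmanMeasurePi n β ∂bergmanMeasure β := by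
  have := isProbabilityMeasure_bergmanMeasure hβ
  have hcons := (measurePreserving_piFinSuccAbove (fun _ : Fin (n + 1) => bergmanMeasure β) 0).symm
  rw [bergmanMeasurePi, ← hcons.lintegral_comp hΦ, lintegral_prod _ (by fun_prop)]
  exact lintegral_congr fun a => lintegral_congr fun z => congrArg Φ (Fin.insertNth_zero' a z)

lemma lintegral_bergmanMeasurePi_succ_symm (hβ : 1 < β) {Φ : (Fin (n + 1) → ℂ) → ℝ≥0∞}
    (hΦ : Measurable Φ) :
    ∫⁻ z, Φ z ∂bergmanMeasurePi (n + 1) β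
      = ∫⁻ z, ∫⁻ a, Φ (Fin.cons a z) ∂bergmanMeasure β ∂bergmanMeasurePi n β := by
  have := isProbabilityMeasure_bergmanMeasure hβ
  have := isProbabilityMeasure_bergmanMeasurePi hβ n
  have hcons : Continuous fun x : ℂ × (Fin n → ℂ) => (Fin.cons x.1 x.2 : Fin (n + 1) → ℂ) := by
    fun_prop
  rw [lintegral_bergmanMeasurePi_succ hβ hΦ]
  exact lintegral_lintegral_swap (hΦ.comp hcons.measurable).aemeasurable

lemma lintegral_bergmanMeasurePi_zero_hypercontractive (hα : 1 < α) (hβ : 1 < β) (hp : p ≠ 0)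
    (q r : ℝ) (f : (Fin 0 → ℂ) → ℂ) :
    ∫⁻ z, ‖f ((r : ℂ) • z)‖ₑ ^ q ∂bergmanMeasurePi 0 β
      = (∫⁻ z, ‖f z‖ₑ ^ p ∂bergmanMeasurePi 0 α) ^ (q / p) := by
  have := isProbabilityMeasure_bergmanMeasurePi hα 0
  have := isProbabilityMeasure_bergmanMeasurePi hβ 0
  have hconst (z : Fin 0 → ℂ) : f z = f 0 := congrArg f (Subsingleton.elim z 0)
  simp only [hconst, lintegral_const, measure_univ, mul_one, ← ENNReal.rpow_mul,
    mul_div_cancel₀ _ hp]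

theorem lintegral_bergmanMeasurePi_hypercontractive (hα : 1 < α) (hβ : 1 < β) (hp : 0 < p)
    (hpq : p ≤ q) (hq : 2 ≤ q) (hle : β * p ≤ α * q) (hr : 0 ≤ r) (hr2 : r ^ 2 = β * p / (α * q))
    {f : (Fin n → ℂ) → ℂ} (hf : Differentiable ℂ f) :
    ∫⁻ z, ‖f ((r : ℂ) • z)‖ₑ ^ q ∂bergmanMeasurePi n β
      ≤ (∫⁻ z, ‖f z‖ₑ ^ p ∂bergmanMeasurePi n α) ^ (q / p) := by
  have := isProbabilityMeasure_bergmanMeasure hα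
  have (n : ℕ) := isProbabilityMeasure_bergmanMeasurePi hβ n
  have hqp : 1 ≤ q / p := (one_le_div hp).2 hpq
  induction n with
  | zero => exact (lintegral_bergmanMeasurePi_zero_hypercontractive hα hβ hp.ne' q r f).le
  | succ n ih =>
    have hfc := hf.continuous
    have hdilate : Continuous fun z => f ((r : ℂ) • z) := by fun_prop
    have hsmul (a : ℂ) (z : Fin n → ℂ) :
        (r : ℂ) • (Fin.cons a z : Fin (n + 1) → ℂ) = Fin.cons (r * a) ((r : ℂ) • z) :=
      Matrix.smul_cons _ _ _
    have hfirst (z : Fin n → ℂ) : ∫⁻ a, ‖f (Fin.cons (r * a) ((r : ℂ) • z))‖ₑ ^ q ∂bergmanMeasure β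
        ≤ (∫⁻ a, ‖f (Fin.cons a ((r : ℂ) • z))‖ₑ ^ p ∂bergmanMeasure α) ^ (q / p) :=
      lintegral_bergmanMeasure_hypercontractive (f := fun a => f (Fin.cons a ((r : ℂ) • z)))
        (by fun_prop) hα hβ hp hpq hq hle hr hr2
    have hrest (a : ℂ) : (∫⁻ z, (‖f (Fin.cons a ((r : ℂ) • z))‖ₑ ^ p) ^ (q / p)
        ∂bergmanMeasurePi n β) ^ (1 / (q / p))
        ≤ ∫⁻ z, ‖f (Fin.cons a z)‖ₑ ^ p ∂bergmanMeasurePi n α := by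
      simp only [← ENNReal.rpow_mul, mul_div_cancel₀ _ hp.ne']
      rw [one_div, ENNReal.rpow_inv_le_iff (one_pos.trans_le hqp)]
      exact ih (f := fun z => f (Fin.cons a z)) (by fun_prop)
    have hmeas : Measurable (Function.uncurry fun (z : Fin n → ℂ) a =>
        ‖f (Fin.cons a ((r : ℂ) • z))‖ₑ ^ p) :=
      (by fun_prop : Continuous fun x : (Fin n → ℂ) × ℂ =>
        f (Fin.cons x.2 ((r : ℂ) • x.1))).measurable.enorm.pow_const p
    rw [lintegral_bergmanMeasurePi_succ_symm hβ
        (hdilate.measurable.enorm.pow_const q),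
      lintegral_bergmanMeasurePi_succ hα (hfc.measurable.enorm.pow_const p)]
    simp only [hsmul]
    exact (lintegral_mono hfirst).trans ((lintegral_rpow_lintegral_le hmeas hqp).trans
      (ENNReal.rpow_le_rpow (lintegral_mono hrest) (zero_le_one.trans hqp)))

end BergmanMeasurePi

/-! ### Polynomials -/

section Rotation

variable {β q r : ℝ} {n : ℕ}

lemma measurePreserving_circle_mul_bergmanMeasure (β : ℝ) (c : Circle) :
    MeasurePreserving (fun z : ℂ => c * z) (bergmanMeasure β) (bergmanMeasure β) := by
  have hmul : Measurable fun z : ℂ => c * z := by fun_prop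
  refine ⟨hmul, Measure.ext_of_lintegral _ fun g hg => ?_⟩
  rw [lintegral_map hg hmul, lintegral_bergmanMeasure, lintegral_bergmanMeasure,
    ← lintegral_indicator measurableSet_ball, ← lintegral_indicator measurableSet_ball]
  refine (lintegral_congr fun z => ?_).trans ((rotation c).measurePreserving.lintegral_comp
    (Measurable.indicator (by fun_prop) measurableSet_ball))
  simp only [indicator, rotation_apply, mem_ball_zero_iff, norm_mul, Circle.norm_coe, one_mul]

lemma lintegral_bergmanMeasurePi_circle_smul (hβ : 1 < β) {Φ : (Fin n → ℂ) → ℝ≥0∞}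
    (hΦ : Measurable Φ) (c : Circle) :
    ∫⁻ z, Φ ((c : ℂ) • z) ∂bergmanMeasurePi n β = ∫⁻ z, Φ z ∂bergmanMeasurePi n β := by
  have := isProbabilityMeasure_bergmanMeasure hβ
  exact (measurePreserving_pi (fun _ : Fin n => bergmanMeasure β) (fun _ => bergmanMeasure β)
    fun _ => measurePreserving_circle_mul_bergmanMeasure β c).lintegral_comp hΦ

lemma lintegral_circleMean_bergmanMeasurePi (hβ : 1 < β) {f : (Fin n → ℂ) → ℂ}
    (hf : Continuous f) (hq : 0 ≤ q) (hr : 0 ≤ r) :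
    ∫⁻ z, ENNReal.ofReal (circleMean (fun w => f (w • z)) q (r ^ 2)) ∂bergmanMeasurePi n β
      = ENNReal.ofReal (2 * π) * ∫⁻ z, ‖f ((r : ℂ) • z)‖ₑ ^ q ∂bergmanMeasurePi n β := by
  have := isProbabilityMeasure_bergmanMeasurePi hβ n
  have hdilate : Continuous fun z => f ((r : ℂ) • z) := by fun_prop
  have hcircle (z : Fin n → ℂ) : ENNReal.ofReal (circleMean (fun w => f (w • z)) q (r ^ 2))
      = ∫⁻ θ in Ioo (-π) π, ‖f ((r : ℂ) • (Circle.exp θ : ℂ) • z)‖ₑ ^ q := by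
    rw [← setLIntegral_enorm_rpow_circle (by fun_prop) hq, Real.sqrt_sq hr]
    simp only [smul_smul, Circle.coe_exp]
  have hjoint : Continuous fun x : (Fin n → ℂ) × ℝ => f ((r : ℂ) • (Circle.exp x.2 : ℂ) • x.1) := by
    fun_prop
  simp only [hcircle]
  rw [lintegral_lintegral_swap (hjoint.measurable.enorm.pow_const q).aemeasurable]
  simp only [lintegral_bergmanMeasurePi_circle_smul hβ (hdilate.measurable.enorm.pow_const q),
    lintegral_const, Measure.restrict_apply_univ, Real.volume_Ioo, sub_neg_eq_add, ← two_mul,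
    mul_comm]

end Rotation

section Polynomial

variable {β q r : ℝ} {n : ℕ}

lemma norm_rpow_mul_norm_eval_reflect {g : Polynomial ℂ} {m : ℕ} (hg : g.natDegree ≤ m) (q : ℝ)
    {w : ℂ} (hw : w ≠ 0) :
    ‖w‖ ^ (m * q) * ‖(g.reflect m).eval w⁻¹‖ ^ q = ‖g.eval w‖ ^ q := by
  let := invertibleOfNonzero hw
  have hreflect := Polynomial.eval₂_reflect_mul_pow (RingHom.id ℂ) w m g hg
  rw [invOf_eq_inv, ← Polynomial.eval, ← Polynomial.eval] at hreflect
  rw [← hreflect, norm_mul, norm_pow, mul_comm, Real.mul_rpow (norm_nonneg _) (by positivity),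
    Real.rpow_mul (norm_nonneg _), Real.rpow_natCast]

lemma circleMean_reflect {g : Polynomial ℂ} {m : ℕ} (hg : g.natDegree ≤ m) (q : ℝ) (hr : 0 < r) :
    r ^ (m * q) * circleMean (g.reflect m).eval q (r ^ 2)⁻¹ = circleMean g.eval q (r ^ 2) := by
  have hneg := intervalIntegral.integral_comp_neg (a := -π) (b := π)
    fun θ : ℝ => ‖g.eval (r * Complex.exp (θ * I))‖ ^ q
  rw [neg_neg] at hneg
  rw [circleMean, circleMean, Real.sqrt_sq hr.le, Real.sqrt_inv, Real.sqrt_sq hr.le, ← hneg,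
    ← intervalIntegral.integral_const_mul]
  refine intervalIntegral.integral_congr fun θ _ => ?_
  have hnorm : ‖(r : ℂ) * Complex.exp ((-θ : ℝ) * I)‖ = r := by
    rw [norm_mul, Complex.norm_exp_ofReal_mul_I, mul_one, Complex.norm_of_nonneg hr.le]
  have hinv : ((r : ℂ) * Complex.exp ((-θ : ℝ) * I))⁻¹ = (r⁻¹ : ℝ) * Complex.exp (θ * I) := by
    rw [mul_inv, ← Complex.exp_neg, Complex.ofReal_neg, neg_mul, neg_neg, Complex.ofReal_inv]
  have hreflect := norm_rpow_mul_norm_eval_reflect hg q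
    (norm_ne_zero_iff.1 (hnorm.trans_ne hr.ne'))
  rwa [hnorm, hinv] at hreflect

lemma circleMean_polynomial_dilation_ge {g : Polynomial ℂ} {m : ℕ} (hg : g.natDegree ≤ m)
    (hq : 0 < q) (hr : 0 < r) (hr1 : r ≤ 1) :
    r ^ (m * q) * circleMean g.eval q 1 ≤ circleMean g.eval q (r ^ 2) := by
  have hone := circleMean_reflect hg q one_pos
  rw [Real.one_rpow, one_mul, one_pow, inv_one] at hone
  rw [← hone, ← circleMean_reflect hg q hr]
  exact mul_le_mul_of_nonneg_left (circleMean_mono (g.reflect m).differentiable hq one_pos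
    ((one_le_inv₀ (pow_pos hr 2)).2 (pow_le_one₀ hr.le hr1))) (Real.rpow_nonneg hr.le _)

lemma exists_polynomial_eval_smul (P : MvPolynomial (Fin n) ℂ) (z : Fin n → ℂ) :
    ∃ g : Polynomial ℂ, g.natDegree ≤ P.totalDegree ∧
      ∀ w, g.eval w = MvPolynomial.eval (w • z) P := by
  refine ⟨MvPolynomial.aeval (fun i => Polynomial.C (z i) * Polynomial.X) P, ?_, fun w => ?_⟩
  · simpa only [mul_one] using MvPolynomial.aeval_natDegree_le P le_rfl _
      fun i => (Polynomial.natDegree_C_mul_le _ _).trans Polynomial.natDegree_X_le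
  · have hline : (fun i => Polynomial.aeval w (Polynomial.C (z i) * Polynomial.X)) = w • z := by
      ext i
      rw [map_mul, Polynomial.aeval_C, Polynomial.aeval_X, mul_comm]
      rfl
    rw [← Polynomial.coe_aeval_eq_eval, MvPolynomial.comp_aeval_apply, hline,
      MvPolynomial.aeval_eq_eval]

theorem lintegral_bergmanMeasurePi_eval_smul_ge (hβ : 1 < β) (P : MvPolynomial (Fin n) ℂ)
    (hq : 0 < q) (hr : 0 < r) (hr1 : r ≤ 1) :
    ENNReal.ofReal (r ^ (P.totalDegree * q)) *
        ∫⁻ z, ‖MvPolynomial.eval z P‖ₑ ^ q ∂bergmanMeasurePi n β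
      ≤ ∫⁻ z, ‖MvPolynomial.eval ((r : ℂ) • z) P‖ₑ ^ q ∂bergmanMeasurePi n β := by
  have hP : Continuous fun z => MvPolynomial.eval z P := P.continuous_eval
  have hone := lintegral_circleMean_bergmanMeasurePi hβ hP hq.le zero_le_one
  simp only [Complex.ofReal_one, one_smul, one_pow] at hone
  refine (ENNReal.mul_le_mul_iff_right (ENNReal.ofReal_pos.2 Real.two_pi_pos).ne'
    ENNReal.ofReal_ne_top).1 ?_
  rw [mul_left_comm, ← hone, ← lintegral_circleMean_bergmanMeasurePi hβ hP hq.le hr.le,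
    ← lintegral_const_mul' _ _ ENNReal.ofReal_ne_top]
  refine lintegral_mono fun z => ?_
  obtain ⟨g, hg, hgz⟩ := exists_polynomial_eval_smul P z
  rw [← ENNReal.ofReal_mul (Real.rpow_nonneg hr.le _), ← funext hgz]
  exact ENNReal.ofReal_le_ofReal (circleMean_polynomial_dilation_ge hg hq hr hr1)

end Polynomial

section Integrability

variable {β q : ℝ} {n : ℕ}

lemma ae_norm_le_one_bergmanMeasure (β : ℝ) : ∀ᵐ z ∂bergmanMeasure β, ‖z‖ ≤ 1 := by
  refine (withDensity_absolutelyContinuous _ _).ae_le ?_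
  filter_upwards [ae_restrict_mem measurableSet_ball] with z hz
  exact (mem_ball_zero_iff.1 hz).le

lemma ae_norm_le_one_bergmanMeasurePi (hβ : 1 < β) (n : ℕ) :
    ∀ᵐ z ∂bergmanMeasurePi n β, ‖z‖ ≤ 1 := by
  have := isProbabilityMeasure_bergmanMeasure hβ
  simp only [pi_norm_le_iff_of_nonneg zero_le_one]
  exact ae_all_iff.2 fun i => (Measure.tendsto_eval_ae_ae (μ := fun _ : Fin n => bergmanMeasure β)
    (i := i)).eventually (ae_norm_le_one_bergmanMeasure β)

lemma integrable_norm_rpow_bergmanMeasurePi (hβ : 1 < β) {f : (Fin n → ℂ) → ℂ} (hf : Continuous f)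
    (hq : 0 ≤ q) : Integrable (fun z => ‖f z‖ ^ q) (bergmanMeasurePi n β) := by
  have := isProbabilityMeasure_bergmanMeasurePi hβ n
  have hcont : Continuous fun z => ‖f z‖ ^ q := hf.norm.rpow_const fun _ => Or.inr hq
  obtain ⟨C, hC⟩ := (isCompact_closedBall (0 : Fin n → ℂ) 1).exists_bound_of_continuousOn
    hcont.continuousOn
  refine .of_bound hcont.aestronglyMeasurable C ?_
  filter_upwards [ae_norm_le_one_bergmanMeasurePi hβ n] with z hz
  exact hC z (mem_closedBall_zero_iff.2 hz)

lemma ofReal_integral_norm_rpow_bergmanMeasurePi (hβ : 1 < β) {f : (Fin n → ℂ) → ℂ}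
    (hf : Continuous f) (hq : 0 ≤ q) :
    ENNReal.ofReal (∫ z, ‖f z‖ ^ q ∂bergmanMeasurePi n β)
      = ∫⁻ z, ‖f z‖ₑ ^ q ∂bergmanMeasurePi n β := by
  rw [ofReal_integral_eq_lintegral_ofReal (integrable_norm_rpow_bergmanMeasurePi hβ hf hq)
    (.of_forall fun _ => Real.rpow_nonneg (norm_nonneg _) _)]
  simp only [enorm_rpow_eq_ofReal _ hq]

end Integrability

section Nikolskii

variable {α β p q : ℝ} {n : ℕ}

lemma differentiable_eval_mvPolynomial (P : MvPolynomial (Fin n) ℂ) :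
    Differentiable ℂ fun z => MvPolynomial.eval z P :=
  fun z => (AnalyticOnNhd.eval_mvPolynomial P z (mem_univ z)).differentiableAt

theorem rpow_mul_integral_eval_le (hα : 1 < α) (hβ : 1 < β) (hp : 0 < p) (hpq : p ≤ q)
    (hq : 2 ≤ q) (hle : β * p ≤ α * q) (P : MvPolynomial (Fin n) ℂ) :
    √(β * p / (α * q)) ^ (P.totalDegree * q) *
        ∫ z, ‖MvPolynomial.eval z P‖ ^ q ∂bergmanMeasurePi n β
      ≤ (∫ z, ‖MvPolynomial.eval z P‖ ^ p ∂bergmanMeasurePi n α) ^ (q / p) := by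
  have hq0 : 0 < q := hp.trans_le hpq
  have hratio : 0 < β * p / (α * q) := by positivity
  have hP := differentiable_eval_mvPolynomial P
  have hnonneg : 0 ≤ ∫ z, ‖MvPolynomial.eval z P‖ ^ p ∂bergmanMeasurePi n α :=
    integral_nonneg fun _ => Real.rpow_nonneg (norm_nonneg _) _
  have hlintegral := (lintegral_bergmanMeasurePi_eval_smul_ge hβ P hq0 (Real.sqrt_pos.2 hratio)
    (Real.sqrt_le_one.2 ((div_le_one (by positivity)).2 hle))).trans
    (lintegral_bergmanMeasurePi_hypercontractive hα hβ hp hpq hq hle (Real.sqrt_nonneg _)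
      (Real.sq_sqrt hratio.le) hP)
  rwa [← ofReal_integral_norm_rpow_bergmanMeasurePi hβ hP.continuous hq0.le,
    ← ofReal_integral_norm_rpow_bergmanMeasurePi hα hP.continuous hp.le,
    ← ENNReal.ofReal_mul (by positivity), ENNReal.ofReal_rpow_of_nonneg hnonneg (by positivity),
    ENNReal.ofReal_le_ofReal_iff (by positivity)] at hlintegral

lemma rpow_one_div_le_of_rpow_mul_le {a b r : ℝ} {m : ℕ} (ha : 0 ≤ a) (hb : 0 ≤ b) (hr : 0 < r)
    (hq : 0 < q) (h : r ^ (m * q) * a ≤ b ^ (q / p)) :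
    a ^ (1 / q) ≤ r⁻¹ ^ m * b ^ (1 / p) := by
  have hroot := Real.rpow_le_rpow (by positivity) h (one_div_pos.2 hq).le
  rw [Real.mul_rpow (by positivity) ha, ← Real.rpow_mul hr.le, ← Real.rpow_mul hb, mul_assoc,
    mul_one_div_cancel hq.ne', mul_one, Real.rpow_natCast, div_mul_div_cancel₀' hq.ne'] at hroot
  rwa [inv_pow, le_inv_mul_iff₀ (pow_pos hr m)]

end Nikolskii

end

/-- Theorem 1.3 (Nikol'skiĭ-type inequality for weighted Bergman spaces): for
`1 < α, β < ∞`, `0 < p ≤ q < ∞`, `q ≥ 2` and `βp ≤ αq`, every complex polynomial `P`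
in `n` variables of degree `m` satisfies
`‖P‖_{A_β^q(𝔻ⁿ)} ≤ (√(αq/(βp)))^m ‖P‖_{A_α^p(𝔻ⁿ)}`. -/
theorem nikolskii_bergman
    (α β p q : ℝ) (hα : 1 < α) (hβ : 1 < β) (hp : 0 < p) (hpq : p ≤ q)
    (hq2 : 2 ≤ q) (hβpαq : β * p ≤ α * q) :
    ∀ m n : ℕ, 0 < m → 0 < n → ∀ P : MvPolynomial (Fin n) ℂ, P.totalDegree = m →
      (∫ z, ‖MvPolynomial.eval z P‖ ^ q ∂(bergmanMeasurePi n β)) ^ (1 / q) ≤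
        Real.sqrt (α * q / (β * p)) ^ m *
          (∫ z, ‖MvPolynomial.eval z P‖ ^ p ∂(bergmanMeasurePi n α)) ^ (1 / p) := by
  rintro m n - - P rfl
  have hq : 0 < q := hp.trans_le hpq
  have hratio : 0 < β * p / (α * q) := by positivity
  rw [← inv_div (β * p), Real.sqrt_inv]
  exact rpow_one_div_le_of_rpow_mul_le (integral_nonneg fun _ => by positivity)
    (integral_nonneg fun _ => by positivity) (Real.sqrt_pos.2 hratio) hq
    (rpow_mul_integral_eval_le hα hβ hp hpq hq2 hβpαq P)
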